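/- arXiv:1910.06388 — 2 statements merged into one kernel-verified Lean document; each statement's English description precedes it below -/
import Mathlib

section
/- Let N(X) denote the number of fundamental discriminants D with |D| ≤ X, and for real Y set μ = ∑_{p ≤ Y} 1/(p+1) (sum over primes). For all ε > 0 and δ > 0 there exists a constant C > 0 such that for all X ≥ 3 and all real Y with 3 ≤ Y ≤ X^{1/2 − δ}: | (1/N(X)) · ∑_{D fundamental, |D| ≤ X} (ω_Y(D) − μ)² − ∑_{p ≤ Y} (1/(p+1))·(1 − 1/(p+1)) | ≤ C · Y · X^{−1/2 + ε}. -/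
open Filter Topology NumberField

noncomputable section

/-- A fundamental discriminant: an integer `D ≠ 1` that is either squarefree and `≡ 1 (mod 4)`,
or `4m` with `m` squarefree and `m ≡ 2, 3 (mod 4)`. -/
def IsFundDiscr (D : ℤ) : Prop :=
  D ≠ 1 ∧ ((Squarefree D ∧ D % 4 = 1) ∨
    ∃ m : ℤ, D = 4 * m ∧ Squarefree m ∧ (m % 4 = 2 ∨ m % 4 = 3))

/-- The number of fundamental discriminants `D` with `|D| ≤ X` satisfying `P`. -/
def fdCount (P : ℤ → Prop) (X : ℝ) : ℕ :=
  Nat.card {D : ℤ // IsFundDiscr D ∧ |(D : ℝ)| ≤ X ∧ P D}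

/-- The property `P` holds for 100% of fundamental discriminants. -/
def FdDensityOne (P : ℤ → Prop) : Prop :=
  Tendsto (fun X : ℝ => (fdCount P X : ℝ) / (fdCount (fun _ => True) X : ℝ)) atTop (𝓝 1)

/-- `ω_Y(D)`: the number of primes `p ≤ Y` dividing `D`. -/
def omegaY (Y : ℝ) (D : ℤ) : ℕ :=
  Nat.card {p : ℕ // p.Prime ∧ (p : ℝ) ≤ Y ∧ (p : ℤ) ∣ D}

/-- `∑_{p ≤ Y} f p`, the sum over primes `p ≤ Y`. -/
def primeSum (Y : ℝ) (f : ℕ → ℝ) : ℝ :=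
  ∑ᶠ p ∈ {p : ℕ | p.Prime ∧ (p : ℝ) ≤ Y}, f p

/-! Up to sign and powers of 2, the fundamental discriminants divisible by a squarefree `d` are the
products `dn` with `n` squarefree and coprime to `2d`. The counting function `S(d, x)` of the
squarefree `n ≤ x` coprime to `d` satisfies `S(d, x) = S(pd, x) + S(pd, x/p)` for primes `p ∤ d`, so
its asymptotics follow from those of `S(1, x)` one prime at a time, with error `O(4^ω(d) √x)`. Hence
`d ∣ D` has density `1/σ(d)` among the `N(X)` discriminants, up to an error `O(4^ω(d) √(X/d))` in
the count. Expanding the square `(∑ p, (1_{p ∣ D} - 1/(p+1)))²`, the diagonal terms give the main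
term, and the off-diagonal pairs `p ≠ q` contribute `O(√(X/(pq)))` each; the total error is
`O(√X (∑_{p ≤ Y} p^{-1/2})²) = O(√X Y)`, which is divided by `N(X) ≫ X`.
-/

section Moebius
open scoped ArithmeticFunction.Moebius

theorem dvd_of_sq_dvd_sq_mul_squarefree {a b m : ℕ} (hm : Squarefree m) (hb : b ≠ 0)
    (h : a ^ 2 ∣ b ^ 2 * m) : a ∣ b := by
  have hbm : b ^ 2 * m ≠ 0 := mul_ne_zero (pow_ne_zero 2 hb) hm.ne_zero
  have ha : a ≠ 0 := by rintro rfl; exact hbm (zero_dvd_iff.1 (by simpa using h))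
  rw [← Nat.factorization_le_iff_dvd ha hb]
  intro p
  have hp := (Nat.factorization_le_iff_dvd (pow_ne_zero 2 ha) hbm).2 h p
  rw [Nat.factorization_mul (pow_ne_zero 2 hb) hm.ne_zero] at hp
  simp only [Nat.factorization_pow, Finsupp.smul_apply, Finsupp.add_apply, smul_eq_mul] at hp
  have := hm.natFactorization_le_one p
  omega

theorem sum_moebius_filter_sq_dvd {n A : ℕ} (hn : n ≠ 0) (hA : n < (A + 1) ^ 2) :
    ∑ a ∈ Finset.Ioc 0 A with a ^ 2 ∣ n, μ a = if Squarefree n then 1 else 0 := by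
  obtain ⟨m, b, rfl, hm⟩ := Nat.sq_mul_squarefree n
  have hb : b ≠ 0 := by rintro rfl; simp at hn
  have hdivisors : {a ∈ Finset.Ioc 0 A | a ^ 2 ∣ b ^ 2 * m} = b.divisors := by
    ext a
    simp only [Finset.mem_filter, Finset.mem_Ioc, Nat.mem_divisors]
    constructor
    · rintro ⟨_, h⟩
      exact ⟨dvd_of_sq_dvd_sq_mul_squarefree hm hb h, hb⟩
    · rintro ⟨hab, _⟩
      have hsq : a ^ 2 ∣ b ^ 2 * m := (pow_dvd_pow_of_dvd hab 2).mul_right m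
      have hlt : a < A + 1 :=
        lt_of_pow_lt_pow_left₀ 2 (by omega) ((Nat.le_of_dvd (by omega) hsq).trans_lt hA)
      exact ⟨⟨Nat.pos_of_dvd_of_pos hab (by omega), by omega⟩, hsq⟩
  have hsquarefree : Squarefree (b ^ 2 * m) ↔ b = 1 := by
    refine ⟨fun h => ?_, fun h => by simpa [h] using hm⟩
    simpa using h b ⟨m, by ring⟩
  rw [hdivisors, ← ArithmeticFunction.coe_mul_zeta_apply, ArithmeticFunction.moebius_mul_coe_zeta,
    ArithmeticFunction.one_apply]
  simp only [hsquarefree]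

theorem card_squarefree_eq_sum_moebius {N A : ℕ} (hA : N < (A + 1) ^ 2) :
    (({n ∈ Finset.Ioc 0 N | Squarefree n}).card : ℤ) =
      ∑ a ∈ Finset.Ioc 0 A, μ a * (N / a ^ 2 : ℕ) := by
  calc (({n ∈ Finset.Ioc 0 N | Squarefree n}).card : ℤ)
      = ∑ n ∈ Finset.Ioc 0 N, ∑ a ∈ Finset.Ioc 0 A, if a ^ 2 ∣ n then μ a else 0 := by
        rw [Finset.card_filter, Nat.cast_sum]
        refine Finset.sum_congr rfl fun n hn => ?_
        rw [Finset.mem_Ioc] at hn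
        rw [← Finset.sum_filter, sum_moebius_filter_sq_dvd (by omega) (by omega)]
        push_cast
        rfl
    _ = ∑ a ∈ Finset.Ioc 0 A, μ a * (N / a ^ 2 : ℕ) := by
        rw [Finset.sum_comm]
        refine Finset.sum_congr rfl fun a _ => ?_
        rw [← Finset.sum_filter, Finset.sum_const, Nat.Ioc_filter_dvd_card_eq_div, nsmul_eq_mul,
          mul_comm]

theorem hasSum_moebius_div_sq : HasSum (fun n : ℕ => (μ n : ℝ) / n ^ 2) (6 / Real.pi ^ 2) := by
  have hre : 1 < (2 : ℂ).re := by norm_num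
  have hL := (ArithmeticFunction.LSeriesSummable_moebius_iff.2 hre).LSeriesHasSum
  have hval : LSeries (fun n => (μ n : ℂ)) 2 = ((6 / Real.pi ^ 2 : ℝ) : ℂ) := by
    have h := ArithmeticFunction.LSeries_zeta_mul_Lseries_moebius hre
    rw [ArithmeticFunction.LSeries_zeta_eq_riemannZeta hre, riemannZeta_two] at h
    rw [eq_div_of_mul_eq (by simp [Real.pi_ne_zero]) ((mul_comm _ _).trans h)]
    push_cast
    rw [one_div_div]
  rw [hval] at hL
  refine Complex.hasSum_ofReal.1 (hL.congr_fun fun n => ?_)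
  rcases eq_or_ne n 0 with rfl | hn
  · simp
  · rw [LSeries.term_of_ne_zero hn]
    push_cast
    norm_cast

theorem abs_moebius_div_sq_le (a : ℕ) : |(μ a : ℝ) / a ^ 2| ≤ ((a : ℝ) ^ 2)⁻¹ := by
  have hμ : |(μ a : ℝ)| ≤ 1 := mod_cast ArithmeticFunction.abs_moebius_le_one
  rw [abs_div, abs_of_nonneg (by positivity : (0 : ℝ) ≤ a ^ 2), div_eq_mul_inv]
  exact mul_le_of_le_one_left (by positivity) hμ

theorem abs_sum_moebius_div_sq_sub_le (A : ℕ) :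
    |∑ a ∈ Finset.Ioc 0 A, (μ a : ℝ) / a ^ 2 - 6 / Real.pi ^ 2| ≤ 2 / ((A : ℝ) + 1) := by
  have hlim := ((hasSum_moebius_div_sq.tendsto_sum_nat).const_sub
    (∑ a ∈ Finset.Ioc 0 A, (μ a : ℝ) / a ^ 2)).abs
  refine le_of_tendsto hlim ?_
  filter_upwards [eventually_ge_atTop (A + 1)] with M hM
  have hIoc : ∑ a ∈ Finset.Ioc 0 A, (μ a : ℝ) / a ^ 2 =
      ∑ a ∈ Finset.range (A + 1), (μ a : ℝ) / a ^ 2 := by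
    refine Finset.sum_subset (fun a ha => ?_) fun a ha ha' => ?_
    · simp only [Finset.mem_Ioc, Finset.mem_range] at ha ⊢
      omega
    · obtain rfl : a = 0 := by
        simp only [Finset.mem_Ioc, Finset.mem_range] at ha ha'
        omega
      simp
  have hIoo : {a ∈ Finset.range M | A + 1 ≤ a} = Finset.Ioo A M := by
    ext a
    simp only [Finset.mem_filter, Finset.mem_range, Finset.mem_Ioo]
    omega
  rw [hIoc, abs_sub_comm, Finset.sum_range_sub_sum_range hM, hIoo]
  calc |∑ a ∈ Finset.Ioo A M, (μ a : ℝ) / a ^ 2|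
      ≤ ∑ a ∈ Finset.Ioo A M, |(μ a : ℝ) / a ^ 2| := Finset.abs_sum_le_sum_abs _ _
    _ ≤ ∑ a ∈ Finset.Ioo A M, ((a : ℝ) ^ 2)⁻¹ :=
        Finset.sum_le_sum fun a _ => abs_moebius_div_sq_le a
    _ ≤ 2 / (A + 1) := sum_Ioo_inv_sq_le A M

theorem abs_card_squarefree_sub_sum_moebius_mul_le {x : ℝ} (hx : 0 ≤ x) {A : ℕ}
    (hA : ⌊x⌋₊ < (A + 1) ^ 2) :
    |(({n ∈ Finset.Ioc 0 ⌊x⌋₊ | Squarefree n}).card : ℝ) -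
      (∑ a ∈ Finset.Ioc 0 A, (μ a : ℝ) / a ^ 2) * x| ≤ A := by
  have hcard : (({n ∈ Finset.Ioc 0 ⌊x⌋₊ | Squarefree n}).card : ℝ) =
      ∑ a ∈ Finset.Ioc 0 A, (μ a : ℝ) * (⌊x⌋₊ / a ^ 2 : ℕ) := by
    have h := congrArg (Int.cast : ℤ → ℝ) (card_squarefree_eq_sum_moebius hA)
    simpa only [Int.cast_natCast, Int.cast_sum, Int.cast_mul] using h
  have hterm (a : ℕ) : |(μ a : ℝ) * (⌊x⌋₊ / a ^ 2 : ℕ) - (μ a : ℝ) / a ^ 2 * x| ≤ 1 := by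
    have hμ : |(μ a : ℝ)| ≤ 1 := mod_cast ArithmeticFunction.abs_moebius_le_one
    have hfloor : (⌊x⌋₊ / a ^ 2 : ℕ) = ⌊x / (a : ℝ) ^ 2⌋₊ := by
      rw [← Nat.floor_div_natCast, Nat.cast_pow]
    have hfract : 0 ≤ x / (a : ℝ) ^ 2 - ⌊x / (a : ℝ) ^ 2⌋₊ :=
      sub_nonneg.2 (Nat.floor_le (by positivity))
    rw [div_mul_eq_mul_div, mul_div_assoc, ← mul_sub, abs_mul, hfloor, abs_sub_comm,
      abs_of_nonneg hfract]
    exact mul_le_one₀ hμ hfract (by linarith [Nat.lt_floor_add_one (x / (a : ℝ) ^ 2)])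
  rw [hcard, Finset.sum_mul, ← Finset.sum_sub_distrib]
  calc _ ≤ ∑ a ∈ Finset.Ioc 0 A, |(μ a : ℝ) * (⌊x⌋₊ / a ^ 2 : ℕ) - (μ a : ℝ) / a ^ 2 * x| :=
        Finset.abs_sum_le_sum_abs _ _
    _ ≤ ∑ _a ∈ Finset.Ioc 0 A, 1 := Finset.sum_le_sum fun a _ => hterm a
    _ = A := by simp

theorem abs_card_squarefree_sub_le {x : ℝ} (hx : 0 ≤ x) :
    |(({n ∈ Finset.Ioc 0 ⌊x⌋₊ | Squarefree n}).card : ℝ) - 6 / Real.pi ^ 2 * x| ≤ 3 * √x := by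
  set A := ⌊√x⌋₊
  have hAle : (A : ℝ) ≤ √x := Nat.floor_le (Real.sqrt_nonneg x)
  have hAlt : √x < A + 1 := Nat.lt_floor_add_one _
  have hA : ⌊x⌋₊ < (A + 1) ^ 2 := by
    rw [Nat.floor_lt hx]
    push_cast
    exact (Real.sqrt_lt' (by positivity)).1 hAlt
  have hround := abs_card_squarefree_sub_sum_moebius_mul_le hx hA
  have htail : |(∑ a ∈ Finset.Ioc 0 A, (μ a : ℝ) / a ^ 2) * x - 6 / Real.pi ^ 2 * x| ≤ 2 * √x := by
    rw [← sub_mul, abs_mul, abs_of_nonneg hx]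
    calc _ ≤ 2 / ((A : ℝ) + 1) * x :=
          mul_le_mul_of_nonneg_right (abs_sum_moebius_div_sq_sub_le A) hx
      _ ≤ 2 * √x := by
          rw [div_mul_eq_mul_div, div_le_iff₀ (by positivity)]
          nlinarith [Real.mul_self_sqrt hx, Real.sqrt_nonneg x]
  linarith [abs_sub_le (({n ∈ Finset.Ioc 0 ⌊x⌋₊ | Squarefree n}).card : ℝ)
    ((∑ a ∈ Finset.Ioc 0 A, (μ a : ℝ) / a ^ 2) * x) (6 / Real.pi ^ 2 * x)]

end Moebius

section SquarefreeCount
open scoped ArithmeticFunction.sigma ArithmeticFunction.omega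

/-- The number of squarefree positive integers `n ≤ x` coprime to `d`, in terms of which fundamental
discriminants divisible by a given integer are counted. -/
def squarefreeCount (d : ℕ) (x : ℝ) : ℕ :=
  ({n ∈ Finset.Ioc 0 ⌊x⌋₊ | Squarefree n ∧ n.Coprime d}).card

theorem card_filter_dvd_and_div (P : ℕ → Prop) [DecidablePred P] {b : ℕ} (hb : 0 < b) (x : ℝ) :
    ({n ∈ Finset.Ioc 0 ⌊x⌋₊ | b ∣ n ∧ P (n / b)}).card =
      ({k ∈ Finset.Ioc 0 ⌊x / b⌋₊ | P k}).card := by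
  refine Finset.card_nbij' (· / b) (b * ·) ?_ ?_ ?_ ?_
  · intro n hn
    simp only [Finset.coe_filter, Finset.mem_Ioc, Set.mem_ofPred_eq] at hn ⊢
    obtain ⟨⟨hn0, hnx⟩, hbn, hP⟩ := hn
    rw [Nat.floor_div_natCast]
    exact ⟨⟨Nat.div_pos (Nat.le_of_dvd hn0 hbn) hb, Nat.div_le_div_right hnx⟩, hP⟩
  · intro k hk
    simp only [Finset.coe_filter, Finset.mem_Ioc, Set.mem_ofPred_eq, Nat.floor_div_natCast,
      Nat.le_div_iff_mul_le hb] at hk ⊢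
    obtain ⟨⟨hk0, hkx⟩, hP⟩ := hk
    rw [Nat.mul_div_cancel_left _ hb, mul_comm b k]
    exact ⟨⟨Nat.mul_pos hk0 hb, hkx⟩, dvd_mul_left _ _, hP⟩
  · intro n hn
    simp only [Finset.coe_filter, Set.mem_ofPred_eq] at hn
    exact Nat.mul_div_cancel' hn.2.1
  · intro k _
    exact Nat.mul_div_cancel_left _ hb

theorem card_squarefree_coprime_dvd {d e : ℕ} (he : Squarefree e) (hed : e.Coprime d) (x : ℝ) :
    ({n ∈ Finset.Ioc 0 ⌊x⌋₊ | (Squarefree n ∧ n.Coprime d) ∧ e ∣ n}).card =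
      squarefreeCount (e * d) (x / e) := by
  have he0 : 0 < e := Nat.pos_of_ne_zero he.ne_zero
  rw [squarefreeCount,
    ← card_filter_dvd_and_div (fun k => Squarefree k ∧ k.Coprime (e * d)) he0 x]
  congr 1
  refine Finset.filter_congr fun n _ => ?_
  rw [and_comm, and_congr_right_iff]
  rintro ⟨k, rfl⟩
  rw [Nat.mul_div_cancel_left _ he0, Nat.squarefree_mul_iff, Nat.coprime_mul_iff_left,
    Nat.coprime_mul_iff_right, Nat.coprime_comm (m := e)]
  tauto

theorem squarefreeCount_eq_add {d p : ℕ} (hp : p.Prime) (hpd : p.Coprime d) (x : ℝ) :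
    squarefreeCount d x = squarefreeCount (p * d) x + squarefreeCount (p * d) (x / p) := by
  rw [← card_squarefree_coprime_dvd hp.prime.squarefree hpd, squarefreeCount, squarefreeCount,
    ← Finset.card_filter_add_card_filter_not (fun n => p ∣ n),
    Finset.filter_filter, Finset.filter_filter, add_comm]
  congr 2
  refine Finset.filter_congr fun n _ => ?_
  rw [Nat.coprime_mul_iff_right, Nat.coprime_comm (m := p), hp.coprime_iff_not_dvd]
  tauto

theorem squarefreeCount_of_lt_one (d : ℕ) {x : ℝ} (hx : x < 1) : squarefreeCount d x = 0 := by
  rw [squarefreeCount, Nat.floor_eq_zero.2 hx]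
  rfl

theorem sqrt_div_le_three_quarters_mul_sqrt {p x : ℝ} (hp : 2 ≤ p) (hx : 0 ≤ x) :
    √(x / p) ≤ 3 / 4 * √x := by
  rw [Real.sqrt_le_left (by positivity), mul_pow, Real.sq_sqrt hx, div_le_iff₀ (by positivity)]
  nlinarith

/- Since `c x = c' x + c' x / p` for `c' = c p / (p + 1)`, the error `E(x)` of `G` satisfies
`|E(x)| ≤ |E(x / p)| + K √x`, and `4 K √(x / p) + K √x ≤ 4 K √x`. -/
theorem abs_sub_le_of_add_comp_div {F G : ℝ → ℝ} {c K p : ℝ} (hp : 2 ≤ p)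
    (hF : ∀ x, 0 ≤ x → |F x - c * x| ≤ K * √x) (hFG : ∀ x, F x = G x + G (x / p))
    (hG : ∀ x < 1, G x = 0) {x : ℝ} (hx : 0 ≤ x) :
    |G x - c * (p / (p + 1)) * x| ≤ 4 * K * √x := by
  have hK : 0 ≤ K := by simpa using (abs_nonneg _).trans (hF 1 zero_le_one)
  obtain ⟨n, hn⟩ := pow_unbounded_of_one_lt x (by linarith : 1 < p)
  induction n generalizing x with
  | zero =>
    have hx1 : x < 1 := by simpa using hn
    have hcx : |c * x| ≤ K * √x := by
      have hxp : x / p < 1 := (div_le_self hx (by linarith)).trans_lt hx1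
      simpa [hFG, hG x hx1, hG _ hxp] using hF x hx
    have hratio : |p / (p + 1)| ≤ 1 := by
      rw [abs_of_nonneg (by positivity), div_le_one (by positivity)]
      linarith
    have hmul := mul_le_mul hcx hratio (abs_nonneg _) (by positivity)
    rw [hG x hx1, zero_sub, abs_neg, mul_right_comm, abs_mul]
    linarith [mul_nonneg hK (Real.sqrt_nonneg x)]
  | succ n ih =>
    have hxn : x / p < p ^ n := by rwa [div_lt_iff₀ (by positivity), ← pow_succ]
    have hxp := ih (x := x / p) (by positivity) hxn
    have hsqrt := mul_le_mul_of_nonneg_left (sqrt_div_le_three_quarters_mul_sqrt hp hx) hK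
    have hsplit : G x - c * (p / (p + 1)) * x =
        (F x - c * x) - (G (x / p) - c * (p / (p + 1)) * (x / p)) := by
      rw [hFG]
      field_simp
      ring
    rw [hsplit]
    linarith [abs_sub (F x - c * x) (G (x / p) - c * (p / (p + 1)) * (x / p)), hF x hx]

theorem sigma_one_prime {p : ℕ} (hp : p.Prime) : σ 1 p = p + 1 := by
  simpa [Finset.sum_range_succ, add_comm] using
    ArithmeticFunction.sigma_one_apply_prime_pow (i := 1) hp

theorem sigma_one_prime_mul {p d : ℕ} (hp : p.Prime) (hpd : p.Coprime d) :
    σ 1 (p * d) = (p + 1) * σ 1 d := by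
  rw [ArithmeticFunction.isMultiplicative_sigma.map_mul_of_coprime hpd, sigma_one_prime hp]

theorem cardDistinctFactors_prime_mul {p d : ℕ} (hp : p.Prime) (hpd : p.Coprime d) :
    ω (p * d) = ω d + 1 := by
  rw [ArithmeticFunction.cardDistinctFactors_mul hpd,
    ArithmeticFunction.cardDistinctFactors_apply_prime hp, add_comm]

theorem abs_squarefreeCount_sub_le {d : ℕ} (hd : Squarefree d) {x : ℝ} (hx : 0 ≤ x) :
    |(squarefreeCount d x : ℝ) - 6 / Real.pi ^ 2 * (d / σ 1 d) * x| ≤ 3 * 4 ^ ω d * √x := by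
  induction d using induction_on_primes generalizing x with
  | zero => exact absurd hd not_squarefree_zero
  | one => simpa [squarefreeCount] using abs_card_squarefree_sub_le hx
  | prime_mul p d hp ih =>
    obtain ⟨hpd, -, hd⟩ := Nat.squarefree_mul_iff.1 hd
    have h := abs_sub_le_of_add_comp_div (p := p) (mod_cast hp.two_le) (fun y hy => ih hd hy)
      (G := fun y => squarefreeCount (p * d) y) (fun y => mod_cast squarefreeCount_eq_add hp hpd y)
      (fun y hy => mod_cast squarefreeCount_of_lt_one _ hy) hx
    rw [sigma_one_prime_mul hp hpd, cardDistinctFactors_prime_mul hp hpd]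
    convert h using 2
    · push_cast
      rw [mul_comm (p : ℝ) d, mul_comm ((p : ℝ) + 1), mul_div_mul_comm]
      ring
    · ring

end SquarefreeCount

section FundamentalDiscriminants
open scoped ArithmeticFunction.sigma ArithmeticFunction.omega

theorem squarefree_neg {R : Type*} [Monoid R] [HasDistribNeg R] {r : R} :
    Squarefree (-r) ↔ Squarefree r := by
  simp only [Squarefree, dvd_neg]

theorem isFundDiscr_of_odd {D : ℤ} (hD : Odd D) :
    IsFundDiscr D ↔ D ≠ 1 ∧ Squarefree D ∧ D % 4 = 1 := by
  rw [Int.odd_iff] at hD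
  refine and_congr_right fun _ => or_iff_left ?_
  rintro ⟨m, rfl, -⟩
  omega

theorem isFundDiscr_four_mul {m : ℤ} :
    IsFundDiscr (4 * m) ↔ Squarefree m ∧ (m % 4 = 2 ∨ m % 4 = 3) := by
  constructor
  · rintro ⟨-, ⟨-, h⟩ | ⟨k, hk, h⟩⟩
    · omega
    · obtain rfl : m = k := by omega
      exact h
  · exact fun h => ⟨by omega, Or.inr ⟨m, rfl, h⟩⟩

theorem isFundDiscr_eight_mul {k : ℤ} : IsFundDiscr (8 * k) ↔ Squarefree k ∧ Odd k := by
  have hmod : Odd k → (2 * k % 4 = 2 ∨ 2 * k % 4 = 3) := by rw [Int.odd_iff]; omega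
  have hsq : Squarefree (2 * k) ↔ Squarefree k ∧ Odd k := by
    rw [squarefree_mul_iff, isRelPrime_iff_isCoprime, Int.isCoprime_two_left]
    simp only [Int.prime_two.squarefree, true_and, and_comm]
  rw [show 8 * k = 4 * (2 * k) by ring, isFundDiscr_four_mul, hsq]
  exact and_iff_left_of_imp fun h => hmod h.2

theorem not_isFundDiscr_of_emod_four_eq_two {D : ℤ} (hD : D % 4 = 2) : ¬ IsFundDiscr D := by
  rintro ⟨-, ⟨-, h⟩ | ⟨m, rfl, -⟩⟩ <;> omega

open Classical in
theorem isFundDiscr_add_neg_of_odd {D : ℤ} (hD : Odd D) (hD0 : 0 < D) :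
    (if IsFundDiscr D then 1 else 0) + (if IsFundDiscr (-D) then 1 else 0) +
      (if D = 1 then 1 else 0) = if Squarefree D then 1 else 0 := by
  rw [isFundDiscr_of_odd hD, isFundDiscr_of_odd hD.neg, squarefree_neg]
  rw [Int.odd_iff] at hD
  by_cases hsq : Squarefree D
  · simp only [hsq, true_and, if_true]
    split_ifs <;> omega
  · have hD1 : D ≠ 1 := by rintro rfl; exact hsq squarefree_one
    simp [hsq, hD1]

open Classical in
theorem isFundDiscr_four_mul_add_neg_of_odd {m : ℤ} (hm : Odd m) :
    (if IsFundDiscr (4 * m) then 1 else 0) + (if IsFundDiscr (-(4 * m)) then 1 else 0) =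
      if Squarefree m then 1 else 0 := by
  rw [← mul_neg, isFundDiscr_four_mul, isFundDiscr_four_mul, squarefree_neg]
  rw [Int.odd_iff] at hm
  by_cases hsq : Squarefree m
  · simp only [hsq, true_and, if_true]
    split_ifs <;> omega
  · simp [hsq]

open Classical in
theorem isFundDiscr_add_neg {n : ℕ} (hn : 0 < n) :
    (if IsFundDiscr n then 1 else 0) + (if IsFundDiscr (-n) then 1 else 0) +
        (if n = 1 then 1 else 0) =
      (if Squarefree n ∧ n.Coprime 2 then 1 else 0) +
        (if 4 ∣ n ∧ Squarefree (n / 4) ∧ (n / 4).Coprime 2 then 1 else 0) +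
        2 * (if 8 ∣ n ∧ Squarefree (n / 8) ∧ (n / 8).Coprime 2 then 1 else 0) := by
  simp only [Nat.coprime_two_right]
  obtain hodd | hn2 | ⟨m, hm, rfl⟩ | ⟨k, rfl⟩ :
      Odd n ∨ n % 4 = 2 ∨ (∃ m, Odd m ∧ n = 4 * m) ∨ 8 ∣ n := by
    simp only [Nat.odd_iff]
    by_cases h : n % 8 = 4
    · exact Or.inr (Or.inr (Or.inl ⟨n / 4, by omega, by omega⟩))
    · omega
  · have h4 : ¬ 4 ∣ n := by rw [Nat.odd_iff] at hodd; omega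
    have h8 : ¬ 8 ∣ n := by omega
    have h := isFundDiscr_add_neg_of_odd (D := n) (mod_cast hodd) (mod_cast hn)
    simp only [Nat.cast_eq_one, Int.squarefree_natCast] at h
    simp [h, hodd, h4, h8]
  · have hodd : ¬ Odd n := by rw [Nat.odd_iff]; omega
    have h4 : ¬ 4 ∣ n := by omega
    have h8 : ¬ 8 ∣ n := by omega
    have h1 : n ≠ 1 := by omega
    simp [not_isFundDiscr_of_emod_four_eq_two (D := n) (by omega),
      not_isFundDiscr_of_emod_four_eq_two (D := -n) (by omega), hodd, h4, h8, h1]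
  · have hodd : ¬ Odd (4 * m) := by rw [Nat.odd_iff]; omega
    have h8 : ¬ 8 ∣ 4 * m := by rw [Nat.odd_iff] at hm; omega
    have h := isFundDiscr_four_mul_add_neg_of_odd (m := m) (mod_cast hm)
    rw [Int.squarefree_natCast] at h
    simp [h, hodd, hm, h8]
  · have hodd : ¬ Odd (8 * k) := by rw [Nat.odd_iff]; omega
    have hodd' : ¬ Odd (8 * k / 4) := by rw [Nat.odd_iff]; omega
    have h1 : 8 * k ≠ 1 := by omega
    simp [← mul_neg, isFundDiscr_eight_mul, squarefree_neg, Int.squarefree_natCast, hodd, hodd', h1,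
      ← two_mul]

open Classical in
/-- The fundamental discriminants `D` with `|D| ≤ X` as a `Finset`, which turns `fdCount` into a
cardinality and the average over discriminants into a finite sum. -/
def fundDiscrFinset (X : ℝ) : Finset ℤ :=
  {D ∈ Finset.Icc (-⌊X⌋) ⌊X⌋ | IsFundDiscr D}

theorem mem_fundDiscrFinset {X : ℝ} {D : ℤ} :
    D ∈ fundDiscrFinset X ↔ IsFundDiscr D ∧ |(D : ℝ)| ≤ X := by
  classical
  rw [fundDiscrFinset, Finset.mem_filter, Finset.mem_Icc, ← abs_le, Int.le_floor, Int.cast_abs,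
    and_comm]

theorem fdCount_eq_card_filter (P : ℤ → Prop) [DecidablePred P] (X : ℝ) :
    fdCount P X = ({D ∈ fundDiscrFinset X | P D}).card := by
  refine Nat.subtype_card _ fun D => ?_
  rw [Finset.mem_filter, mem_fundDiscrFinset, and_assoc]

theorem sum_Icc_neg_self {M : Type*} [AddCommMonoid M] (f : ℤ → M) (N : ℕ) :
    ∑ m ∈ Finset.Icc (-N : ℤ) N, f m = f 0 + ∑ n ∈ Finset.Ioc 0 N, (f n + f (-n)) := by
  induction N with
  | zero => simp
  | succ N ih =>
    have hIcc : Finset.Icc (-(N + 1 : ℕ) : ℤ) (N + 1 : ℕ) =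
        insert (N + 1 : ℤ) (insert (-(N + 1) : ℤ) (Finset.Icc (-N : ℤ) N)) := by
      ext m
      simp only [Finset.mem_insert, Finset.mem_Icc]
      omega
    rw [hIcc, Finset.sum_insert (by rw [Finset.mem_insert, Finset.mem_Icc]; omega),
      Finset.sum_insert (by rw [Finset.mem_Icc]; omega), ih,
      Finset.sum_Ioc_succ_top N.zero_le, Nat.cast_succ]
    abel

theorem fdCount_dvd_add {d : ℕ} {x : ℝ} (hx : 1 ≤ x) :
    fdCount ((d : ℤ) ∣ ·) x + (if d = 1 then 1 else 0) =
      ({n ∈ Finset.Ioc 0 ⌊x⌋₊ | (Squarefree n ∧ n.Coprime 2) ∧ d ∣ n}).card +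
        ({k ∈ Finset.Ioc 0 ⌊x / (4 : ℕ)⌋₊ | (Squarefree k ∧ k.Coprime 2) ∧ d ∣ 4 * k}).card +
        2 * ({k ∈ Finset.Ioc 0 ⌊x / (8 : ℕ)⌋₊ |
          (Squarefree k ∧ k.Coprime 2) ∧ d ∣ 8 * k}).card := by
  classical
  have hfloor : ⌊x⌋ = (⌊x⌋₊ : ℤ) := (Int.natCast_floor_eq_floor (by linarith)).symm
  have hzero : ¬ IsFundDiscr 0 := by simpa using isFundDiscr_four_mul (m := 0)
  have hcount : fdCount ((d : ℤ) ∣ ·) x = ∑ n ∈ Finset.Ioc 0 ⌊x⌋₊ with d ∣ n,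
      ((if IsFundDiscr n then 1 else 0) + if IsFundDiscr (-n) then 1 else 0) := by
    rw [fdCount_eq_card_filter, fundDiscrFinset, Finset.filter_filter, Finset.card_filter, hfloor,
      sum_Icc_neg_self, Finset.sum_filter]
    simp only [hzero, false_and, if_false, zero_add, dvd_neg, Int.natCast_dvd_natCast]
    refine Finset.sum_congr rfl fun n _ => ?_
    by_cases h : d ∣ n <;> simp [h]
  have hone : (∑ n ∈ Finset.Ioc 0 ⌊x⌋₊ with d ∣ n, if n = 1 then 1 else 0) =
      if d = 1 then 1 else 0 := by
    rw [Finset.sum_ite_eq']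
    simp [hx]
  have hcard (b : ℕ) (hb : 0 < b) : (∑ n ∈ Finset.Ioc 0 ⌊x⌋₊ with d ∣ n,
      if b ∣ n ∧ Squarefree (n / b) ∧ (n / b).Coprime 2 then 1 else 0) =
        ({k ∈ Finset.Ioc 0 ⌊x / b⌋₊ | (Squarefree k ∧ k.Coprime 2) ∧ d ∣ b * k}).card := by
    rw [← card_filter_dvd_and_div (fun k => (Squarefree k ∧ k.Coprime 2) ∧ d ∣ b * k) hb x,
      ← Finset.card_filter, Finset.filter_filter]
    congr 1
    refine Finset.filter_congr fun n _ => ?_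
    rw [and_comm, and_assoc, and_congr_right_iff]
    intro hbn
    rw [Nat.mul_div_cancel' hbn]
  rw [hcount, ← hone, ← hcard 4 (by norm_num), ← hcard 8 (by norm_num), ← Finset.sum_add_distrib,
    Finset.sum_congr rfl fun n hn =>
      isFundDiscr_add_neg (Finset.mem_Ioc.1 (Finset.mem_filter.1 hn).1).1,
    Finset.sum_add_distrib, Finset.sum_add_distrib, Finset.mul_sum, ← Finset.card_filter,
    Finset.filter_filter]
  simp only [and_comm]

theorem fdCount_dvd_add_of_coprime_two {e : ℕ} (he : Squarefree e) (he2 : e.Coprime 2) {x : ℝ}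
    (hx : 1 ≤ x) :
    fdCount ((e : ℤ) ∣ ·) x + (if e = 1 then 1 else 0) = squarefreeCount (e * 2) (x / e) +
      squarefreeCount (e * 2) (x / 4 / e) + 2 * squarefreeCount (e * 2) (x / 8 / e) := by
  have h4 (k : ℕ) : e ∣ 4 * k ↔ e ∣ k := (he2.pow_right 2).dvd_mul_left
  have h8 (k : ℕ) : e ∣ 8 * k ↔ e ∣ k := (he2.pow_right 3).dvd_mul_left
  rw [fdCount_dvd_add hx]
  simp only [h4, h8, card_squarefree_coprime_dvd he he2, Nat.cast_ofNat]

theorem fdCount_two_mul_dvd {e : ℕ} (he : Squarefree e) (he2 : e.Coprime 2) {x : ℝ}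
    (hx : 1 ≤ x) :
    fdCount (((2 * e : ℕ) : ℤ) ∣ ·) x =
      squarefreeCount (e * 2) (x / 4 / e) + 2 * squarefreeCount (e * 2) (x / 8 / e) := by
  have h1 {n : ℕ} (hn : n.Coprime 2) : ¬ 2 * e ∣ n := fun h =>
    Nat.two_dvd_ne_zero.2 (by rwa [Nat.coprime_two_right, Nat.odd_iff] at hn)
      ((dvd_mul_right 2 e).trans h)
  have h4 (k : ℕ) : 2 * e ∣ 4 * k ↔ e ∣ k := by
    rw [show 4 * k = 2 * (2 * k) by ring, Nat.mul_dvd_mul_iff_left two_pos, he2.dvd_mul_left]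
  have h8 (k : ℕ) : 2 * e ∣ 8 * k ↔ e ∣ k := by
    rw [show 8 * k = 2 * (2 ^ 2 * k) by ring, Nat.mul_dvd_mul_iff_left two_pos,
      (he2.pow_right 2).dvd_mul_left]
  have hne : 2 * e ≠ 1 := by omega
  have h := fdCount_dvd_add (d := 2 * e) hx
  rw [Finset.filter_false_of_mem fun n _ hn => h1 hn.1.2 hn.2, if_neg hne] at h
  simpa only [h4, h8, card_squarefree_coprime_dvd he he2, Nat.cast_ofNat, Finset.card_empty,
    zero_add, add_zero] using h

theorem abs_squarefreeCount_mul_two_sub_le {e : ℕ} (he : Squarefree e) (he2 : e.Coprime 2) {y : ℝ}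
    (hy : 0 ≤ y) :
    |(squarefreeCount (e * 2) (y / e) : ℝ) - 4 / (Real.pi ^ 2 * σ 1 e) * y| ≤
      12 * 4 ^ ω e * √(y / e) := by
  have hsq : Squarefree (2 * e) := Nat.squarefree_mul_iff.2 ⟨he2.symm, Nat.squarefree_two, he⟩
  have he0 : (e : ℝ) ≠ 0 := Nat.cast_ne_zero.2 he.ne_zero
  have h := abs_squarefreeCount_sub_le hsq (div_nonneg hy e.cast_nonneg)
  rw [sigma_one_prime_mul Nat.prime_two he2.symm,
    cardDistinctFactors_prime_mul Nat.prime_two he2.symm, mul_comm 2 e] at h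
  convert h using 2
  · push_cast
    field_simp
    ring
  · ring

theorem abs_fdCount_dvd_sub_le_of_coprime_two {e : ℕ} (he : Squarefree e) (he2 : e.Coprime 2)
    {x : ℝ} (hx : 1 ≤ x) :
    |(fdCount ((e : ℤ) ∣ ·) x : ℝ) - 6 / (Real.pi ^ 2 * σ 1 e) * x| ≤
      49 * 4 ^ ω e * √(x / e) := by
  have hcount : (fdCount ((e : ℤ) ∣ ·) x : ℝ) + (if e = 1 then 1 else 0) =
      squarefreeCount (e * 2) (x / e) + squarefreeCount (e * 2) (x / 4 / e) +
        2 * squarefreeCount (e * 2) (x / 8 / e) := by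
    exact_mod_cast fdCount_dvd_add_of_coprime_two he he2 hx
  have hone : |(if e = 1 then 1 else 0 : ℝ)| ≤ 4 ^ ω e * √(x / e) := by
    split_ifs with h
    · simpa [h] using hx
    · simpa using (by positivity : 0 ≤ 4 ^ ω e * √(x / e))
  have hsqrt {b : ℝ} (hb : 1 ≤ b) : 12 * 4 ^ ω e * √(x / b / e) ≤ 12 * 4 ^ ω e * √(x / e) := by
    gcongr
    exact div_le_self (by linarith) hb
  have h1 := abs_squarefreeCount_mul_two_sub_le he he2 (y := x) (by linarith)
  have h4 := (abs_squarefreeCount_mul_two_sub_le he he2 (y := x / 4) (by linarith)).trans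
    (hsqrt (by norm_num))
  have h8 := (abs_squarefreeCount_mul_two_sub_le he he2 (y := x / 8) (by linarith)).trans
    (hsqrt (by norm_num))
  have hsplit : 6 / (Real.pi ^ 2 * σ 1 e) * x = 4 / (Real.pi ^ 2 * σ 1 e) * x +
      4 / (Real.pi ^ 2 * σ 1 e) * (x / 4) + 2 * (4 / (Real.pi ^ 2 * σ 1 e) * (x / 8)) := by
    ring
  rw [hsplit]
  rw [abs_le] at *
  constructor <;> linarith

theorem abs_fdCount_two_mul_dvd_sub_le {e : ℕ} (he : Squarefree e) (he2 : e.Coprime 2)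
    {x : ℝ} (hx : 1 ≤ x) :
    |(fdCount (((2 * e : ℕ) : ℤ) ∣ ·) x : ℝ) - 6 / (Real.pi ^ 2 * σ 1 (2 * e)) * x| ≤
      9 * 4 ^ ω (2 * e) * √(x / (2 * e : ℕ)) := by
  have hcount : (fdCount (((2 * e : ℕ) : ℤ) ∣ ·) x : ℝ) =
      squarefreeCount (e * 2) (x / 4 / e) + 2 * squarefreeCount (e * 2) (x / 8 / e) := by
    exact_mod_cast fdCount_two_mul_dvd he he2 hx
  have hsqrt {b : ℝ} (hb : 2 ≤ b) :
      12 * 4 ^ ω e * √(x / b / e) ≤ 12 * 4 ^ ω e * √(x / (2 * e : ℕ)) := by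
    rw [Nat.cast_mul, ← div_div, Nat.cast_ofNat]
    gcongr
  have h4 := (abs_squarefreeCount_mul_two_sub_le he he2 (y := x / 4) (by linarith)).trans
    (hsqrt (by norm_num))
  have h8 := (abs_squarefreeCount_mul_two_sub_le he he2 (y := x / 8) (by linarith)).trans
    (hsqrt (by norm_num))
  have hsplit : 6 / (Real.pi ^ 2 * σ 1 (2 * e)) * x =
      4 / (Real.pi ^ 2 * σ 1 e) * (x / 4) + 2 * (4 / (Real.pi ^ 2 * σ 1 e) * (x / 8)) := by
    rw [sigma_one_prime_mul Nat.prime_two he2.symm]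
    push_cast
    field_simp
    ring
  have hω : (4 : ℝ) ^ ω (2 * e) = 4 * 4 ^ ω e := by
    rw [cardDistinctFactors_prime_mul Nat.prime_two he2.symm, pow_succ']
  rw [hsplit, hcount, hω]
  rw [abs_le] at *
  constructor <;> linarith

theorem abs_fdCount_dvd_sub_le {d : ℕ} (hd : Squarefree d) {x : ℝ} (hx : 1 ≤ x) :
    |(fdCount ((d : ℤ) ∣ ·) x : ℝ) - 6 / (Real.pi ^ 2 * σ 1 d) * x| ≤
      49 * 4 ^ ω d * √(x / d) := by
  by_cases h2 : 2 ∣ d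
  · obtain ⟨e, rfl⟩ := h2
    obtain ⟨he2, -, he⟩ := Nat.squarefree_mul_iff.1 hd
    refine (abs_fdCount_two_mul_dvd_sub_le he he2.symm hx).trans ?_
    gcongr
    norm_num
  · exact abs_fdCount_dvd_sub_le_of_coprime_two hd
      ((Nat.prime_two.coprime_iff_not_dvd.2 h2).symm) hx

theorem one_div_sigma_one_le_sqrt {d : ℕ} (hd : d ≠ 0) : 1 / (σ 1 d : ℝ) ≤ √(1 / d) := by
  have hdσ : d ≤ σ 1 d := by
    rw [ArithmeticFunction.sigma_one_apply]
    exact Finset.single_le_sum (f := id) (fun _ _ => Nat.zero_le _) (Nat.mem_divisors_self d hd)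
  have hd1 : 1 / (d : ℝ) ≤ 1 := by
    rw [div_le_one (by positivity)]
    exact_mod_cast Nat.one_le_iff_ne_zero.2 hd
  calc 1 / (σ 1 d : ℝ) ≤ 1 / d := by gcongr
    _ ≤ √(1 / d) := Real.le_sqrt_of_sq_le (by nlinarith [(by positivity : 0 ≤ 1 / (d : ℝ))])

theorem abs_fdCount_sub_le {x : ℝ} (hx : 1 ≤ x) :
    |(fdCount (fun _ => True) x : ℝ) - 6 / Real.pi ^ 2 * x| ≤ 49 * √x := by
  simpa using abs_fdCount_dvd_sub_le squarefree_one hx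

theorem abs_fdCount_dvd_sub_fdCount_mul_le {d : ℕ} (hd : Squarefree d) {x : ℝ} (hx : 1 ≤ x) :
    |(fdCount ((d : ℤ) ∣ ·) x : ℝ) - 1 / σ 1 d * fdCount (fun _ => True) x| ≤
      98 * √x * 4 ^ ω d * √(1 / d) := by
  have hdvd := abs_fdCount_dvd_sub_le hd hx
  rw [div_eq_mul_one_div x, Real.sqrt_mul (by linarith)] at hdvd
  have htotal : |1 / (σ 1 d : ℝ) * (fdCount (fun _ => True) x - 6 / Real.pi ^ 2 * x)| ≤
      49 * 4 ^ ω d * (√x * √(1 / d)) := by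
    rw [abs_mul, abs_of_nonneg (by positivity : 0 ≤ 1 / (σ 1 d : ℝ))]
    calc _ ≤ √(1 / d) * (49 * √x) := by
          gcongr
          · exact one_div_sigma_one_le_sqrt hd.ne_zero
          · exact abs_fdCount_sub_le hx
      _ ≤ 4 ^ ω d * (√(1 / d) * (49 * √x)) :=
          le_mul_of_one_le_left (by positivity) (one_le_pow₀ (by norm_num))
      _ = 49 * 4 ^ ω d * (√x * √(1 / d)) := by ring
  calc _ = |((fdCount ((d : ℤ) ∣ ·) x : ℝ) - 6 / (Real.pi ^ 2 * σ 1 d) * x) -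
        1 / (σ 1 d : ℝ) * (fdCount (fun _ => True) x - 6 / Real.pi ^ 2 * x)| := by
        congr 1
        field_simp
        ring
    _ ≤ 98 * √x * 4 ^ ω d * √(1 / d) := (abs_sub _ _).trans (by linarith)

theorem one_le_fdCount {X : ℝ} (hX : 3 ≤ X) : 1 ≤ fdCount (fun _ => True) X := by
  rw [fdCount_eq_card_filter, Nat.one_le_iff_ne_zero, Finset.card_ne_zero]
  refine ⟨-3, ?_⟩
  rw [Finset.mem_filter, mem_fundDiscrFinset, isFundDiscr_of_odd (by decide), squarefree_neg]
  exact ⟨⟨⟨by norm_num, Int.prime_three.squarefree, by norm_num⟩, by norm_num; exact hX⟩, trivial⟩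

theorem le_mul_fdCount {X : ℝ} (hX : 3 ≤ X) : X ≤ 9608 * fdCount (fun _ => True) X := by
  have hone : (1 : ℝ) ≤ fdCount (fun _ => True) X := mod_cast one_le_fdCount hX
  have hlower := (abs_le.1 (abs_fdCount_sub_le (x := X) (by linarith))).1
  have hdensity : 1 / 2 ≤ 6 / Real.pi ^ 2 := by
    rw [div_le_div_iff₀ two_pos (by positivity)]
    nlinarith [Real.pi_lt_d2, Real.pi_pos]
  -- `N ≥ X / 2 - 49 √X ≥ X / 4 - 49²`, and `9608 = 4 (1 + 49²)`, so `N ≥ 1` absorbs the constant.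
  nlinarith [sq_nonneg (√X - 98), Real.sq_sqrt (by linarith : 0 ≤ X),
    mul_le_mul_of_nonneg_right hdensity (by linarith : 0 ≤ X)]

end FundamentalDiscriminants

section Variance

theorem sum_sum_sub_sum_sq {ι α R : Type*} [CommRing R] (P : Finset ι) (F : Finset α)
    (I : ι → α → R) (f : ι → R) :
    ∑ D ∈ F, (∑ p ∈ P, I p D - ∑ p ∈ P, f p) ^ 2 =
      ∑ p ∈ P, ∑ q ∈ P, ∑ D ∈ F, (I p D - f p) * (I q D - f q) := by
  simp only [← Finset.sum_sub_distrib, sq, Finset.sum_mul_sum]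
  rw [Finset.sum_comm]
  exact Finset.sum_congr rfl fun p _ => Finset.sum_comm

theorem sum_sub_mul_sub {α R : Type*} [CommRing R] (F : Finset α) (u v : α → R) (a b : R) :
    ∑ D ∈ F, (u D - a) * (v D - b) = (∑ D ∈ F, u D * v D - a * b * F.card) -
      b * (∑ D ∈ F, u D - a * F.card) - a * (∑ D ∈ F, v D - b * F.card) := by
  simp only [sub_mul, mul_sub, Finset.sum_sub_distrib, ← Finset.mul_sum, ← Finset.sum_mul,
    Finset.sum_const, nsmul_eq_mul]
  ring

theorem abs_sum_sub_mul_self_sub_le {α : Type*} (F : Finset α) {u : α → ℝ}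
    (hu : ∀ D ∈ F, u D * u D = u D) {a : ℝ} (ha0 : 0 ≤ a) (ha1 : a ≤ 1) :
    |∑ D ∈ F, (u D - a) * (u D - a) - F.card * (a * (1 - a))| ≤ |∑ D ∈ F, u D - a * F.card| := by
  have hfactor : ∑ D ∈ F, (u D - a) * (u D - a) - F.card * (a * (1 - a)) =
      (1 - 2 * a) * (∑ D ∈ F, u D - a * F.card) := by
    rw [sum_sub_mul_sub, Finset.sum_congr rfl hu]
    ring
  rw [hfactor, abs_mul]
  exact mul_le_of_le_one_left (abs_nonneg _) (abs_le.2 ⟨by linarith, by linarith⟩)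

theorem abs_sum_sub_mul_sub_le {α : Type*} (F : Finset α) {u v : α → ℝ} {a b s t M : ℝ}
    (ha : 0 ≤ a) (has : a ≤ s) (hb : 0 ≤ b) (hbt : b ≤ t)
    (hu : |∑ D ∈ F, u D - a * F.card| ≤ M * s) (hv : |∑ D ∈ F, v D - b * F.card| ≤ M * t)
    (huv : |∑ D ∈ F, u D * v D - a * b * F.card| ≤ M * (s * t)) :
    |∑ D ∈ F, (u D - a) * (v D - b)| ≤ 3 * M * (s * t) := by
  have hbu : |b * (∑ D ∈ F, u D - a * F.card)| ≤ t * (M * s) := by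
    rw [abs_mul, abs_of_nonneg hb]
    exact mul_le_mul hbt hu (abs_nonneg _) (hb.trans hbt)
  have hav : |a * (∑ D ∈ F, v D - b * F.card)| ≤ s * (M * t) := by
    rw [abs_mul, abs_of_nonneg ha]
    exact mul_le_mul has hv (abs_nonneg _) (ha.trans has)
  rw [sum_sub_mul_sub]
  rw [abs_le] at *
  constructor <;> linarith

theorem abs_sum_sum_sub_sum_sq_sub_le {ι α : Type*} {P : Finset ι} {F : Finset α}
    {I : ι → α → ℝ} {f s : ι → ℝ} {M : ℝ} (hM : 0 ≤ M)
    (hI : ∀ p ∈ P, ∀ D ∈ F, I p D * I p D = I p D)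
    (hf0 : ∀ p ∈ P, 0 ≤ f p) (hf1 : ∀ p ∈ P, f p ≤ 1) (hfs : ∀ p ∈ P, f p ≤ s p)
    (hsingle : ∀ p ∈ P, |∑ D ∈ F, I p D - f p * F.card| ≤ M * s p)
    (hpair : ∀ p ∈ P, ∀ q ∈ P, p ≠ q →
      |∑ D ∈ F, I p D * I q D - f p * f q * F.card| ≤ M * (s p * s q)) :
    |∑ D ∈ F, (∑ p ∈ P, I p D - ∑ p ∈ P, f p) ^ 2 - F.card * ∑ p ∈ P, f p * (1 - f p)| ≤
      3 * M * (∑ p ∈ P, s p) ^ 2 + M * ∑ p ∈ P, s p := by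
  classical
  have hs p (hp : p ∈ P) : 0 ≤ s p := (hf0 p hp).trans (hfs p hp)
  have hdiag p (hp : p ∈ P) :
      |∑ D ∈ F, (I p D - f p) * (I p D - f p) - F.card * (f p * (1 - f p))| ≤ M * s p :=
    (abs_sum_sub_mul_self_sub_le F (hI p hp) (hf0 p hp) (hf1 p hp)).trans (hsingle p hp)
  have hoff p (hp : p ∈ P) :
      |∑ q ∈ P.erase p, ∑ D ∈ F, (I p D - f p) * (I q D - f q)| ≤ 3 * M * (s p * ∑ q ∈ P, s q) := by
    calc _ ≤ ∑ q ∈ P.erase p, |∑ D ∈ F, (I p D - f p) * (I q D - f q)| :=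
          Finset.abs_sum_le_sum_abs _ _
      _ ≤ ∑ q ∈ P.erase p, 3 * M * (s p * s q) := Finset.sum_le_sum fun q hq => by
          obtain ⟨hqp, hq⟩ := Finset.mem_erase.1 hq
          exact abs_sum_sub_mul_sub_le F (hf0 p hp) (hfs p hp) (hf0 q hq) (hfs q hq)
            (hsingle p hp) (hsingle q hq) (hpair p hp q hq hqp.symm)
      _ ≤ ∑ q ∈ P, 3 * M * (s p * s q) :=
          Finset.sum_le_sum_of_subset_of_nonneg (P.erase_subset p) fun q hq _ => by
            have := mul_nonneg (hs p hp) (hs q hq)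
            positivity
      _ = 3 * M * (s p * ∑ q ∈ P, s q) := by rw [← Finset.mul_sum, ← Finset.mul_sum]
  rw [sum_sum_sub_sum_sq, Finset.mul_sum, ← Finset.sum_sub_distrib]
  calc _ ≤ ∑ p ∈ P, |∑ q ∈ P, ∑ D ∈ F, (I p D - f p) * (I q D - f q) -
          F.card * (f p * (1 - f p))| := Finset.abs_sum_le_sum_abs _ _
    _ ≤ ∑ p ∈ P, (3 * M * (s p * ∑ q ∈ P, s q) + M * s p) := Finset.sum_le_sum fun p hp => by
        rw [← Finset.add_sum_erase P _ hp, add_sub_right_comm, add_comm (3 * M * _)]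
        exact (abs_add_le _ _).trans (add_le_add (hdiag p hp) (hoff p hp))
    _ = 3 * M * (∑ p ∈ P, s p) ^ 2 + M * ∑ p ∈ P, s p := by
        rw [Finset.sum_add_distrib, ← Finset.mul_sum, ← Finset.mul_sum, ← Finset.sum_mul, sq]

end Variance

section PrimeSums

theorem mem_primesLE_floor {Y : ℝ} {p : ℕ} :
    p ∈ Nat.primesLE ⌊Y⌋₊ ↔ p.Prime ∧ (p : ℝ) ≤ Y := by
  rw [Nat.mem_primesLE, and_comm]
  exact and_congr_right fun hp => Nat.le_floor_iff' hp.ne_zero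

theorem primeSum_eq_sum (Y : ℝ) (f : ℕ → ℝ) : primeSum Y f = ∑ p ∈ Nat.primesLE ⌊Y⌋₊, f p := by
  rw [primeSum, ← finsum_mem_coe_finset]
  congr! 3 with p
  simp only [Finset.mem_coe, mem_primesLE_floor, Set.mem_ofPred_eq]

theorem omegaY_eq_sum (Y : ℝ) (D : ℤ) :
    (omegaY Y D : ℝ) = ∑ p ∈ Nat.primesLE ⌊Y⌋₊, if (p : ℤ) ∣ D then 1 else 0 := by
  rw [omegaY, Nat.subtype_card ({p ∈ Nat.primesLE ⌊Y⌋₊ | (p : ℤ) ∣ D} : Finset ℕ)]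
  · rw [Finset.card_filter]
    push_cast
    rfl
  · intro p
    rw [Finset.mem_filter, mem_primesLE_floor, and_assoc]

theorem sum_sqrt_one_div_le (N : ℕ) : ∑ n ∈ Finset.Icc 1 N, √(1 / (n : ℝ)) ≤ 2 * √N := by
  induction N with
  | zero => simp
  | succ N ih =>
    have hstep : √(1 / (N + 1 : ℝ)) ≤ 2 * √(N + 1 : ℝ) - 2 * √N := by
      rw [Real.sqrt_div zero_le_one, Real.sqrt_one, div_le_iff₀ (by positivity)]
      nlinarith [sq_nonneg (√(N + 1 : ℝ) - √N), Real.sq_sqrt (Nat.cast_nonneg (α := ℝ) N),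
        Real.sq_sqrt (by positivity : (0 : ℝ) ≤ N + 1)]
    rw [Finset.sum_Icc_succ_top (by omega), Nat.cast_succ]
    linarith

theorem sum_primesLE_sqrt_one_div_le {Y : ℝ} (hY : 0 ≤ Y) :
    ∑ p ∈ Nat.primesLE ⌊Y⌋₊, √(1 / (p : ℝ)) ≤ 2 * √Y := by
  have hsub : Nat.primesLE ⌊Y⌋₊ ⊆ Finset.Icc 1 ⌊Y⌋₊ := fun p hp => by
    obtain ⟨hpY, hp⟩ := Nat.mem_primesLE.1 hp
    exact Finset.mem_Icc.2 ⟨hp.one_le, hpY⟩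
  calc _ ≤ ∑ n ∈ Finset.Icc 1 ⌊Y⌋₊, √(1 / (n : ℝ)) :=
        Finset.sum_le_sum_of_subset_of_nonneg hsub fun _ _ _ => Real.sqrt_nonneg _
    _ ≤ 2 * √⌊Y⌋₊ := sum_sqrt_one_div_le _
    _ ≤ 2 * √Y := by gcongr; exact Nat.floor_le hY

end PrimeSums

section Application

theorem sum_fundDiscrFinset_ite (P : ℤ → Prop) [DecidablePred P] (X : ℝ) :
    ∑ D ∈ fundDiscrFinset X, (if P D then 1 else 0 : ℝ) = fdCount P X := by
  rw [fdCount_eq_card_filter, Finset.card_filter]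
  push_cast
  rfl

theorem card_fundDiscrFinset (X : ℝ) : (fundDiscrFinset X).card = fdCount (fun _ => True) X := by
  rw [fdCount_eq_card_filter, Finset.filter_true]

theorem ite_dvd_mul_ite_dvd {p q : ℕ} (hpq : p.Coprime q) (D : ℤ) :
    (if (p : ℤ) ∣ D then 1 else 0 : ℝ) * (if (q : ℤ) ∣ D then 1 else 0) =
      if ((p * q : ℕ) : ℤ) ∣ D then 1 else 0 := by
  have hdvd : ((p * q : ℕ) : ℤ) ∣ D ↔ (p : ℤ) ∣ D ∧ (q : ℤ) ∣ D := by
    simp only [Int.natCast_dvd, ← hpq.lcm_eq_mul, Nat.lcm_dvd_iff]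
  simp only [hdvd, ite_zero_mul_ite_zero, mul_one]

theorem abs_sum_ite_prime_dvd_sub_le {p : ℕ} (hp : p.Prime) {X : ℝ} (hX : 1 ≤ X) :
    |∑ D ∈ fundDiscrFinset X, (if (p : ℤ) ∣ D then 1 else 0 : ℝ) -
      1 / ((p : ℝ) + 1) * (fundDiscrFinset X).card| ≤ 98 * √X * (4 * √(1 / p)) := by
  have h := abs_fdCount_dvd_sub_fdCount_mul_le hp.prime.squarefree hX
  rw [sigma_one_prime hp, ArithmeticFunction.cardDistinctFactors_apply_prime hp] at h
  rw [sum_fundDiscrFinset_ite, card_fundDiscrFinset]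
  push_cast at h
  linarith

theorem abs_sum_ite_dvd_mul_ite_dvd_sub_le {p q : ℕ} (hp : p.Prime) (hq : q.Prime) (hpq : p ≠ q)
    {X : ℝ} (hX : 1 ≤ X) :
    |∑ D ∈ fundDiscrFinset X,
        (if (p : ℤ) ∣ D then 1 else 0 : ℝ) * (if (q : ℤ) ∣ D then 1 else 0) -
      1 / ((p : ℝ) + 1) * (1 / ((q : ℝ) + 1)) * (fundDiscrFinset X).card| ≤
      98 * √X * (4 * √(1 / p) * (4 * √(1 / q))) := by
  have hcop : p.Coprime q := (Nat.coprime_primes hp hq).2 hpq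
  have h := abs_fdCount_dvd_sub_fdCount_mul_le
    (Nat.squarefree_mul_iff.2 ⟨hcop, hp.prime.squarefree, hq.prime.squarefree⟩) hX
  rw [sigma_one_prime_mul hp hcop, sigma_one_prime hq, cardDistinctFactors_prime_mul hp hcop,
    ArithmeticFunction.cardDistinctFactors_apply_prime hq, Nat.cast_mul (α := ℝ) p q,
    Nat.cast_mul (α := ℝ) (p + 1), ← one_div_mul_one_div, ← one_div_mul_one_div,
    Real.sqrt_mul (by positivity), Nat.cast_succ, Nat.cast_succ] at h
  simp only [ite_dvd_mul_ite_dvd hcop]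
  rw [sum_fundDiscrFinset_ite, card_fundDiscrFinset]
  linarith

theorem one_div_add_one_le_four_mul_sqrt {p : ℕ} (hp : p.Prime) :
    1 / ((p : ℝ) + 1) ≤ 4 * √(1 / p) := by
  have h := one_div_sigma_one_le_sqrt hp.ne_zero
  rw [sigma_one_prime hp, Nat.cast_succ] at h
  linarith [Real.sqrt_nonneg (1 / (p : ℝ))]

theorem abs_sum_omegaY_sub_sq_sub_le {X Y : ℝ} (hX : 1 ≤ X) (hY : 1 ≤ Y) :
    |∑ D ∈ fundDiscrFinset X, ((omegaY Y D : ℝ) - primeSum Y (fun p => 1 / ((p : ℝ) + 1))) ^ 2 -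
      fdCount (fun _ => True) X *
        primeSum Y (fun p => 1 / ((p : ℝ) + 1) * (1 - 1 / ((p : ℝ) + 1)))| ≤
      19600 * √X * Y := by
  have hprime {p : ℕ} (hp : p ∈ Nat.primesLE ⌊Y⌋₊) : p.Prime := (Nat.mem_primesLE.1 hp).2
  have hvar := abs_sum_sum_sub_sum_sq_sub_le (P := Nat.primesLE ⌊Y⌋₊) (F := fundDiscrFinset X)
    (I := fun p D => if (p : ℤ) ∣ D then 1 else 0) (f := fun p => 1 / ((p : ℝ) + 1))
    (s := fun p => 4 * √(1 / p)) (M := 98 * √X) (by positivity)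
    (fun p _ D _ => by split_ifs <;> norm_num) (fun p _ => by positivity)
    (fun p _ => (div_le_one (by positivity)).2 (by linarith [p.cast_nonneg (α := ℝ)]))
    (fun p hp => one_div_add_one_le_four_mul_sqrt (hprime hp))
    (fun p hp => abs_sum_ite_prime_dvd_sub_le (hprime hp) hX)
    (fun p hp q hq hpq => abs_sum_ite_dvd_mul_ite_dvd_sub_le (hprime hp) (hprime hq) hpq hX)
  have hT := sum_primesLE_sqrt_one_div_le (by linarith : 0 ≤ Y)
  simp only [omegaY_eq_sum, primeSum_eq_sum, ← card_fundDiscrFinset, ← Finset.mul_sum] at hvar ⊢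
  calc _ ≤ 3 * (98 * √X) * (4 * ∑ p ∈ Nat.primesLE ⌊Y⌋₊, √(1 / (p : ℝ))) ^ 2 +
        98 * √X * (4 * ∑ p ∈ Nat.primesLE ⌊Y⌋₊, √(1 / (p : ℝ))) := hvar
    _ ≤ 3 * (98 * √X) * (4 * (2 * √Y)) ^ 2 + 98 * √X * (4 * (2 * √Y)) := by gcongr
    _ = 98 * √X * (192 * Y + 8 * √Y) := by
        rw [mul_pow, mul_pow, Real.sq_sqrt (by linarith)]
        ring
    _ ≤ 98 * √X * (192 * Y + 8 * Y) := by
        gcongr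
        exact Real.sqrt_le_self_iff.2 (Or.inr hY)
    _ = 19600 * √X * Y := by ring

end Application

theorem statement_10_general :
    ∃ C : ℝ, 0 < C ∧ ∀ X : ℝ, 3 ≤ X → ∀ Y : ℝ, 1 ≤ Y →
      |(1 / (fdCount (fun _ => True) X : ℝ)) *
          (∑ᶠ D ∈ {D : ℤ | IsFundDiscr D ∧ |(D : ℝ)| ≤ X},
            ((omegaY Y D : ℝ) - primeSum Y (fun p => 1 / ((p : ℝ) + 1))) ^ 2) -
        primeSum Y (fun p => (1 / ((p : ℝ) + 1)) * (1 - 1 / ((p : ℝ) + 1)))| ≤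
        C * Y * X ^ (-(1 : ℝ) / 2) := by
  refine ⟨19600 * 9608, by norm_num, fun X hX Y hY => ?_⟩
  have hX0 : 0 < X := by linarith
  have hN : 0 < (fdCount (fun _ => True) X : ℝ) := mod_cast one_le_fdCount hX
  have hset : {D : ℤ | IsFundDiscr D ∧ |(D : ℝ)| ≤ X} = fundDiscrFinset X :=
    Set.ext fun _ => mem_fundDiscrFinset.symm
  have hpow : √X = X * X ^ (-(1 : ℝ) / 2) := by
    rw [Real.sqrt_eq_rpow, ← Real.rpow_one_add' hX0.le (by norm_num)]
    norm_num
  rw [hset, finsum_mem_coe_finset, one_div_mul_eq_div, div_sub' hN.ne', abs_div, abs_of_pos hN,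
    div_le_iff₀ hN]
  calc _ ≤ 19600 * √X * Y := abs_sum_omegaY_sub_sq_sub_le (by linarith) hY
    _ = 19600 * Y * X ^ (-(1 : ℝ) / 2) * X := by rw [hpow]; ring
    _ ≤ 19600 * Y * X ^ (-(1 : ℝ) / 2) * (9608 * fdCount (fun _ => True) X) := by
        gcongr
        exact le_mul_fdCount hX
    _ = _ := by ring

/-- Variance of `ω_Y` over fundamental discriminants: with `μ = ∑_{p ≤ Y} 1/(p+1)`, for all
`ε, δ > 0` there is `C > 0` such that for `X ≥ 3` and `3 ≤ Y ≤ X^{1/2-δ}`,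
`|(1/N(X)) ∑_{|D| ≤ X} (ω_Y(D) - μ)² - ∑_{p ≤ Y} (1/(p+1))(1 - 1/(p+1))| ≤ C Y X^{-1/2+ε}`. -/
theorem statement_10 (ε δ : ℝ) (hε : 0 < ε) (hδ : 0 < δ) :
    ∃ C : ℝ, 0 < C ∧
      ∀ X : ℝ, 3 ≤ X → ∀ Y : ℝ, 3 ≤ Y → Y ≤ X ^ ((1 : ℝ) / 2 - δ) →
        |(1 / (fdCount (fun _ => True) X : ℝ)) *
            (∑ᶠ D ∈ {D : ℤ | IsFundDiscr D ∧ |(D : ℝ)| ≤ X},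
              ((omegaY Y D : ℝ) - primeSum Y (fun p => 1 / ((p : ℝ) + 1))) ^ 2) -
          primeSum Y (fun p => (1 / ((p : ℝ) + 1)) * (1 - 1 / ((p : ℝ) + 1)))| ≤
          C * Y * X ^ (-(1 : ℝ) / 2 + ε) := by
  obtain ⟨C, hC, h⟩ := statement_10_general
  refine ⟨C, hC, fun X hX Y hY _ => (h X hX Y (by linarith)).trans ?_⟩
  gcongr <;> linarith
end
end

section
/- Let c > 0 be an admissible exceptional-zero constant. For every ε > 0, 100% of fundamental discriminants D satisfy: ∑_{χ ∈ V} (log L(1,χ))² ≤ #V · (log log |D|)^{2 − log 2 + ε}, where V is the set of quadratic Dirichlet characters χ modulo |D| such that L(s,χ) has no real zero β with β > 1 − c/log |D|. (That is, there exists c > 0 such that for every ε > 0 the stated bound holds for 100% of fundamental discriminants.) -/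
/-!
Every quadratic character modulo `|D|` is, up to Euler factors at `2` and at the primes dividing
`D`, the product of a character modulo `8` with a Jacobi symbol `(· | e)`, `e ∣ D`. The Euler
factors change `log L(1, χ)` by `O(∑_{p ∣ D} 1 / p) = O(log log log |D|)`, so only the twisted
Jacobi symbols matter. For those, multiply a truncation of the series for `L(1, χ)` by the mollifier
`∑ μ(a) χ(a) / a` over smooth `a`. Unless `e` is exceptional, the product lies within `1 / 2` of
`1`; hence `log L(1, χ)` is comparable with the logarithm of the Euler product over
`p ≤ (log e) ^ 4`, which is `O(log log log e)`. A mean square estimate for sums of Jacobi symbols,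
whose off-diagonal terms are incomplete sums of non-principal characters, shows that `∑ 1 / e` over
the exceptional `e` converges. Since a proportion `O(1 / e)` of the `D` is divisible by `e`, only a
small proportion has a large exceptional divisor, and all the other `D` satisfy
`log L(1, χ) = O(log log log |D|)` for every quadratic `χ` modulo `|D|`.
-/

open Filter Topology NumberField

noncomputable section

section CharacterSums

open Finset ZMod

variable {q : ℕ} [NeZero q]

lemma sum_ite_zmod_val_lt {M : Type*} [AddCommMonoid M] (g : ZMod q → M) {L : ℕ} (hL : L ≤ q) :
    ∑ x : ZMod q, (if x.val < L then g x else 0) = ∑ t ∈ range L, g t := by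
  rw [← sum_filter]
  refine sum_nbij' ZMod.val (fun t => (t : ZMod q)) (fun x hx => by simpa using hx)
    (fun t ht => ?_) (fun x _ => by simp) (fun t ht => ?_) (fun x _ => by simp)
  all_goals have ht' := mem_range.mp ht
  · simpa [ZMod.val_cast_of_lt (ht'.trans_le hL)] using ht'
  · exact ZMod.val_cast_of_lt (ht'.trans_le hL)

lemma sum_range_natCast_zmod {M : Type*} [AddCommMonoid M] (g : ZMod q → M) :
    ∑ t ∈ range q, g t = ∑ x, g x := by
  simp [← sum_ite_zmod_val_lt g le_rfl, ZMod.val_lt]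

theorem sum_norm_dft_sq (Φ : ZMod q → ℂ) :
    ∑ k, ‖𝓕 Φ k‖ ^ 2 = q * ∑ j, ‖Φ j‖ ^ 2 := by
  have conj_dft (k : ZMod q) : (starRingEnd ℂ) (𝓕 Φ k) =
      ∑ j, stdAddChar (-(k * -j)) * (starRingEnd ℂ) (Φ j) := by
    simp_rw [dft_apply, map_sum, smul_eq_mul, map_mul, ← AddChar.map_neg_eq_conj]
    simp [mul_comm]
  suffices h : ∑ k, 𝓕 Φ k * (starRingEnd ℂ) (𝓕 Φ k) = q * ∑ j, Φ j * (starRingEnd ℂ) (Φ j) by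
    simp only [Complex.mul_conj'] at h
    exact_mod_cast h
  calc ∑ k, 𝓕 Φ k * (starRingEnd ℂ) (𝓕 Φ k)
      = ∑ j, (∑ k, stdAddChar (-(k * -j)) • 𝓕 Φ k) * (starRingEnd ℂ) (Φ j) := by
        simp_rw [conj_dft, mul_sum, sum_mul, smul_eq_mul]
        rw [sum_comm]
        exact sum_congr rfl fun _ _ => sum_congr rfl fun _ _ => by ring
    _ = ∑ j, (q * Φ j) * (starRingEnd ℂ) (Φ j) := by
        simp_rw [← dft_apply, dft_dft, neg_neg, smul_eq_mul]
    _ = _ := by simp_rw [mul_sum, mul_assoc]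

theorem norm_gaussSum_sq_of_isPrimitive {χ : DirichletCharacter ℂ q} (hχ : χ.IsPrimitive) :
    ‖gaussSum χ stdAddChar‖ ^ 2 = q := by
  have hnorm (x : ZMod q) : ‖χ⁻¹ x‖ = ‖χ x‖ := by
    rw [MulChar.inv_apply_eq_inv', norm_inv]
    by_cases hx : IsUnit x
    · obtain ⟨u, rfl⟩ := hx
      simp [χ.unit_norm_eq_one u]
    · simp [MulChar.map_nonunit χ hx]
  have hparseval := sum_norm_dft_sq (q := q) χ
  simp_rw [hχ.fourierTransform_eq_inv_mul_gaussSum, norm_mul, mul_pow, hnorm,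
    ← sum_mul] at hparseval
  have hneg : ∑ x, ‖χ (-x)‖ ^ 2 = ∑ x, ‖χ x‖ ^ 2 :=
    Equiv.sum_comp (Equiv.neg (ZMod q)) fun x => ‖χ x‖ ^ 2
  rw [hneg, mul_comm] at hparseval
  refine mul_right_cancel₀ (ne_of_gt ?_) hparseval
  exact sum_pos' (fun _ _ => by positivity) ⟨1, mem_univ _, by simp⟩

lemma norm_dft_sq_le_of_isPrimitive {χ : DirichletCharacter ℂ q} (hχ : χ.IsPrimitive)
    (k : ZMod q) : ‖𝓕 χ k‖ ^ 2 ≤ q := by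
  rw [hχ.fourierTransform_eq_inv_mul_gaussSum, norm_mul, mul_pow,
    norm_gaussSum_sq_of_isPrimitive hχ]
  exact mul_le_of_le_one_left (by positivity)
    (pow_le_one₀ (norm_nonneg _) (DirichletCharacter.norm_le_one _ _))

lemma sum_norm_sum_stdAddChar_sq {h : ℕ} (hq : h ≤ q) :
    ∑ k : ZMod q, ‖∑ y ∈ range h, stdAddChar ((y : ZMod q) * k)‖ ^ 2 = q * h := by
  have hdft (k : ZMod q) : 𝓕 (fun x : ZMod q => if x.val < h then (1 : ℂ) else 0) (-k) =
      ∑ y ∈ range h, stdAddChar ((y : ZMod q) * k) := by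
    rw [dft_apply, ← sum_ite_zmod_val_lt (fun x => stdAddChar (x * k)) hq]
    simp
  simp_rw [← hdft]
  refine (Equiv.sum_comp (Equiv.neg (ZMod q)) fun k => ‖𝓕 _ k‖ ^ 2).trans ?_
  rw [sum_norm_dft_sq]
  congr 1
  simp_rw [apply_ite norm, ite_pow]
  simpa using sum_ite_zmod_val_lt (q := q) (fun _ => (1 : ℝ)) hq

lemma sum_norm_sum_range_char_sq_le {χ : DirichletCharacter ℂ q} (hχ : χ.IsPrimitive) {h : ℕ}
    (hq : h ≤ q) : ∑ s : ZMod q, ‖∑ y ∈ range h, χ (s + y)‖ ^ 2 ≤ q * h := by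
  have hdft (k : ZMod q) : 𝓕 (fun s : ZMod q => ∑ y ∈ range h, χ (s + y)) k =
      (∑ y ∈ range h, stdAddChar ((y : ZMod q) * k)) * 𝓕 χ k := by
    rw [sum_mul]
    simp_rw [dft_apply, smul_eq_mul, mul_sum]
    rw [sum_comm]
    refine sum_congr rfl fun y _ => Fintype.sum_equiv (Equiv.addRight (y : ZMod q)) _ _ fun s => ?_
    rw [← mul_assoc, ← AddChar.map_add_eq_mul, Equiv.coe_addRight]
    ring_nf
  have hparseval := sum_norm_dft_sq (fun s : ZMod q => ∑ y ∈ range h, χ (s + y))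
  have hq0 : (0 : ℝ) < q := by exact_mod_cast NeZero.pos q
  refine le_of_mul_le_mul_left ?_ hq0
  rw [← hparseval]
  simp_rw [hdft, norm_mul, mul_pow]
  calc _ ≤ ∑ k : ZMod q, ‖∑ y ∈ range h, stdAddChar ((y : ZMod q) * k)‖ ^ 2 * q :=
        sum_le_sum fun k _ => by gcongr; exact norm_dft_sq_le_of_isPrimitive hχ k
    _ = q * (q * h) := by rw [← sum_mul, sum_norm_sum_stdAddChar_sq hq, mul_comm]

lemma norm_sum_range_shift_sub_le (F : ℕ → ℂ) (hF : ∀ n, ‖F n‖ ≤ 1) (L y : ℕ) :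
    ‖∑ t ∈ range L, F (t + y) - ∑ t ∈ range L, F t‖ ≤ 2 * y := by
  induction y with
  | zero => simp
  | succ y ih =>
    have htele : ∑ t ∈ range L, F (t + (y + 1)) - ∑ t ∈ range L, F (t + y) = F (L + y) - F y := by
      simpa [← sum_sub_distrib, add_right_comm, add_assoc] using
        sum_range_sub (fun t => F (t + y)) L
    have hstep := norm_sub_le (F (L + y)) (F y)
    rw [← htele] at hstep
    have htri := norm_sub_le_norm_sub_add_norm_sub (∑ t ∈ range L, F (t + (y + 1)))
      (∑ t ∈ range L, F (t + y)) (∑ t ∈ range L, F t)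
    push_cast
    linarith [hF (L + y), hF y]

-- Average over the shifts `t ↦ t + y` with `y < h`, each of which moves the sum by at most `2 y`.
lemma mul_norm_sum_range_char_le {χ : DirichletCharacter ℂ q} (hχ : χ.IsPrimitive) (s : ZMod q)
    {L h : ℕ} (hL : L ≤ q) (hq : h ≤ q) :
    h * ‖∑ t ∈ range L, χ (s + t)‖ ≤ h * h + √L * √(q * h) := by
  set F : ℕ → ℂ := fun t => χ (s + t)
  have hdouble : ‖∑ y ∈ range h, ∑ t ∈ range L, F (t + y)‖ ≤ √L * √(q * h) := by
    rw [sum_comm]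
    calc ‖∑ t ∈ range L, ∑ y ∈ range h, F (t + y)‖
        ≤ ∑ t ∈ range L, 1 * ‖∑ y ∈ range h, F (t + y)‖ := by
          simpa using norm_sum_le (range L) fun t => ∑ y ∈ range h, F (t + y)
      _ ≤ √(∑ t ∈ range L, 1 ^ 2) * √(∑ t ∈ range L, ‖∑ y ∈ range h, F (t + y)‖ ^ 2) :=
          Real.sum_mul_le_sqrt_mul_sqrt _ _ _
      _ ≤ √L * √(q * h) := by
          gcongr
          · simp
          refine le_trans ?_ (sum_norm_sum_range_char_sq_le hχ hq)
          rw [← Equiv.sum_comp (Equiv.addLeft s)]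
          have hsub := sum_ite_zmod_val_lt
            (fun x : ZMod q => ‖∑ y ∈ range h, χ (s + x + y)‖ ^ 2) hL
          simp only [F, Nat.cast_add, ← add_assoc] at hsub ⊢
          rw [← hsub]
          exact sum_le_sum fun x _ => by
            split_ifs
            · rfl
            · positivity
  have hshift : ‖∑ y ∈ range h, (∑ t ∈ range L, F (t + y) - ∑ t ∈ range L, F t)‖ ≤ h * h := by
    calc _ ≤ ∑ y ∈ range h, (2 * y : ℝ) := norm_sum_le_of_le _ fun y _ =>
          norm_sum_range_shift_sub_le F (fun _ => χ.norm_le_one _) L y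
      _ = ((∑ y ∈ range h, y) * 2 : ℕ) := by push_cast; rw [sum_mul]; simp only [mul_comm]
      _ ≤ h * h := by rw [sum_range_id_mul_two]; exact_mod_cast Nat.mul_le_mul_left h (h.sub_le 1)
  rw [sum_sub_distrib, sum_const, card_range, nsmul_eq_mul, norm_sub_rev] at hshift
  have htri := norm_sub_norm_le (h * ∑ t ∈ range L, F t) (∑ y ∈ range h, ∑ t ∈ range L, F (t + y))
  rw [norm_mul, Complex.norm_natCast] at htri
  linarith

lemma norm_sum_range_char_le_of_le {χ : DirichletCharacter ℂ q} (hχ : χ.IsPrimitive)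
    (s : ZMod q) {L h : ℕ} (hL : L ≤ q) (hh : 0 < h) :
    ‖∑ t ∈ range L, χ (s + t)‖ ≤ h + q / √h := by
  rcases le_or_gt h q with hq | hq
  · have hh' : (0 : ℝ) < h := by exact_mod_cast hh
    refine le_of_mul_le_mul_left ((mul_norm_sum_range_char_le hχ s hL hq).trans ?_) hh'
    calc h * h + √L * √(q * h) ≤ h * h + √q * √(q * h) := by gcongr
      _ = h * (h + q / √h) := by
          rw [Real.sqrt_mul (by positivity), ← mul_assoc, Real.mul_self_sqrt (by positivity),
            mul_add, mul_div_assoc', mul_comm (h : ℝ) (q : ℝ), mul_div_assoc, Real.div_sqrt]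
  · calc ‖∑ t ∈ range L, χ (s + t)‖ ≤ ∑ _t ∈ range L, (1 : ℝ) :=
          norm_sum_le_of_le _ fun _ _ => χ.norm_le_one _
      _ ≤ h := by simpa using hL.trans hq.le
      _ ≤ h + q / √h := le_add_of_nonneg_right (by positivity)

lemma sum_range_char_mod {χ : DirichletCharacter ℂ q} (hχ : χ ≠ 1) (s : ZMod q) (L : ℕ) :
    ∑ t ∈ range L, χ (s + t) = ∑ t ∈ range (L % q), χ (s + t) := by
  have hperiod : ∑ t ∈ range q, χ (s + t) = 0 :=
    (sum_range_natCast_zmod fun x => χ (s + x)).trans <|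
      (Equiv.sum_comp (Equiv.addLeft s) χ).trans (MulChar.sum_eq_zero_of_ne_one hχ)
  induction L using Nat.strong_induction_on with
  | _ L ih =>
    rcases lt_or_ge L q with hL | hL
    · rw [Nat.mod_eq_of_lt hL]
    · obtain ⟨m, rfl⟩ := Nat.exists_eq_add_of_le hL
      rw [sum_range_add, hperiod, zero_add, Nat.add_mod_left, ← ih m (by linarith [NeZero.pos q])]
      simp

theorem norm_sum_Ico_char_le_of_isPrimitive {χ : DirichletCharacter ℂ q} (hχ : χ.IsPrimitive)
    (hχ1 : χ ≠ 1) (a b : ℕ) {h : ℕ} (hh : 0 < h) :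
    ‖∑ n ∈ Ico a b, χ n‖ ≤ h + q / √h := by
  rw [sum_Ico_eq_sum_range]
  simp only [Nat.cast_add]
  rw [sum_range_char_mod hχ1]
  exact norm_sum_range_char_le_of_le hχ a (Nat.mod_lt _ (NeZero.pos q)).le hh

end CharacterSums

section IncompleteSums

open Finset

lemma sum_Ico_filter_dvd {M : Type*} [AddCommMonoid M] (F : ℕ → M) {e : ℕ} (he : 0 < e) (a b : ℕ) :
    ∑ n ∈ Ico a b with e ∣ n, F n = ∑ m ∈ Ico (a ⌈/⌉ e) (b ⌈/⌉ e), F (e * m) := by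
  have hmem (m : ℕ) : m ∈ Ico (a ⌈/⌉ e) (b ⌈/⌉ e) ↔ e * m ∈ Ico a b := by
    simp only [mem_Ico, ceilDiv_le_iff_le_mul he, ← not_le]
  refine (sum_nbij (e * ·) (fun m hm => ?_) (fun m _ n _ hmn => ?_) (fun n hn => ?_)
    fun _ _ => rfl).symm
  · exact mem_filter.mpr ⟨(hmem m).mp hm, dvd_mul_right e m⟩
  · exact Nat.eq_of_mul_eq_mul_left he hmn
  · obtain ⟨hn, m, rfl⟩ := mem_filter.mp hn
    exact ⟨m, (hmem m).mpr hn, rfl⟩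

lemma sum_divisors_filter_dvd_moebius {q : ℕ} (hq : q ≠ 0) (n : ℕ) :
    ∑ e ∈ q.divisors with e ∣ n, ArithmeticFunction.moebius e = if n.Coprime q then 1 else 0 := by
  have hgcd : {e ∈ q.divisors | e ∣ n} = (n.gcd q).divisors := by
    ext e
    simp [Nat.dvd_gcd_iff, hq, and_comm]
  rw [hgcd, ← ArithmeticFunction.coe_zeta_mul_apply, ArithmeticFunction.coe_zeta_mul_moebius,
    ArithmeticFunction.one_apply]

variable {q : ℕ} [NeZero q]

lemma char_eq_sum_moebius_mul_primitiveCharacter (χ : DirichletCharacter ℂ q) (n : ℕ) :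
    χ n = ∑ e ∈ q.divisors, if e ∣ n then ArithmeticFunction.moebius e * χ.primitiveCharacter n
      else 0 := by
  rw [← sum_filter, ← sum_mul, ← Int.cast_sum, sum_divisors_filter_dvd_moebius (NeZero.ne q)]
  split_ifs with h
  · simpa using (χ.primitiveCharacter_apply_of_isCoprime (Nat.isCoprime_iff_coprime.mpr h)).symm
  · rw [χ.map_nonunit (by rwa [ZMod.isUnit_iff_coprime])]
    simp

theorem norm_sum_Ico_char_le {χ : DirichletCharacter ℂ q} (hχ : χ ≠ 1) (a b : ℕ) {h : ℕ}
    (hh : 0 < h) : ‖∑ n ∈ Ico a b, χ n‖ ≤ #q.divisors * (h + q / √h) := by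
  have : NeZero χ.conductor := ⟨χ.conductor_ne_zero⟩
  have hprim1 : χ.primitiveCharacter ≠ 1 := fun h1 => hχ <| by
    rw [← χ.changeLevel_primitiveCharacter, h1, map_one]
  have hcond : (χ.conductor : ℝ) ≤ q := by
    exact_mod_cast Nat.le_of_dvd (NeZero.pos q) χ.conductor_dvd_level
  have hterm : ∀ e ∈ q.divisors, ‖∑ n ∈ Ico a b, (if e ∣ n then
      ArithmeticFunction.moebius e * χ.primitiveCharacter n else 0 : ℂ)‖ ≤ h + q / √h := by
    intro e he
    rw [← sum_filter, sum_Ico_filter_dvd _ (Nat.pos_of_mem_divisors he)]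
    simp_rw [Nat.cast_mul, map_mul, ← mul_assoc]
    rw [← mul_sum, norm_mul, norm_mul]
    have hmoebius : ‖(ArithmeticFunction.moebius e : ℂ)‖ ≤ 1 := by
      rw [Complex.norm_intCast]
      exact_mod_cast ArithmeticFunction.abs_moebius_le_one
    have hprim := norm_sum_Ico_char_le_of_isPrimitive χ.primitiveCharacter_isPrimitive hprim1
      (a ⌈/⌉ e) (b ⌈/⌉ e) hh
    calc _ ≤ 1 * 1 * (h + χ.conductor / √h) := by
          gcongr
          exact DirichletCharacter.norm_le_one _ _
      _ ≤ h + q / √h := by rw [one_mul, one_mul]; gcongr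
  simp_rw [char_eq_sum_moebius_mul_primitiveCharacter χ]
  rw [sum_comm]
  exact (norm_sum_le_of_le _ hterm).trans_eq (by rw [sum_const, nsmul_eq_mul])

end IncompleteSums

section JacobiCharacter

open NumberTheorySymbols

lemma abs_jacobiSym_le_one (a : ℤ) (b : ℕ) : |(J(a | b) : ℝ)| ≤ 1 := by
  rcases jacobiSym.trichotomy a b with h | h | h <;> simp [h]

lemma exists_prime_odd_factorization {k : ℕ} (hk0 : k ≠ 0) (hk : ¬IsSquare k) :
    ∃ p, p.Prime ∧ Odd (k.factorization p) := by
  by_contra! heven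
  refine hk ?_
  rw [← Nat.prod_factorization_pow_eq_self hk0]
  refine Finset.isSquare_prod _ fun p hp => Even.isSquare_pow ?_ p
  exact Nat.not_odd_iff_even.mp (heven p (Nat.prime_of_mem_primeFactors hp))

lemma exists_jacobiSym_eq_neg_one {k : ℕ} (hk : Odd k) (hsq : ¬IsSquare k) :
    ∃ d : ℕ, Odd d ∧ J(k | d) = -1 := by
  obtain ⟨p, hp, hodd⟩ := exists_prime_odd_factorization hk.pos.ne' hsq
  obtain ⟨e, he⟩ : ∃ e, e = k.factorization p := ⟨_, rfl⟩
  obtain ⟨m, hm⟩ := Nat.ordProj_dvd k p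
  have hpm : ¬p ∣ m := by
    have := Nat.not_dvd_ordCompl hp hk.pos.ne'
    rwa [Nat.div_eq_of_eq_mul_right (pow_pos hp.pos _) hm] at this
  rw [← he] at hodd hm
  have hp2 : Odd p := hp.odd_of_ne_two <| by
    rintro rfl
    rw [hm, Nat.odd_mul, Nat.odd_pow_iff hodd.pos.ne'] at hk
    exact absurd hk.1 (by decide)
  have := Fact.mk hp
  have : NeZero m := ⟨by rintro rfl; simp at hpm⟩
  obtain ⟨a, ha⟩ := FiniteField.exists_nonsquare (F := ZMod p)
    (by rw [ZMod.ringChar_zmod_n]; rintro rfl; exact absurd hp2 (by decide))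
  have hcop : (4 * m).Coprime p :=
    Nat.Coprime.mul_left (Nat.Coprime.pow_left 2 (Nat.coprime_two_left.mpr hp2))
      ((Nat.Prime.coprime_iff_not_dvd hp).mpr hpm).symm
  obtain ⟨d, hd1, hdp⟩ := Nat.chineseRemainder hcop 1 a.val
  have hd4 : d % 4 = 1 := hd1.of_mul_right m
  have hdodd : Odd d := Nat.odd_iff.mpr (by omega)
  have hdm : J(d | m) = 1 := by
    rw [jacobiSym.mod_left' (Int.natCast_modEq_iff.mpr (hd1.of_mul_left 4)), Nat.cast_one,
      jacobiSym.one_left]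
  have hdp : J(d | p) = -1 := by
    rw [jacobiSym.mod_left' (Int.natCast_modEq_iff.mpr hdp), ← jacobiSym.legendreSym.to_jacobiSym,
      legendreSym.eq_neg_one_iff]
    simpa using ha
  refine ⟨d, hdodd, ?_⟩
  rw [jacobiSym.quadratic_reciprocity_one_mod_four' hk hd4, hm, jacobiSym.mul_right,
    jacobiSym.pow_right, hdm, hdp, hodd.neg_one_pow, mul_one]

open Classical in
/-- The quadratic character `d ↦ J(k | d)` modulo `4 * k`, extended by zero to the `d` that are
not coprime to `4 * k`. -/
def jacobiChar (k : ℕ) [NeZero k] : DirichletCharacter ℂ (4 * k) where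
  toFun x := if IsUnit x then (J(k | x.val) : ℂ) else 0
  map_one' := by
    have hk := NeZero.pos k
    have : Fact (1 < 4 * k) := ⟨by omega⟩
    simp [ZMod.val_one]
  map_mul' x y := by
    by_cases hxy : IsUnit (x * y)
    · obtain ⟨hx, hy⟩ := IsUnit.mul_iff.mp hxy
      have hodd {z : ZMod (4 * k)} (hz : IsUnit z) : Odd z.val := by
        rw [← ZMod.natCast_zmod_val z, ZMod.isUnit_iff_coprime] at hz
        exact Nat.coprime_two_right.mp (hz.coprime_dvd_right ⟨2 * k, by ring⟩)
      have : NeZero x.val := ⟨(hodd hx).pos.ne'⟩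
      have : NeZero y.val := ⟨(hodd hy).pos.ne'⟩
      have hval := jacobiSym.mod_right' k ((hodd hx).mul (hodd hy))
      rw [← ZMod.val_mul, jacobiSym.mul_right] at hval
      simp [hx, hy, ← hval]
    · rcases not_and_or.mp (mt IsUnit.mul_iff.mpr hxy) with h | h <;> simp [h]
  map_nonunit' x hx := by simp [hx]

lemma jacobiChar_natCast (k : ℕ) [NeZero k] (d : ℕ) :
    jacobiChar k (d : ZMod (4 * k)) = if Odd d then (J(k | d) : ℂ) else 0 := by
  change (if IsUnit (d : ZMod (4 * k)) then (J(k | (d : ZMod (4 * k)).val) : ℂ) else 0) = _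
  have hcop : d.Coprime (4 * k) ↔ Odd d ∧ k.Coprime d := by
    rw [Nat.coprime_mul_iff_right, Nat.coprime_comm (m := k), show 4 = 2 ^ 2 by rfl,
      Nat.coprime_pow_right_iff two_pos, Nat.coprime_two_right]
  simp_rw [ZMod.isUnit_iff_coprime, hcop, ZMod.val_natCast]
  by_cases hd : Odd d
  · have : NeZero d := ⟨hd.pos.ne'⟩
    rw [← jacobiSym.mod_right' k hd]
    by_cases hkd : k.Coprime d
    · simp [hd, hkd]
    · have hzero : J(k | d) = 0 := jacobiSym.eq_zero_iff_not_coprime.mpr (by simpa using hkd)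
      simp [hd, hkd, hzero]
  · simp [hd]

lemma jacobiChar_ne_one {k : ℕ} [NeZero k] (hk : Odd k) (hsq : ¬IsSquare k) :
    jacobiChar k ≠ 1 := by
  obtain ⟨d, hd, hJ⟩ := exists_jacobiSym_eq_neg_one hk hsq
  have hval := jacobiChar_natCast k d
  rw [if_pos hd, hJ] at hval
  intro h1
  have hunit : IsUnit (d : ZMod (4 * k)) := by
    by_contra hnu
    rw [MulChar.map_nonunit _ hnu] at hval
    norm_num at hval
  rw [h1, MulChar.one_apply hunit] at hval
  norm_num at hval

end JacobiCharacter

section DivisorBound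

open Finset

lemma add_one_le_max_mul_rpow {ε : ℝ} (hε : 0 < ε) {p : ℕ} (hp : 2 ≤ p) (v : ℕ) :
    (v + 1 : ℝ) ≤ max 1 (ε * Real.log 2)⁻¹ * ((p : ℝ) ^ v) ^ ε := by
  have hlog := Real.log_pos one_lt_two
  set K := max 1 (ε * Real.log 2)⁻¹
  have hK : 1 ≤ K * (ε * Real.log 2) :=
    (inv_mul_cancel₀ (mul_pos hε hlog).ne').symm.trans_le <|
      mul_le_mul_of_nonneg_right (le_max_right _ _) (mul_pos hε hlog).le
  calc (v + 1 : ℝ) ≤ K * (ε * Real.log 2) * v + K := by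
        nlinarith [le_max_left 1 (ε * Real.log 2)⁻¹, (Nat.cast_nonneg v : (0 : ℝ) ≤ v)]
    _ = K * (Real.log 2 * (v * ε) + 1) := by ring
    _ ≤ K * 2 ^ (v * ε) := by
        rw [Real.rpow_def_of_pos two_pos]
        gcongr
        exact Real.add_one_le_exp _
    _ ≤ K * ((p : ℝ) ^ v) ^ ε := by
        rw [← Real.rpow_natCast, ← Real.rpow_mul (by positivity)]
        gcongr
        exact_mod_cast hp

lemma add_one_le_rpow_of_le {ε : ℝ} (hε : 0 < ε) {p : ℕ} (hp : 2 ^ ε⁻¹ ≤ (p : ℝ)) (v : ℕ) :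
    (v + 1 : ℝ) ≤ ((p : ℝ) ^ v) ^ ε :=
  calc (v + 1 : ℝ) ≤ 2 ^ v := by exact_mod_cast Nat.lt_two_pow_self
    _ = ((2 : ℝ) ^ ε⁻¹) ^ (v * ε) := by
        rw [← Real.rpow_natCast, ← Real.rpow_mul two_pos.le]
        congr 1
        field_simp
    _ ≤ (p : ℝ) ^ (v * ε) := by gcongr
    _ = ((p : ℝ) ^ v) ^ ε := by rw [← Real.rpow_natCast, ← Real.rpow_mul (by positivity)]

theorem exists_card_divisors_le_mul_rpow {ε : ℝ} (hε : 0 < ε) :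
    ∃ C : ℝ, 1 ≤ C ∧ ∀ n : ℕ, n ≠ 0 → (#n.divisors : ℝ) ≤ C * (n : ℝ) ^ ε := by
  set K := max 1 (ε * Real.log 2)⁻¹
  set P := ⌈(2 : ℝ) ^ ε⁻¹⌉₊
  have hK : 1 ≤ K := le_max_left _ _
  refine ⟨K ^ P, one_le_pow₀ hK, fun n hn => ?_⟩
  have hlocal : ∀ p ∈ n.primeFactors, (n.factorization p + 1 : ℝ) ≤
      (if p < P then K else 1) * ((p : ℝ) ^ n.factorization p) ^ ε := by
    intro p hp
    split_ifs with hlt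
    · exact add_one_le_max_mul_rpow hε (Nat.prime_of_mem_primeFactors hp).two_le _
    · rw [one_mul]
      exact add_one_le_rpow_of_le hε ((Nat.le_ceil _).trans (by exact_mod_cast not_lt.mp hlt)) _
  have hsmall : #{p ∈ n.primeFactors | p < P} ≤ P :=
    (card_le_card fun p hp => mem_range.mpr (mem_filter.mp hp).2).trans_eq (card_range P)
  calc (#n.divisors : ℝ) = ∏ p ∈ n.primeFactors, (n.factorization p + 1 : ℝ) := by
        rw [Nat.card_divisors hn]
        push_cast
        rfl
    _ ≤ ∏ p ∈ n.primeFactors, ((if p < P then K else 1) * ((p : ℝ) ^ n.factorization p) ^ ε) :=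
        prod_le_prod (fun _ _ => by positivity) hlocal
    _ = K ^ #{p ∈ n.primeFactors | p < P} * (n : ℝ) ^ ε := by
        rw [prod_mul_distrib, prod_ite, prod_const_one, mul_one, prod_const,
          Real.finsetProd_rpow _ _ fun _ _ => by positivity]
        congr 2
        exact_mod_cast Nat.prod_factorization_pow_eq_self hn
    _ ≤ K ^ P * (n : ℝ) ^ ε := by gcongr

theorem exists_norm_sum_range_char_le_rpow {ε : ℝ} (hε : 0 < ε) :
    ∃ C : ℝ, 0 < C ∧ ∀ (q : ℕ) [NeZero q] (χ : DirichletCharacter ℂ q), χ ≠ 1 → ∀ N : ℕ,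
      ‖∑ n ∈ range N, χ n‖ ≤ C * (q : ℝ) ^ (2 / 3 + ε) := by
  obtain ⟨C, hC1, hC⟩ := exists_card_divisors_le_mul_rpow hε
  refine ⟨C * 3, by positivity, fun q _ χ hχ N => ?_⟩
  have hq0 : (0 : ℝ) < q := by exact_mod_cast NeZero.pos q
  have hq1 : (1 : ℝ) ≤ (q : ℝ) ^ (2 / 3 : ℝ) :=
    Real.one_le_rpow (by exact_mod_cast NeZero.pos q) (by norm_num)
  set h := ⌈(q : ℝ) ^ (2 / 3 : ℝ)⌉₊
  have hh : h ≤ 2 * (q : ℝ) ^ (2 / 3 : ℝ) := by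
    linarith [Nat.ceil_lt_add_one (zero_le_one.trans hq1)]
  have hsqrt : (q : ℝ) ^ (1 / 3 : ℝ) ≤ √h := by
    refine Real.le_sqrt_of_sq_le ((Nat.le_ceil _).trans' (le_of_eq ?_))
    rw [← Real.rpow_natCast, ← Real.rpow_mul hq0.le]
    norm_num
  have hdiv : (q : ℝ) / (q : ℝ) ^ (1 / 3 : ℝ) = (q : ℝ) ^ (2 / 3 : ℝ) := by
    rw [← Real.rpow_one_sub' hq0.le (by norm_num)]
    norm_num
  calc _ ≤ (#q.divisors : ℝ) * (h + q / √h) := by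
        simpa only [Nat.Ico_zero_eq_range] using
          norm_sum_Ico_char_le hχ 0 N (Nat.ceil_pos.mpr (by positivity))
    _ ≤ C * (q : ℝ) ^ ε * (2 * (q : ℝ) ^ (2 / 3 : ℝ) + q / (q : ℝ) ^ (1 / 3 : ℝ)) := by
        gcongr
        exact hC q (NeZero.ne q)
    _ = C * 3 * (q : ℝ) ^ (2 / 3 + ε) := by
        rw [hdiv, Real.rpow_add hq0]
        ring

end DivisorBound

section MeanSquare

open Finset NumberTheorySymbols

lemma filter_mul_eq_subset_divisorsAntidiagonal (S : Finset (ℕ × ℕ)) {n : ℕ}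
    (hn : n ≠ 0) :
    {x ∈ S | x.1 * x.2 = n} ⊆ n.divisorsAntidiagonal := fun _ hx =>
  Nat.mem_divisorsAntidiagonal.mpr ⟨(mem_filter.mp hx).2, hn⟩

lemma card_filter_mul_eq_le (S : Finset (ℕ × ℕ)) {n : ℕ} (hn : n ≠ 0) :
    #{x ∈ S | x.1 * x.2 = n} ≤ #n.divisors := by
  refine (card_le_card (filter_mul_eq_subset_divisorsAntidiagonal S hn)).trans_eq ?_
  rw [← Nat.map_div_right_divisors, card_map]

lemma card_divisors_div_mul_le {C ε : ℝ}
    (hC : ∀ n : ℕ, n ≠ 0 → (#n.divisors : ℝ) ≤ C * (n : ℝ) ^ ε)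
    {n m k : ℕ} (hk : k ≠ 0) (hnm : n * m = k ^ 2) :
    (#n.divisors : ℝ) / n * (#m.divisors / m) ≤ C ^ 2 * (k : ℝ) ^ (2 * ε - 2) := by
  obtain ⟨hn, hm⟩ := mul_ne_zero_iff.mp (hnm ▸ pow_ne_zero 2 hk)
  have hnm' : (n : ℝ) * m = (k : ℝ) ^ (2 : ℝ) := by exact_mod_cast hnm
  have hk' : (0 : ℝ) < k := by positivity
  have hC0 : 0 ≤ C * (n : ℝ) ^ ε := (Nat.cast_nonneg _).trans (hC n hn)
  calc (#n.divisors : ℝ) / n * (#m.divisors / m)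
      ≤ C * (n : ℝ) ^ ε / n * (C * (m : ℝ) ^ ε / m) :=
        mul_le_mul (by gcongr; exact hC n hn) (by gcongr; exact hC m hm) (by positivity)
          (by positivity)
    _ = C ^ 2 * (((n : ℝ) * m) ^ ε / (n * m)) := by
        rw [Real.mul_rpow (by positivity) (by positivity)]
        field_simp
    _ = C ^ 2 * (k : ℝ) ^ (2 * ε - 2) := by
        rw [hnm', ← Real.rpow_mul hk'.le, ← Real.rpow_sub hk']

lemma sum_mul_eq_sq_card_divisors_le {C ε : ℝ}
    (hC : ∀ n : ℕ, n ≠ 0 → (#n.divisors : ℝ) ≤ C * (n : ℝ) ^ ε) (S : Finset ℕ)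
    {k : ℕ} (hk : k ≠ 0) :
    ∑ x ∈ S ×ˢ S with x.1 * x.2 = k ^ 2, (#x.1.divisors : ℝ) / x.1 * (#x.2.divisors / x.2) ≤
      C ^ 3 * (k : ℝ) ^ (4 * ε - 2) := by
  have hk' : (0 : ℝ) < k := by positivity
  have hk2 : k ^ 2 ≠ 0 := pow_ne_zero 2 hk
  have hcard : (#{x ∈ S ×ˢ S | x.1 * x.2 = k ^ 2} : ℝ) ≤ C * ((k ^ 2 : ℕ) : ℝ) ^ ε :=
    (Nat.cast_le.mpr (card_filter_mul_eq_le _ hk2)).trans (hC _ hk2)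
  calc _ ≤ #{x ∈ S ×ˢ S | x.1 * x.2 = k ^ 2} • (C ^ 2 * (k : ℝ) ^ (2 * ε - 2)) :=
        sum_le_card_nsmul _ _ _ fun x hx => card_divisors_div_mul_le hC hk (mem_filter.mp hx).2
    _ ≤ C * ((k ^ 2 : ℕ) : ℝ) ^ ε * (C ^ 2 * (k : ℝ) ^ (2 * ε - 2)) := by
        rw [nsmul_eq_mul]
        gcongr
    _ = C ^ 3 * (k : ℝ) ^ (4 * ε - 2) := by
        rw [show (4 * ε - 2 : ℝ) = 2 * ε + (2 * ε - 2) by ring, Real.rpow_add hk',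
          Real.rpow_mul hk'.le 2, Real.rpow_two, Nat.cast_pow]
        ring

theorem exists_sum_isSquare_card_divisors_le : ∃ C : ℝ, 0 < C ∧ ∀ (S : Finset ℕ) (y : ℕ), 0 < y →
    (∀ n ∈ S, y < n) → ∑ x ∈ S ×ˢ S with IsSquare (x.1 * x.2),
      (#x.1.divisors : ℝ) / x.1 * (#x.2.divisors / x.2) ≤ C / √y := by
  obtain ⟨C, hC1, hC⟩ := exists_card_divisors_le_mul_rpow (ε := 1 / 16) (by norm_num)
  have hsummable : Summable fun k : ℕ => (k : ℝ) ^ (-(5 / 4) : ℝ) :=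
    Real.summable_nat_rpow.mpr (by norm_num)
  set Z := ∑' k : ℕ, (k : ℝ) ^ (-(5 / 4) : ℝ)
  refine ⟨C ^ 3 * (Z + 1), by positivity, fun S y hy hS => ?_⟩
  set P := {x ∈ S ×ˢ S | IsSquare (x.1 * x.2)}
  set T : Finset ℕ := P.image fun x => (x.1 * x.2).sqrt
  have hfiber (k : ℕ) (hk : k ∈ T) :
      ∑ x ∈ P with (x.1 * x.2).sqrt = k, (#x.1.divisors : ℝ) / x.1 * (#x.2.divisors / x.2) ≤
        C ^ 3 / √y * (k : ℝ) ^ (-(5 / 4) : ℝ) := by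
    have hyk : y < k := by
      obtain ⟨x, hx, rfl⟩ := mem_image.mp hk
      have hxS := mem_product.mp (mem_filter.mp hx).1
      exact Nat.le_sqrt.mpr (Nat.mul_le_mul (hS _ hxS.1) (hS _ hxS.2))
    have hk0 : (0 : ℝ) < k := by exact_mod_cast hy.trans hyk
    have hsub : {x ∈ P | (x.1 * x.2).sqrt = k} ⊆ {x ∈ S ×ˢ S | x.1 * x.2 = k ^ 2} := by
      intro x hx
      obtain ⟨hxP, rfl⟩ := mem_filter.mp hx
      obtain ⟨hxS, s, hs⟩ := mem_filter.mp hxP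
      exact mem_filter.mpr ⟨hxS, by rw [hs, Nat.sqrt_eq, sq]⟩
    calc _ ≤ C ^ 3 * (k : ℝ) ^ (4 * (1 / 16) - 2 : ℝ) :=
          (sum_le_sum_of_subset_of_nonneg hsub fun _ _ _ => by positivity).trans
            (sum_mul_eq_sq_card_divisors_le hC S (by omega))
      _ = C ^ 3 / √k * (k : ℝ) ^ (-(5 / 4) : ℝ) := by
          rw [show (4 * (1 / 16) - 2 : ℝ) = -(1 / 2) + -(5 / 4) by norm_num, Real.rpow_add hk0,
            Real.rpow_neg hk0.le, ← Real.sqrt_eq_rpow]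
          ring
      _ ≤ C ^ 3 / √y * (k : ℝ) ^ (-(5 / 4) : ℝ) := by gcongr
  calc _ = ∑ k ∈ T, ∑ x ∈ P with (x.1 * x.2).sqrt = k,
        (#x.1.divisors : ℝ) / x.1 * (#x.2.divisors / x.2) :=
        (sum_fiberwise_of_maps_to (fun x hx => mem_image_of_mem _ hx) _).symm
    _ ≤ ∑ k ∈ T, C ^ 3 / √y * (k : ℝ) ^ (-(5 / 4) : ℝ) := sum_le_sum hfiber
    _ ≤ C ^ 3 / √y * (Z + 1) := by
        rw [← mul_sum]
        gcongr
        exact (hsummable.sum_le_tsum T fun _ _ => by positivity).trans (le_add_of_nonneg_right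
          zero_le_one)
    _ = _ := by ring

lemma exists_abs_sum_range_odd_jacobiSym_le_rpow {ε : ℝ} (hε : 0 < ε) :
    ∃ C : ℝ, 0 < C ∧ ∀ k : ℕ, Odd k → ¬IsSquare k → ∀ H : ℕ,
      |∑ d ∈ range H with Odd d, (J(k | d) : ℝ)| ≤ C * (k : ℝ) ^ (2 / 3 + ε) := by
  obtain ⟨C, hC, hsum⟩ := exists_norm_sum_range_char_le_rpow hε
  refine ⟨C * 4 ^ (2 / 3 + ε), by positivity, fun k hk hsq H => ?_⟩
  have : NeZero k := ⟨hk.pos.ne'⟩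
  have hle := hsum _ _ (jacobiChar_ne_one hk hsq) H
  simp_rw [jacobiChar_natCast, ← sum_filter] at hle
  rw [mul_assoc, ← Real.mul_rpow four_pos.le (Nat.cast_nonneg k), ← Real.norm_eq_abs,
    ← Complex.norm_real]
  push_cast at hle ⊢
  exact hle

lemma sum_Icc_inv_le_one_add_log (N : ℕ) : ∑ n ∈ Icc 1 N, (n : ℝ)⁻¹ ≤ 1 + Real.log N := by
  have := harmonic_le_one_add_log N
  rw [harmonic_eq_sum_Icc] at this
  push_cast at this
  exact this

lemma exists_sum_card_divisors_div_le_rpow {ε : ℝ} (hε : 0 < ε) :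
    ∃ C : ℝ, 0 < C ∧ ∀ Q : ℕ, ∀ S ⊆ Icc 1 Q,
      ∑ n ∈ S, (#n.divisors : ℝ) / n ≤ C * (Q : ℝ) ^ ε := by
  obtain ⟨C, hC1, hC⟩ := exists_card_divisors_le_mul_rpow (half_pos hε)
  refine ⟨C * (1 + (ε / 2)⁻¹), by positivity, fun Q S hS => ?_⟩
  rcases S.eq_empty_or_nonempty with rfl | ⟨n₀, hn₀⟩
  · simpa using by positivity
  have hQ1 : (1 : ℝ) ≤ Q := by
    have := mem_Icc.mp (hS hn₀)
    exact_mod_cast this.1.trans this.2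
  have hpow : 1 ≤ (Q : ℝ) ^ (ε / 2) := Real.one_le_rpow hQ1 (by positivity)
  calc ∑ n ∈ S, (#n.divisors : ℝ) / n ≤ ∑ n ∈ Icc 1 Q, C * (Q : ℝ) ^ (ε / 2) * (n : ℝ)⁻¹ := by
        refine (sum_le_sum_of_subset_of_nonneg hS fun _ _ _ => by positivity).trans ?_
        refine sum_le_sum fun n hn => ?_
        have hn' := mem_Icc.mp hn
        rw [div_eq_mul_inv]
        gcongr
        exact (hC n (by omega)).trans (by gcongr; exact hn'.2)
    _ ≤ C * (Q : ℝ) ^ (ε / 2) * (1 + Real.log Q) := by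
        rw [← mul_sum]
        gcongr
        exact sum_Icc_inv_le_one_add_log Q
    _ ≤ C * (Q : ℝ) ^ (ε / 2) * ((1 + (ε / 2)⁻¹) * (Q : ℝ) ^ (ε / 2)) := by
        gcongr
        have := Real.log_le_rpow_div (zero_le_one.trans hQ1) (half_pos hε)
        rw [div_eq_mul_inv, mul_comm] at this
        linarith
    _ = C * (1 + (ε / 2)⁻¹) * (Q : ℝ) ^ ε := by
        rw [← add_halves ε, Real.rpow_add (by positivity)]
        ring_nf

lemma sum_sq_jacobiSym_eq (S D : Finset ℕ) (a : ℕ → ℝ) :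
    ∑ d ∈ D, (∑ n ∈ S, a n * (J(n | d) : ℝ)) ^ 2 =
      ∑ x ∈ S ×ˢ S, a x.1 * a x.2 * ∑ d ∈ D, (J((x.1 * x.2 : ℕ) | d) : ℝ) := by
  have hexpand (d : ℕ) : (∑ n ∈ S, a n * (J(n | d) : ℝ)) ^ 2 =
      ∑ x ∈ S ×ˢ S, a x.1 * (J(x.1 | d) : ℝ) * (a x.2 * (J(x.2 | d) : ℝ)) := by
    rw [sq, sum_mul_sum, ← sum_product']
  simp_rw [hexpand, mul_sum]
  rw [sum_comm]
  refine sum_congr rfl fun x _ => sum_congr rfl fun d _ => ?_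
  rw [Nat.cast_mul, jacobiSym.mul_left]
  push_cast
  ring

lemma sum_sq_jacobiSym_le {S : Finset ℕ} (a : ℕ → ℝ) {H : ℕ} {B : ℝ} (hB0 : 0 ≤ B)
    (hB : ∀ n ∈ S, ∀ m ∈ S, ¬IsSquare (n * m) →
      |∑ d ∈ range H with Odd d, (J((n * m : ℕ) | d) : ℝ)| ≤ B) :
    ∑ d ∈ range H with Odd d, (∑ n ∈ S, a n * (J(n | d) : ℝ)) ^ 2 ≤
      H * ∑ x ∈ S ×ˢ S with IsSquare (x.1 * x.2), |a x.1| * |a x.2| +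
        B * (∑ n ∈ S, |a n|) ^ 2 := by
  have htrivial (k : ℕ) : |∑ d ∈ range H with Odd d, (J(k | d) : ℝ)| ≤ H :=
    calc _ ≤ ∑ d ∈ range H with Odd d, (1 : ℝ) :=
          abs_sum_le_sum_abs _ _ |>.trans (sum_le_sum fun d _ => abs_jacobiSym_le_one k d)
      _ ≤ H := by
          rw [sum_const, nsmul_eq_mul, mul_one]
          exact_mod_cast (card_filter_le _ _).trans_eq (card_range H)
  have hterm (x : ℕ × ℕ) (hx : x ∈ S ×ˢ S) :
      a x.1 * a x.2 * ∑ d ∈ range H with Odd d, (J((x.1 * x.2 : ℕ) | d) : ℝ) ≤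
        (if IsSquare (x.1 * x.2) then H * (|a x.1| * |a x.2|) else 0) +
          B * (|a x.1| * |a x.2|) := by
    obtain ⟨hx1, hx2⟩ := mem_product.mp hx
    have ha : 0 ≤ |a x.1| * |a x.2| := by positivity
    refine (le_abs_self _).trans ?_
    rw [abs_mul, abs_mul]
    split_ifs with hsq
    · nlinarith [htrivial (x.1 * x.2)]
    · nlinarith [hB x.1 hx1 x.2 hx2 hsq]
  rw [sum_sq_jacobiSym_eq]
  refine (sum_le_sum hterm).trans_eq ?_
  rw [sum_add_distrib, ← sum_filter, ← mul_sum, ← mul_sum, sq, sum_mul_sum, ← sum_product']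

theorem exists_sum_sq_jacobiSym_le {ε : ℝ} (hε : 0 < ε) :
    ∃ C : ℝ, 0 < C ∧ ∀ (S : Finset ℕ) (a : ℕ → ℝ) (y Q H : ℕ), 0 < y →
      (∀ n ∈ S, Odd n ∧ y < n ∧ n ≤ Q) → (∀ n ∈ S, |a n| ≤ #n.divisors / n) →
      ∑ d ∈ range H with Odd d, (∑ n ∈ S, a n * (J(n | d) : ℝ)) ^ 2 ≤
        C * (H / √y + (Q : ℝ) ^ (4 / 3 + ε)) := by
  obtain ⟨C₁, hC₁, hdiag⟩ := exists_sum_isSquare_card_divisors_le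
  obtain ⟨C₂, hC₂, hoff⟩ := exists_abs_sum_range_odd_jacobiSym_le_rpow (ε := ε / 4) (by positivity)
  obtain ⟨C₃, hC₃, hsum⟩ := exists_sum_card_divisors_div_le_rpow (ε := ε / 4) (by positivity)
  refine ⟨C₁ + C₂ * C₃ ^ 2, by positivity, fun S a y Q H hy hS ha => ?_⟩
  have hB (n) (hn : n ∈ S) (m) (hm : m ∈ S) (hsq : ¬IsSquare (n * m)) :
      |∑ d ∈ range H with Odd d, (J((n * m : ℕ) | d) : ℝ)| ≤
        C₂ * ((Q : ℝ) ^ 2) ^ (2 / 3 + ε / 4) := by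
    refine (hoff _ ((hS n hn).1.mul (hS m hm).1) hsq H).trans ?_
    rw [sq]
    gcongr
    exact_mod_cast Nat.mul_le_mul (hS n hn).2.2 (hS m hm).2.2
  have hsquares : ∑ x ∈ S ×ˢ S with IsSquare (x.1 * x.2), |a x.1| * |a x.2| ≤ C₁ / √y := by
    refine (sum_le_sum fun x hx => ?_).trans (hdiag S y hy fun n hn => (hS n hn).2.1)
    obtain ⟨hx1, hx2⟩ := mem_product.mp (mem_filter.mp hx).1
    exact mul_le_mul (ha _ hx1) (ha _ hx2) (abs_nonneg _) (by positivity)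
  have habs : ∑ n ∈ S, |a n| ≤ C₃ * (Q : ℝ) ^ (ε / 4) :=
    (sum_le_sum ha).trans <| hsum Q S fun n hn =>
      mem_Icc.mpr ⟨(hS n hn).1.pos, (hS n hn).2.2⟩
  calc _ ≤ H * (C₁ / √y) +
        C₂ * ((Q : ℝ) ^ 2) ^ (2 / 3 + ε / 4) * (C₃ * (Q : ℝ) ^ (ε / 4)) ^ 2 :=
        (sum_sq_jacobiSym_le a (by positivity) hB).trans (by gcongr)
    _ = C₁ * (H / √y) + C₂ * C₃ ^ 2 * (Q : ℝ) ^ (4 / 3 + ε) := by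
        rw [mul_pow, ← Real.rpow_natCast (Q : ℝ), ← Real.rpow_natCast ((Q : ℝ) ^ (ε / 4)),
          ← Real.rpow_mul (by positivity), ← Real.rpow_mul (by positivity),
          show (4 / 3 + ε : ℝ) = (2 : ℕ) * (2 / 3 + ε / 4) + ε / 4 * (2 : ℕ) by push_cast; ring,
          Real.rpow_add_of_nonneg (by positivity) (by positivity) (by positivity)]
        ring
    _ ≤ _ := by
        have h1 : 0 ≤ C₂ * C₃ ^ 2 * (H / √y) := by positivity
        have h2 : 0 ≤ C₁ * (Q : ℝ) ^ (4 / 3 + ε) := by positivity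
        linarith

end MeanSquare

section Mollifier

open Finset ArithmeticFunction NumberTheorySymbols

/-- The odd primes `p ≤ y`. -/
def oddPrimesLE (y : ℕ) : Finset ℕ := (Nat.primesLE y).erase 2

/-- The support of the mollifier `∑ μ(a) χ(a) / a`: the odd `y`-smooth squarefree `a ≤ A`. -/
def mollifierSupport (y A : ℕ) : Finset ℕ := {a ∈ (∏ p ∈ oddPrimesLE y, p).divisors | a ≤ A}

/-- The coefficient of `χ(n) / n` in the product of `∑ χ(b) / b` over odd `b < B` with the
mollifier `∑ μ(a) χ(a) / a`. -/
def mollifiedCoeff (y A B n : ℕ) : ℝ :=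
  ∑ x ∈ mollifierSupport y A ×ˢ {b ∈ range B | Odd b} with x.1 * x.2 = n, (moebius x.1 : ℝ)

variable {y A B n : ℕ}

lemma mem_oddPrimesLE {p : ℕ} : p ∈ oddPrimesLE y ↔ p ≠ 2 ∧ p ≤ y ∧ p.Prime := by
  rw [oddPrimesLE, mem_erase, Nat.mem_primesLE]

lemma prod_oddPrimesLE_ne_zero (y : ℕ) : ∏ p ∈ oddPrimesLE y, p ≠ 0 :=
  prod_ne_zero_iff.mpr fun _ hp => (mem_oddPrimesLE.mp hp).2.2.ne_zero

lemma odd_prod_oddPrimesLE (y : ℕ) : Odd (∏ p ∈ oddPrimesLE y, p) :=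
  prod_induction _ Odd (fun _ _ => Odd.mul) odd_one fun _ hp =>
    (mem_oddPrimesLE.mp hp).2.2.odd_of_ne_two (mem_oddPrimesLE.mp hp).1

lemma odd_of_mem_mollifierSupport {a : ℕ} (ha : a ∈ mollifierSupport y A) : Odd a :=
  (odd_prod_oddPrimesLE y).of_dvd_nat (Nat.dvd_of_mem_divisors (mem_filter.mp ha).1)

lemma dvd_prod_oddPrimesLE {a : ℕ} (hs : Squarefree a) (ho : Odd a) (ha : a ≤ y) :
    a ∣ ∏ p ∈ oddPrimesLE y, p := by
  rw [← Nat.prod_primeFactors_of_squarefree hs]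
  refine prod_dvd_prod_of_subset _ _ _ fun p hp => mem_oddPrimesLE.mpr ?_
  have hdvd := Nat.dvd_of_mem_primeFactors hp
  exact ⟨(ho.of_dvd_nat hdvd).ne_two_of_dvd_nat dvd_rfl, (Nat.le_of_dvd ho.pos hdvd).trans ha,
    Nat.prime_of_mem_primeFactors hp⟩

lemma abs_mollifiedCoeff_le (hn : n ≠ 0) : |mollifiedCoeff y A B n| ≤ #n.divisors := by
  refine (abs_sum_le_sum_abs _ _).trans ((sum_le_card_nsmul _ _ 1 fun x _ => ?_).trans ?_)
  · exact_mod_cast abs_moebius_le_one (n := x.1)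
  · rw [nsmul_eq_mul, mul_one]
    exact_mod_cast card_filter_mul_eq_le _ hn

lemma mollifiedCoeff_of_le (hA : y ≤ A) (hB : y < B) (ho : Odd n) (hn : n ≤ y) :
    mollifiedCoeff y A B n = if n = 1 then 1 else 0 := by
  have hinv := congrArg (fun F : ArithmeticFunction ℤ => (F n : ℝ)) moebius_mul_coe_zeta
  simp only [mul_apply, one_apply, Int.cast_ite, Int.cast_one, Int.cast_zero, Int.cast_sum] at hinv
  rw [← hinv, mollifiedCoeff]
  refine (sum_congr rfl fun x hx => ?_).trans
    (sum_subset (filter_mul_eq_subset_divisorsAntidiagonal _ ho.pos.ne') fun x hx hx' => ?_)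
  · have hx2 : x.2 ≠ 0 := (ho.of_dvd_nat (Dvd.intro_left _ (mem_filter.mp hx).2)).pos.ne'
    simp [hx2]
  · have hxn := (Nat.mem_divisorsAntidiagonal.mp hx).1
    have hd1 : x.1 ∣ n := Dvd.intro _ hxn
    have hd2 : x.2 ∣ n := Dvd.intro_left _ hxn
    have hl1 := Nat.le_of_dvd ho.pos hd1
    have hl2 := Nat.le_of_dvd ho.pos hd2
    suffices hs : ¬Squarefree x.1 by simp [moebius_eq_zero_of_not_squarefree hs]
    refine fun hs => hx' (mem_filter.mpr ⟨mem_product.mpr ⟨mem_filter.mpr ⟨?_, by omega⟩,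
      mem_filter.mpr ⟨mem_range.mpr (by omega), ho.of_dvd_nat hd2⟩⟩, hxn⟩)
    exact Nat.mem_divisors.mpr ⟨dvd_prod_oddPrimesLE hs (ho.of_dvd_nat hd1) (by omega),
      prod_oddPrimesLE_ne_zero y⟩

lemma sum_mul_mollifier_eq_sum_mollifiedCoeff (y A B : ℕ) (g : ℕ →* ℝ) :
    (∑ b ∈ range B with Odd b, g b / b) * ∑ a ∈ mollifierSupport y A, moebius a * g a / a =
      ∑ n ∈ range (A * B + 1) with Odd n, mollifiedCoeff y A B n * g n / n := by
  have hmaps (x : ℕ × ℕ) (hx : x ∈ mollifierSupport y A ×ˢ {b ∈ range B | Odd b}) :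
      x.1 * x.2 ∈ {n ∈ range (A * B + 1) | Odd n} := by
    obtain ⟨hx1, hx2⟩ := mem_product.mp hx
    obtain ⟨hxB, hodd⟩ := mem_filter.mp hx2
    exact mem_filter.mpr ⟨mem_range.mpr (Nat.lt_succ_of_le
      (Nat.mul_le_mul (mem_filter.mp hx1).2 (mem_range.mp hxB).le)),
      (odd_of_mem_mollifierSupport hx1).mul hodd⟩
  rw [mul_comm, sum_mul_sum, ← sum_product', ← sum_fiberwise_of_maps_to hmaps]
  refine sum_congr rfl fun n _ => ?_
  rw [mollifiedCoeff, sum_mul, sum_div]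
  refine sum_congr rfl fun x hx => ?_
  rw [← (mem_filter.mp hx).2, map_mul, Nat.cast_mul, div_mul_div_comm]
  ring

theorem sum_mul_mollifier_eq_one_add (hy : 0 < y) (hA : y ≤ A) (hB : y < B) (g : ℕ →* ℝ) :
    (∑ b ∈ range B with Odd b, g b / b) * ∑ a ∈ mollifierSupport y A, moebius a * g a / a =
      1 + ∑ n ∈ Ioc y (A * B) with Odd n, mollifiedCoeff y A B n * g n / n := by
  have hAB : 1 ≤ A * B := Nat.mul_pos (by omega) (by omega)
  have hsub : insert 1 {n ∈ Ioc y (A * B) | Odd n} ⊆ {n ∈ range (A * B + 1) | Odd n} := by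
    refine insert_subset (mem_filter.mpr ⟨mem_range.mpr (by omega), odd_one⟩)
      (filter_subset_filter _ fun n hn => ?_)
    have := mem_Ioc.mp hn
    exact mem_range.mpr (by omega)
  rw [sum_mul_mollifier_eq_sum_mollifiedCoeff, ← sum_subset hsub, sum_insert (by simp; omega),
    mollifiedCoeff_of_le hA hB odd_one hy, if_pos rfl, map_one, Nat.cast_one, mul_one, div_one]
  intro n hn hn'
  obtain ⟨hnAB, ho⟩ := mem_filter.mp hn
  obtain ⟨hn1, hny⟩ := not_or.mp (mem_insert.not.mp hn')
  have hle : n ≤ y := by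
    by_contra! hlt
    exact hny (mem_filter.mpr ⟨mem_Ioc.mpr ⟨hlt, by have := mem_range.mp hnAB; omega⟩, ho⟩)
  rw [mollifiedCoeff_of_le hA hB ho hle, if_neg hn1, zero_mul, zero_div]

end Mollifier

section Exceptional

open Finset NumberTheorySymbols

/-- The mollified sum of `n ↦ ψ(n) (n | d)` without its term `n = 1`, for the smoothness parameter
`i ^ 4`, the mollifier length `2 ^ i` and the sum length `2 ^ (42 * i)`. The values of the real
function `ψ` are restricted to `{0, ±1}` by the use of `SignType`. -/
def mollifiedSum (i : ℕ) (ψ : ZMod 8 → SignType) (d : ℕ) : ℝ :=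
  ∑ n ∈ Ioc (i ^ 4) (2 ^ i * 2 ^ (42 * i)) with Odd n,
    mollifiedCoeff (i ^ 4) (2 ^ i) (2 ^ (42 * i)) n * ((ψ n : ℤ) : ℝ) / n * (J(n | d) : ℝ)

/-- The odd number `d` is exceptional at scale `i` if the mollifier of length `2 ^ i` fails to
invert the sum of `ψ(n) (n | d) / n` for some `ψ` modulo `8`. -/
def ExceptionalAt (i d : ℕ) : Prop := ∃ ψ : ZMod 8 → SignType, 1 / 4 < |mollifiedSum i ψ d|

/-- The scale at which an integer is tested: `2 ^ (60 * scale d) ≤ d < 2 ^ (60 * scale d + 60)`. -/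
def scale (d : ℕ) : ℕ := Nat.log 2 d / 60

/-- An odd number is exceptional if it is so at its own scale. -/
def Exceptional (d : ℕ) : Prop := Odd d ∧ ExceptionalAt (scale d) d

lemma pow_four_lt_two_pow {i : ℕ} (hi : 20 ≤ i) : i ^ 4 < 2 ^ i := by
  induction i, hi using Nat.le_induction with
  | base => norm_num
  | succ n hn ih =>
    have : (n + 1) ^ 4 ≤ 2 * n ^ 4 := by
      nlinarith [Nat.mul_le_mul_right (n ^ 3) hn, Nat.mul_le_mul_right (n ^ 2) hn,
        Nat.mul_le_mul_right n hn]
    omega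

lemma exists_sum_sq_mollifiedSum_le : ∃ C : ℝ, 0 < C ∧ ∀ i : ℕ, 0 < i → ∀ ψ (H : ℕ),
    ∑ d ∈ range H with Odd d, mollifiedSum i ψ d ^ 2 ≤ C * (H / i ^ 2 + 2 ^ (59 * i)) := by
  obtain ⟨C, hC, hmean⟩ := exists_sum_sq_jacobiSym_le (ε := 5 / 129) (by norm_num)
  refine ⟨C, hC, fun i hi ψ H => ?_⟩
  refine (hmean _ _ (i ^ 4) (2 ^ i * 2 ^ (42 * i)) H (by positivity) (fun n hn => ?_)
    fun n hn => ?_).trans_eq ?_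
  · obtain ⟨hn, ho⟩ := mem_filter.mp hn
    exact ⟨ho, mem_Ioc.mp hn⟩
  · have hn0 : n ≠ 0 := (mem_filter.mp hn).2.pos.ne'
    have hψ : |((ψ n : ℤ) : ℝ)| ≤ 1 := by cases ψ n <;> simp
    rw [abs_div, Nat.abs_cast, abs_mul]
    gcongr
    exact (mul_le_of_le_one_right (abs_nonneg _) hψ).trans (abs_mollifiedCoeff_le hn0)
  · have hsqrt : √((i ^ 4 : ℕ) : ℝ) = i ^ 2 := by
      rw [Nat.cast_pow, show (i : ℝ) ^ 4 = (i ^ 2) ^ 2 by ring, Real.sqrt_sq (by positivity)]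
    have hpow : ((2 ^ i * 2 ^ (42 * i) : ℕ) : ℝ) ^ (4 / 3 + 5 / 129 : ℝ) = 2 ^ (59 * i) := by
      rw [← pow_add, Nat.cast_pow, Nat.cast_ofNat, ← Real.rpow_natCast, ← Real.rpow_mul two_pos.le,
        ← Real.rpow_natCast]
      congr 1
      push_cast
      ring
    rw [hsqrt, hpow]

open Classical in
theorem exists_card_exceptionalAt_le : ∃ C : ℝ, 0 < C ∧ ∀ i : ℕ, 0 < i → ∀ H : ℕ,
    (#{d ∈ range H | Odd d ∧ ExceptionalAt i d} : ℝ) ≤ C * (H / i ^ 2 + 2 ^ (59 * i)) := by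
  obtain ⟨C, hC, hmean⟩ := exists_sum_sq_mollifiedSum_le
  refine ⟨16 * Fintype.card (ZMod 8 → SignType) * C, by positivity, fun i hi H => ?_⟩
  have hchebyshev (d : ℕ) :
      (if ExceptionalAt i d then 1 else 0 : ℝ) ≤ ∑ ψ, 16 * mollifiedSum i ψ d ^ 2 := by
    split_ifs with hd
    · obtain ⟨ψ, hψ⟩ := hd
      refine le_trans ?_ (single_le_sum (f := fun ψ => 16 * mollifiedSum i ψ d ^ 2)
        (fun _ _ => by positivity) (mem_univ ψ))
      nlinarith [sq_abs (mollifiedSum i ψ d)]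
    · positivity
  calc (#{d ∈ range H | Odd d ∧ ExceptionalAt i d} : ℝ)
      ≤ ∑ d ∈ range H with Odd d, ∑ ψ, 16 * mollifiedSum i ψ d ^ 2 := by
        rw [← filter_filter, card_filter]
        push_cast
        exact sum_le_sum fun d _ => hchebyshev d
    _ ≤ ∑ _ψ : ZMod 8 → SignType, 16 * (C * (H / i ^ 2 + 2 ^ (59 * i))) := by
        rw [sum_comm]
        refine sum_le_sum fun ψ _ => ?_
        rw [← mul_sum]
        gcongr
        exact hmean i hi ψ H
    _ = _ := by
        rw [sum_const, nsmul_eq_mul, card_univ]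
        ring

lemma two_pow_scale_le {d : ℕ} (hd : d ≠ 0) : 2 ^ (60 * scale d) ≤ d :=
  (Nat.pow_le_pow_right two_pos (Nat.mul_div_le _ _)).trans (Nat.pow_log_le_self 2 hd)

lemma lt_two_pow_scale (d : ℕ) : d < 2 ^ (60 * scale d + 60) :=
  (Nat.lt_pow_succ_log_self one_lt_two d).trans_le
    (Nat.pow_le_pow_right two_pos (by rw [scale]; omega))

lemma exists_sum_inv_le_of_scale_eq : ∃ C : ℝ, 0 < C ∧ ∀ i : ℕ, 20 ≤ i → ∀ S : Finset ℕ,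
    (∀ d ∈ S, scale d = i ∧ Exceptional d) → ∑ d ∈ S, (d : ℝ)⁻¹ ≤ C * ((i : ℝ) ^ 2)⁻¹ := by
  classical
  obtain ⟨C, hC, hcard⟩ := exists_card_exceptionalAt_le
  refine ⟨C * (2 ^ 60 + 1), by positivity, fun i hi S hS => ?_⟩
  have hinv (d) (hd : d ∈ S) : (d : ℝ)⁻¹ ≤ ((2 : ℝ) ^ (60 * i))⁻¹ := by
    obtain ⟨rfl, hexc⟩ := hS d hd
    gcongr
    exact_mod_cast two_pow_scale_le hexc.1.pos.ne'
  have hi2 : (i : ℝ) ^ 2 ≤ 2 ^ i := by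
    exact_mod_cast (Nat.pow_le_pow_right (by omega) (by norm_num)).trans (pow_four_lt_two_pow hi).le
  calc ∑ d ∈ S, (d : ℝ)⁻¹ ≤ #S * ((2 : ℝ) ^ (60 * i))⁻¹ := by
        rw [← nsmul_eq_mul]
        exact sum_le_card_nsmul _ _ _ hinv
    _ ≤ C * ((2 ^ (60 * i + 60) : ℕ) / i ^ 2 + 2 ^ (59 * i)) * ((2 : ℝ) ^ (60 * i))⁻¹ := by
        gcongr
        refine (Nat.cast_le.mpr (card_le_card fun d hd => ?_)).trans (hcard i (by omega) _)
        obtain ⟨rfl, hodd, hexc⟩ := hS d hd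
        exact mem_filter.mpr ⟨mem_range.mpr (lt_two_pow_scale d), hodd, hexc⟩
    _ = C * (2 ^ 60 * ((i : ℝ) ^ 2)⁻¹ + (2 ^ i)⁻¹) := by
        rw [Nat.cast_pow, pow_add, show 60 * i = 59 * i + i by ring, pow_add, Nat.cast_ofNat]
        field_simp
        ring
    _ ≤ C * (2 ^ 60 * ((i : ℝ) ^ 2)⁻¹ + ((i : ℝ) ^ 2)⁻¹) := by
        have : (0 : ℝ) < i := by exact_mod_cast (by omega : 0 < i)
        gcongr
    _ = _ := by ring

theorem summable_inv_exceptional :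
    Summable ({d : ℕ | Exceptional d}.indicator fun d : ℕ => (d : ℝ)⁻¹) := by
  classical
  obtain ⟨C, hC, hblock⟩ := exists_sum_inv_le_of_scale_eq
  have hsq : Summable fun i : ℕ => ((i : ℝ) ^ 2)⁻¹ := Real.summable_nat_pow_inv.mpr one_lt_two
  obtain ⟨N, hN⟩ : ∃ N, ∀ d, scale d < 20 → d < N :=
    ⟨2 ^ (60 * 20), fun d hd => (lt_two_pow_scale d).trans_le
      (Nat.pow_le_pow_right two_pos (by omega))⟩
  refine summable_of_sum_le (c := ∑ d ∈ range N, (d : ℝ)⁻¹ + C * ∑' i : ℕ, ((i : ℝ) ^ 2)⁻¹)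
    (fun d => Set.indicator_nonneg (fun _ _ => by positivity) d) fun S => ?_
  simp only [Set.indicator_apply, Set.mem_ofPred_eq]
  rw [← sum_filter, ← sum_filter_add_sum_filter_not _ (fun d => scale d < 20)]
  refine add_le_add (sum_le_sum_of_subset_of_nonneg
    (fun d hd => mem_range.mpr (hN d (mem_filter.mp hd).2)) fun _ _ _ => by positivity) ?_
  set T : Finset ℕ := {d ∈ {d ∈ S | Exceptional d} | ¬scale d < 20}
  calc ∑ d ∈ T, (d : ℝ)⁻¹ = ∑ i ∈ T.image scale, ∑ d ∈ T with scale d = i, (d : ℝ)⁻¹ :=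
        (sum_fiberwise_of_maps_to (fun d hd => mem_image_of_mem _ hd) _).symm
    _ ≤ ∑ i ∈ T.image scale, C * ((i : ℝ) ^ 2)⁻¹ := by
        refine sum_le_sum fun i hi => hblock i ?_ _ fun d hd => ?_
        · obtain ⟨d, hd, rfl⟩ := mem_image.mp hi
          exact not_lt.mp (mem_filter.mp hd).2
        · obtain ⟨hdT, rfl⟩ := mem_filter.mp hd
          exact ⟨rfl, (mem_filter.mp (mem_filter.mp hdT).1).2⟩
    _ ≤ _ := by
        rw [← mul_sum]
        gcongr
        exact hsq.sum_le_tsum _ fun _ _ => by positivity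

end Exceptional

section PrimeSums

open Finset

lemma card_filter_prime_Ioc_two_pow_mul_le (k : ℕ) :
    (#{p ∈ Ioc (2 ^ k) (2 ^ (k + 1)) | p.Prime} : ℝ) * (k + 1) ≤ 8 * 2 ^ k := by
  set S := {p ∈ Ioc (2 ^ k) (2 ^ (k + 1)) | p.Prime}
  have hlog := Real.log_pos one_lt_two
  have hterm (p : ℕ) (hp : p ∈ S) : (k + 1) / 2 * Real.log 2 ≤ Real.log p := by
    obtain ⟨hpk, hprime⟩ := mem_filter.mp hp
    have hle : 2 ^ (k + 1) ≤ p ^ 2 := by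
      rw [pow_succ, sq]
      exact Nat.mul_le_mul (mem_Ioc.mp hpk).1.le hprime.two_le
    have := Real.log_le_log (by positivity) ((Nat.cast_le (α := ℝ)).mpr hle)
    push_cast [Real.log_pow] at this
    linarith
  have hsub : S ⊆ Nat.primesLE (2 ^ (k + 1)) := fun p hp => Nat.mem_primesLE.mpr
    ⟨(mem_Ioc.mp (mem_filter.mp hp).1).2, (mem_filter.mp hp).2⟩
  refine le_of_mul_le_mul_right ?_ (half_pos hlog)
  calc (#S : ℝ) * (k + 1) * (Real.log 2 / 2) = #S • ((k + 1) / 2 * Real.log 2) := by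
        rw [nsmul_eq_mul]
        ring
    _ ≤ ∑ p ∈ Nat.primesLE (2 ^ (k + 1)), Real.log p :=
        (card_nsmul_le_sum _ _ _ hterm).trans
          (sum_le_sum_of_subset_of_nonneg hsub fun p _ _ => Real.log_natCast_nonneg p)
    _ ≤ Real.log 4 * 2 ^ (k + 1) := by
        rw [← Chebyshev.theta_eq_sum_primesLE_log]
        exact_mod_cast Chebyshev.theta_le_log4_mul_x (x := (2 ^ (k + 1) : ℕ)) (by positivity)
    _ = 8 * 2 ^ k * (Real.log 2 / 2) := by
        rw [show (4 : ℝ) = 2 ^ 2 by norm_num, Real.log_pow]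
        push_cast
        ring

theorem sum_inv_primesLE_two_pow_le (m : ℕ) :
    ∑ p ∈ Nat.primesLE (2 ^ m), (p : ℝ)⁻¹ ≤ 8 * (1 + Real.log m) := by
  have hdyadic (k : ℕ) :
      ∑ p ∈ Ioc (2 ^ k : ℕ) (2 ^ (k + 1)) with p.Prime, (p : ℝ)⁻¹ ≤ 8 * (k + 1 : ℝ)⁻¹ := by
    refine (sum_le_card_nsmul _ _ ((2 : ℝ) ^ k)⁻¹ fun p hp => ?_).trans ?_
    · gcongr
      exact_mod_cast (mem_Ioc.mp (mem_filter.mp hp).1).1.le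
    · rw [nsmul_eq_mul, ← div_eq_mul_inv, ← div_eq_mul_inv,
        div_le_div_iff₀ (by positivity) (by positivity)]
      exact_mod_cast card_filter_prime_Ioc_two_pow_mul_le k
  have hharmonic : ∑ p ∈ Nat.primesLE (2 ^ m), (p : ℝ)⁻¹ ≤ 8 * (harmonic m : ℝ) := by
    induction m with
    | zero => simp
    | succ k ih =>
      have hsplit : Nat.primesLE (2 ^ (k + 1)) =
          Nat.primesLE (2 ^ k) ∪ {p ∈ Ioc (2 ^ k) (2 ^ (k + 1)) | p.Prime} := by
        ext p
        have := Nat.pow_le_pow_right two_pos k.le_succ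
        have : p ≤ 2 ^ (k + 1) ↔ p ≤ 2 ^ k ∨ 2 ^ k < p ∧ p ≤ 2 ^ (k + 1) := by omega
        rw [Nat.mem_primesLE, mem_union, Nat.mem_primesLE, mem_filter, mem_Ioc,
          ← or_and_right]
        exact and_congr_left' this
      have hdisj : Disjoint (Nat.primesLE (2 ^ k)) {p ∈ Ioc (2 ^ k) (2 ^ (k + 1)) | p.Prime} :=
        disjoint_left.mpr fun p hp hp' => (mem_Ioc.mp (mem_filter.mp hp').1).1.not_ge
          (Nat.mem_primesLE.mp hp).1
      rw [hsplit, sum_union hdisj, harmonic_succ]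
      push_cast
      linarith [hdyadic k]
  exact hharmonic.trans (by gcongr; exact harmonic_le_one_add_log m)

theorem sum_inv_primeFactors_le {n m : ℕ} (hn : n ≠ 0) (hm : Nat.log 2 n < 2 ^ m) :
    ∑ p ∈ n.primeFactors, (p : ℝ)⁻¹ ≤ 9 + 8 * Real.log m := by
  have hcard : #n.primeFactors ≤ Nat.log 2 n := by
    refine Nat.le_log_of_pow_le one_lt_two ?_
    exact (prod_const (s := n.primeFactors) 2).symm.trans_le <|
      (prod_le_prod' fun p hp => (Nat.prime_of_mem_primeFactors hp).two_le).trans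
        (Nat.le_of_dvd (Nat.pos_of_ne_zero hn) (Nat.prod_primeFactors_dvd n))
  rw [← sum_filter_add_sum_filter_not _ (fun p => p ≤ 2 ^ m)]
  have hsmall : ∑ p ∈ n.primeFactors with p ≤ 2 ^ m, (p : ℝ)⁻¹ ≤ 8 * (1 + Real.log m) := by
    refine (sum_le_sum_of_subset_of_nonneg (fun p hp => ?_) fun _ _ _ => by positivity).trans
      (sum_inv_primesLE_two_pow_le m)
    obtain ⟨hp, hpm⟩ := mem_filter.mp hp
    exact Nat.mem_primesLE.mpr ⟨hpm, Nat.prime_of_mem_primeFactors hp⟩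
  have hlarge : ∑ p ∈ n.primeFactors with ¬p ≤ 2 ^ m, (p : ℝ)⁻¹ ≤ 1 := by
    refine (sum_le_card_nsmul _ _ ((2 : ℝ) ^ m)⁻¹ fun p hp => ?_).trans ?_
    · gcongr
      exact_mod_cast (not_le.mp (mem_filter.mp hp).2).le
    · rw [nsmul_eq_mul, ← div_eq_mul_inv, div_le_one (by positivity)]
      exact_mod_cast (card_filter_le _ _).trans (hcard.trans hm.le)
  linarith

end PrimeSums

section Mollification

open Finset ArithmeticFunction

/-- The arithmetic function `n ↦ g(n) / n`, whose multiplicativity turns divisor sums into Euler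
products. -/
def overId (g : ℕ →* ℝ) : ArithmeticFunction ℝ := ⟨fun n => g n / n, by simp⟩

variable {y : ℕ}

lemma overId_apply (g : ℕ →* ℝ) (n : ℕ) : overId g n = g n / n := rfl

lemma isMultiplicative_overId (g : ℕ →* ℝ) : (overId g).IsMultiplicative := by
  refine ⟨by simp [overId_apply], fun {m n} _ => ?_⟩
  rw [overId_apply, overId_apply, overId_apply, map_mul, Nat.cast_mul, mul_div_mul_comm]

lemma squarefree_prod_oddPrimesLE (y : ℕ) : Squarefree (∏ p ∈ oddPrimesLE y, p) :=
  Finset.squarefree_prod_of_pairwise_isCoprime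
    (fun _ hp _ hq hpq => Nat.coprime_iff_isRelPrime.mp <|
      (Nat.coprime_primes (mem_oddPrimesLE.mp hp).2.2 (mem_oddPrimesLE.mp hq).2.2).mpr hpq)
    fun _ hp => (mem_oddPrimesLE.mp hp).2.2.squarefree

lemma primeFactors_prod_oddPrimesLE (y : ℕ) :
    (∏ p ∈ oddPrimesLE y, p).primeFactors = oddPrimesLE y :=
  Nat.primeFactors_prod fun _ hp => (mem_oddPrimesLE.mp hp).2.2

lemma sum_inv_oddPrimesLE_le (y : ℕ) : ∑ p ∈ oddPrimesLE y, (p : ℝ)⁻¹ ≤ 1 + Real.log y := by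
  refine (sum_le_sum_of_subset_of_nonneg (fun p hp => ?_) fun _ _ _ => by positivity).trans
    (sum_Icc_inv_le_one_add_log y)
  exact mem_Icc.mpr ⟨(mem_oddPrimesLE.mp hp).2.2.one_le, (mem_oddPrimesLE.mp hp).2.1⟩

-- Rankin's trick: insert the factor `(a / A) ^ θ ≥ 1`.
theorem sum_inv_divisors_prod_oddPrimesLE_le (y : ℕ) {A : ℕ} (hA : 0 < A) {θ : ℝ} (hθ : 0 ≤ θ) :
    ∑ a ∈ (∏ p ∈ oddPrimesLE y, p).divisors with A < a, (a : ℝ)⁻¹ ≤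
      (A : ℝ) ^ (-θ) * Real.exp ((y : ℝ) ^ θ * (1 + Real.log y)) := by
  let g : ℕ →* ℝ := ⟨⟨fun n => (n : ℝ) ^ θ, by simp⟩, fun m n => by
    simp only [Nat.cast_mul, Real.mul_rpow m.cast_nonneg n.cast_nonneg]⟩
  have hg (n : ℕ) : 0 ≤ overId g n :=
    div_nonneg (Real.rpow_nonneg n.cast_nonneg _) n.cast_nonneg
  have hterm (a : ℕ) (ha : A < a) : (a : ℝ)⁻¹ ≤ (A : ℝ) ^ (-θ) * overId g a := by
    have h1 : 1 ≤ ((A : ℝ) ^ θ)⁻¹ * (a : ℝ) ^ θ := by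
      rw [inv_mul_eq_div, one_le_div (by positivity)]
      gcongr
    calc (a : ℝ)⁻¹ = 1 * (a : ℝ)⁻¹ := (one_mul _).symm
      _ ≤ ((A : ℝ) ^ θ)⁻¹ * (a : ℝ) ^ θ * (a : ℝ)⁻¹ := by gcongr
      _ = (A : ℝ) ^ (-θ) * overId g a := by
        rw [Real.rpow_neg (by positivity), mul_assoc, ← div_eq_mul_inv]
        rfl
  calc _ ≤ ∑ a ∈ (∏ p ∈ oddPrimesLE y, p).divisors, (A : ℝ) ^ (-θ) * overId g a :=
        (sum_le_sum fun a ha => hterm a (mem_filter.mp ha).2).trans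
          (sum_le_sum_of_subset_of_nonneg (filter_subset _ _) fun a _ _ =>
            mul_nonneg (by positivity) (hg a))
    _ = (A : ℝ) ^ (-θ) * ∏ p ∈ oddPrimesLE y, (1 + overId g p) := by
        rw [← mul_sum, ← (isMultiplicative_overId g).prodPrimeFactors_one_add_of_squarefree
          (squarefree_prod_oddPrimesLE y), primeFactors_prod_oddPrimesLE]
    _ ≤ (A : ℝ) ^ (-θ) * Real.exp (∑ p ∈ oddPrimesLE y, overId g p) := by
        gcongr
        exact Real.prod_one_add_le_exp_sum _ hg
    _ ≤ (A : ℝ) ^ (-θ) * Real.exp ((y : ℝ) ^ θ * ∑ p ∈ oddPrimesLE y, (p : ℝ)⁻¹) := by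
        gcongr
        rw [mul_sum]
        refine sum_le_sum fun p hp => ?_
        change (p : ℝ) ^ θ / p ≤ _
        rw [div_eq_mul_inv]
        gcongr
        exact (mem_oddPrimesLE.mp hp).2.1
    _ ≤ _ := by
        gcongr
        exact sum_inv_oddPrimesLE_le y

lemma tendsto_log_add_sqrt_mul_log_sub_atBot {c : ℝ} (hc : 0 < c) :
    Tendsto (fun x : ℝ => Real.log x + √x * (1 + 4 * Real.log x) - c * x) atTop atBot := by
  have hsqrt : (fun x : ℝ => √x * √x) =ᶠ[atTop] id :=
    (eventually_ge_atTop 0).mono fun x hx => Real.mul_self_sqrt hx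
  have hlog : Real.log =o[atTop] fun x => √x := by
    simpa only [Real.sqrt_eq_rpow] using isLittleO_log_rpow_atTop (r := 1 / 2) (by norm_num)
  have hone : (fun _ => 1 : ℝ → ℝ) =o[atTop] fun x => √x :=
    Asymptotics.isLittleO_const_left.mpr <| Or.inr <|
      tendsto_norm_atTop_atTop.comp Real.tendsto_sqrt_atTop
  have hprod : (fun x => √x * (1 + 4 * Real.log x)) =o[atTop] (id : ℝ → ℝ) :=
    ((Asymptotics.isBigO_refl _ _).mul_isLittleO
      (hone.add (hlog.const_mul_left 4))).congr' .rfl hsqrt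
  have hbound := (Real.isLittleO_log_id_atTop.add hprod).bound (half_pos hc)
  refine tendsto_atBot_mono' _ ?_
    (tendsto_id.const_mul_atTop_of_neg (neg_lt_zero.mpr (half_pos hc)))
  filter_upwards [hbound, eventually_ge_atTop 0] with x hx hx0
  rw [id, Real.norm_of_nonneg hx0] at hx
  have := (Real.le_norm_self _).trans hx
  simp only [id]
  linarith

lemma tendsto_mul_two_rpow_mul_exp :
    Tendsto (fun i : ℕ => (i : ℝ) * (((2 ^ i : ℕ) : ℝ) ^ (-(1 / 8) : ℝ) *
      Real.exp (((i ^ 4 : ℕ) : ℝ) ^ (1 / 8 : ℝ) * (1 + Real.log (i ^ 4 : ℕ))))) atTop (𝓝 0) := by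
  have hexponent := (tendsto_log_add_sqrt_mul_log_sub_atBot
    (c := Real.log 2 / 8) (by positivity)).comp tendsto_natCast_atTop_atTop
  refine (Real.tendsto_exp_atBot.comp hexponent).congr' ?_
  filter_upwards [eventually_gt_atTop 0] with i hi
  have hi0 : (0 : ℝ) < i := by exact_mod_cast hi
  have hsqrt : ((i ^ 4 : ℕ) : ℝ) ^ (1 / 8 : ℝ) = √i := by
    rw [Nat.cast_pow, ← Real.rpow_natCast, ← Real.rpow_mul hi0.le, Real.sqrt_eq_rpow]
    norm_num
  have htwo : ((2 ^ i : ℕ) : ℝ) ^ (-(1 / 8) : ℝ) = Real.exp (-(Real.log 2 / 8 * i)) := by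
    rw [Real.rpow_def_of_pos (by positivity), Nat.cast_pow, Real.log_pow, Nat.cast_ofNat]
    ring_nf
  rw [hsqrt, htwo, Nat.cast_pow, Real.log_pow, ← Real.exp_add, Function.comp_apply,
    Function.comp_apply, sub_eq_add_neg, add_assoc, Real.exp_add, Real.exp_log hi0]
  push_cast
  ring_nf

theorem tendsto_mul_sum_inv_divisors_prod_oddPrimesLE :
    Tendsto (fun i : ℕ => (i : ℝ) *
      ∑ a ∈ (∏ p ∈ oddPrimesLE (i ^ 4), p).divisors with 2 ^ i < a, (a : ℝ)⁻¹) atTop (𝓝 0) :=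
  squeeze_zero (fun _ => by positivity)
    (fun i => mul_le_mul_of_nonneg_left
      (sum_inv_divisors_prod_oddPrimesLE_le _ (by positivity) (by norm_num)) i.cast_nonneg)
    tendsto_mul_two_rpow_mul_exp

lemma sum_moebius_mul_div_eq_prod (y : ℕ) (g : ℕ →* ℝ) :
    ∑ a ∈ (∏ p ∈ oddPrimesLE y, p).divisors, moebius a * g a / a =
      ∏ p ∈ oddPrimesLE y, (1 - g p / p) := by
  have := (isMultiplicative_overId g).prodPrimeFactors_one_sub_of_squarefree _
    (squarefree_prod_oddPrimesLE y)
  rw [primeFactors_prod_oddPrimesLE] at this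
  simpa only [overId_apply, mul_div_assoc] using this.symm

lemma abs_log_one_sub_le {u : ℝ} (hu : |u| ≤ 1 / 2) : |Real.log (1 - u)| ≤ 2 * |u| := by
  have h := Real.abs_log_sub_add_sum_range_le (hu.trans_lt one_half_lt_one) 0
  rw [sum_range_zero, zero_add, zero_add, pow_one] at h
  refine h.trans ?_
  rw [div_le_iff₀ (by linarith)]
  nlinarith [abs_nonneg u]

lemma abs_log_prod_one_sub_le {ι : Type*} (s : Finset ι) {u : ι → ℝ}
    (hu : ∀ i ∈ s, |u i| ≤ 1 / 2) : |Real.log (∏ i ∈ s, (1 - u i))| ≤ 2 * ∑ i ∈ s, |u i| := by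
  rw [Real.log_prod fun i hi => by linarith [(abs_le.mp (hu i hi)).2], mul_sum]
  exact (abs_sum_le_sum_abs _ _).trans (sum_le_sum fun i hi => abs_log_one_sub_le (hu i hi))

lemma abs_log_le_one {x : ℝ} (hx : |x - 1| ≤ 1 / 2) : |Real.log x| ≤ 1 := by
  rw [abs_sub_comm] at hx
  have := abs_log_one_sub_le hx
  rw [sub_sub_cancel] at this
  linarith

lemma tendsto_inv_two_pow_mul_exp_log (C : ℝ) :
    Tendsto (fun i : ℕ => C / 2 ^ i * Real.exp (2 * (1 + Real.log (i ^ 4 : ℕ)))) atTop (𝓝 0) := by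
  have h := (tendsto_pow_const_div_const_pow_of_one_lt 8 (one_lt_two (α := ℝ))).const_mul
    (C * Real.exp 2)
  rw [mul_zero] at h
  refine h.congr' ?_
  filter_upwards [eventually_gt_atTop 0] with i hi
  have hexp : Real.exp (2 * (1 + Real.log (i ^ 4 : ℕ))) = Real.exp 2 * i ^ 8 := by
    have hi0 : (0 : ℝ) < i := by exact_mod_cast hi
    rw [Nat.cast_pow, Real.log_pow, ← Real.exp_log (pow_pos hi0 8), Real.log_pow, ← Real.exp_add]
    push_cast
    ring_nf
  rw [hexp]
  ring

section BoundedCharacter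

variable {g : ℕ →* ℝ}

lemma abs_map_div_self_le (hg : ∀ n, |g n| ≤ 1) (n : ℕ) : |g n / n| ≤ (n : ℝ)⁻¹ := by
  rw [abs_div, Nat.abs_cast, inv_eq_one_div]
  gcongr
  exact hg n

lemma abs_map_div_self_le_half (hg : ∀ n, |g n| ≤ 1) {p : ℕ} (hp : p ∈ oddPrimesLE y) :
    |g p / p| ≤ 1 / 2 := by
  refine (abs_map_div_self_le hg p).trans ?_
  rw [one_div]
  gcongr
  exact_mod_cast (mem_oddPrimesLE.mp hp).2.2.two_le

lemma prod_oddPrimesLE_one_sub_div_pos (hg : ∀ n, |g n| ≤ 1) (y : ℕ) :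
    0 < ∏ p ∈ oddPrimesLE y, (1 - g p / p) :=
  prod_pos fun _ hp => by linarith [(abs_le.mp (abs_map_div_self_le_half hg hp)).2]

lemma abs_log_prod_one_sub_div_le (hg : ∀ n, |g n| ≤ 1) (y : ℕ) :
    |Real.log (∏ p ∈ oddPrimesLE y, (1 - g p / p))| ≤ 2 * ∑ p ∈ oddPrimesLE y, (p : ℝ)⁻¹ :=
  (abs_log_prod_one_sub_le _ fun _ hp => abs_map_div_self_le_half hg hp).trans <| by
    gcongr with p _
    exact abs_map_div_self_le hg p

lemma prod_oddPrimesLE_one_sub_div_le (hg : ∀ n, |g n| ≤ 1) (y : ℕ) :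
    ∏ p ∈ oddPrimesLE y, (1 - g p / p) ≤ Real.exp (2 * (1 + Real.log y)) := by
  rw [← Real.log_le_iff_le_exp (prod_oddPrimesLE_one_sub_div_pos hg y)]
  refine (le_abs_self _).trans ((abs_log_prod_one_sub_div_le hg y).trans ?_)
  gcongr
  exact sum_inv_oddPrimesLE_le y

lemma abs_prod_sub_mollifier_le (hg : ∀ n, |g n| ≤ 1) (y A : ℕ) :
    |∏ p ∈ oddPrimesLE y, (1 - g p / p) - ∑ a ∈ mollifierSupport y A, moebius a * g a / a| ≤
      ∑ a ∈ (∏ p ∈ oddPrimesLE y, p).divisors with A < a, (a : ℝ)⁻¹ := by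
  rw [← sum_moebius_mul_div_eq_prod, ← sum_filter_add_sum_filter_not _ (fun a => a ≤ A),
    mollifierSupport, add_sub_cancel_left]
  simp only [not_le]
  refine (abs_sum_le_sum_abs _ _).trans (sum_le_sum fun a _ => ?_)
  rw [mul_div_assoc, abs_mul]
  refine (mul_le_of_le_one_left (abs_nonneg _) ?_).trans (abs_map_div_self_le hg a)
  exact_mod_cast abs_moebius_le_one (n := a)

lemma abs_sum_range_odd_div_le (hg : ∀ n, |g n| ≤ 1) (B : ℕ) :
    |∑ b ∈ range B with Odd b, g b / b| ≤ 1 + Real.log B := by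
  refine (abs_sum_le_sum_abs _ _).trans ((sum_le_sum fun b _ => abs_map_div_self_le hg b).trans
    ((sum_le_sum_of_subset_of_nonneg (fun b hb => ?_) fun _ _ _ => by positivity).trans
      (sum_Icc_inv_le_one_add_log B)))
  obtain ⟨hb, ho⟩ := mem_filter.mp hb
  exact mem_Icc.mpr ⟨ho.pos, (mem_range.mp hb).le⟩

end BoundedCharacter

lemma abs_log_le_one_add_abs_log {x y : ℝ} (hy : 0 < y) (hxy : |x * y - 1| ≤ 1 / 2) :
    |Real.log x| ≤ 1 + |Real.log y| := by
  have hx : 0 < x := pos_of_mul_pos_left (by linarith [(abs_le.mp hxy).1]) hy.le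
  have hlog := Real.log_mul hx.ne' hy.ne'
  rw [show Real.log x = Real.log (x * y) - Real.log y by linarith]
  exact (abs_sub _ _).trans (add_le_add_left (abs_log_le_one hxy) _)

theorem eventually_abs_log_le_of_abs_sum_mollifiedCoeff_le (C : ℝ) :
    ∀ᶠ i : ℕ in atTop, ∀ (g : ℕ →* ℝ) (ℓ : ℝ), (∀ n, |g n| ≤ 1) →
    |ℓ - ∑ b ∈ range (2 ^ (42 * i)) with Odd b, g b / b| ≤ C / 2 ^ i →
    |∑ n ∈ Ioc (i ^ 4) (2 ^ i * 2 ^ (42 * i)) with Odd n,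
      mollifiedCoeff (i ^ 4) (2 ^ i) (2 ^ (42 * i)) n * g n / n| ≤ 1 / 4 →
    |Real.log ℓ| ≤ 1 + 2 * ∑ p ∈ oddPrimesLE (i ^ 4), (p : ℝ)⁻¹ := by
  filter_upwards [eventually_ge_atTop 20,
    (tendsto_inv_two_pow_mul_exp_log C).eventually_le_const (show (0 : ℝ) < 1 / 16 by norm_num),
    tendsto_mul_sum_inv_divisors_prod_oddPrimesLE.eventually_le_const
      (show (0 : ℝ) < 1 / 688 by norm_num)] with i hi hexp htail g ℓ hg htrunc hmoll
  have hi4 := pow_four_lt_two_pow hi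
  set y := i ^ 4
  set S := ∑ b ∈ range (2 ^ (42 * i)) with Odd b, g b / b
  set M := ∏ p ∈ oddPrimesLE y, (1 - g p / p)
  set R := ∑ a ∈ mollifierSupport y (2 ^ i), moebius a * g a / a
  have hM : 0 < M := prod_oddPrimesLE_one_sub_div_pos hg y
  have hinverse : |S * R - 1| ≤ 1 / 4 := by
    have hB : y < 2 ^ (42 * i) := hi4.trans_le (Nat.pow_le_pow_right two_pos (by omega))
    rwa [sum_mul_mollifier_eq_one_add (by positivity) hi4.le hB, add_sub_cancel_left]
  have htruncM : |(ℓ - S) * M| ≤ 1 / 16 := by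
    rw [abs_mul, abs_of_pos hM]
    refine (mul_le_mul htrunc (prod_oddPrimesLE_one_sub_div_le hg y) hM.le ?_).trans hexp
    exact (abs_nonneg _).trans htrunc
  have htailS : |S * (M - R)| ≤ 1 / 16 := by
    have hS : |S| ≤ 43 * i := by
      refine (abs_sum_range_odd_div_le hg _).trans ?_
      rw [Nat.cast_pow, Real.log_pow, Nat.cast_ofNat, Nat.cast_mul, Nat.cast_ofNat]
      have : (20 : ℝ) ≤ i := by exact_mod_cast hi
      nlinarith [Real.log_two_lt_d9]
    rw [abs_mul]
    have := mul_le_mul hS (abs_prod_sub_mollifier_le hg y (2 ^ i)) (abs_nonneg _)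
      (by positivity)
    linarith
  refine (abs_log_le_one_add_abs_log hM ?_).trans
    (add_le_add_right (abs_log_prod_one_sub_div_le hg y) 1)
  rw [show ℓ * M - 1 = S * R - 1 + (ℓ - S) * M + S * (M - R) by ring]
  linarith [abs_add_three (S * R - 1) ((ℓ - S) * M) (S * (M - R))]

end Mollification

section QuadraticCharacters

open Finset NumberTheorySymbols

lemma exists_signType_eq {q : ℕ} {χ : DirichletCharacter ℂ q} (hχ : χ.IsQuadratic) :
    ∃ g : ZMod q →* SignType, ∀ x, χ x = ((g x : ℝ) : ℂ) := by
  have hre (x) : χ x = ((χ x).re : ℂ) := by rcases hχ x with h | h | h <;> simp [h]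
  refine ⟨⟨⟨fun x => SignType.sign (χ x).re, by simp⟩, fun x y => ?_⟩, fun x => ?_⟩
  · change SignType.sign (χ (x * y)).re = _
    rw [map_mul, hre x, hre y, ← Complex.ofReal_mul, Complex.ofReal_re, sign_mul]
  · rcases hχ x with h | h | h <;> simp [h]

lemma eq_one_or_eq_quadraticChar {F : Type*} [Field F] [Fintype F] [DecidableEq F]
    {χ : MulChar F ℂ} (hχ : χ.IsQuadratic) :
    χ = 1 ∨ χ = (quadraticChar F).ringHomComp (Int.castRingHom ℂ) := by
  refine or_iff_not_imp_left.mpr fun hne => ?_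
  obtain ⟨g, hg⟩ := MulChar.ne_one_iff.mp hne
  have hneg : χ g = -1 := ((hχ g).resolve_left (g.isUnit.map χ).ne_zero).resolve_left hg
  have hsquare {x : F} (hx : x ≠ 0) (hsq : IsSquare x) : χ x = 1 := by
    obtain ⟨y, rfl⟩ := hsq
    rcases hχ y with h | h | h
    · exact absurd h ((IsUnit.mk0 y (left_ne_zero_of_mul hx)).map χ).ne_zero
    all_goals simp [h]
  have hgsq : quadraticChar F g = -1 := by
    refine (quadraticChar_eq_neg_one_iff_not_one g.ne_zero).mpr fun h => hg ?_
    exact hsquare g.ne_zero ((quadraticChar_one_iff_isSquare g.ne_zero).mp h)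
  ext u
  rw [MulChar.ringHomComp_apply]
  rcases quadraticChar_dichotomy u.ne_zero with h | h
  · simpa [h] using hsquare u.ne_zero ((quadraticChar_one_iff_isSquare u.ne_zero).mp h)
  · have hmul : χ (u * g) = 1 := by
      have h0 := mul_ne_zero u.ne_zero g.ne_zero
      refine hsquare h0 ((quadraticChar_one_iff_isSquare h0).mp ?_)
      rw [map_mul, h, hgsq, neg_mul_neg, one_mul]
    rw [map_mul, hneg] at hmul
    rw [h, map_neg, map_one]
    linear_combination -hmul

lemma exists_isQuadratic_mul_of_coprime {a b : ℕ} (hab : a.Coprime b)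
    {χ : DirichletCharacter ℂ (a * b)} (hχ : χ.IsQuadratic) :
    ∃ (χ₁ : DirichletCharacter ℂ a) (χ₂ : DirichletCharacter ℂ b),
      χ₁.IsQuadratic ∧ χ₂.IsQuadratic ∧ ∀ x : ℕ, χ x = χ₁ x * χ₂ x := by
  let e := (ZMod.chineseRemainder hab).symm
  have hunit {x : ZMod a × ZMod b} (hx : IsUnit (e x)) : IsUnit x.1 ∧ IsUnit x.2 :=
    Prod.isUnit_iff.mp ((isUnit_map_iff e x).mp hx)
  let χ₁ : DirichletCharacter ℂ a :=
    { toFun := fun x => χ (e (x, 1))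
      map_one' := by rw [← Prod.one_eq_mk, map_one, map_one]
      map_mul' := fun x y => by rw [← map_mul, ← map_mul, Prod.mk_mul_mk, one_mul]
      map_nonunit' := fun x hx => χ.map_nonunit fun h => hx (hunit h).1 }
  let χ₂ : DirichletCharacter ℂ b :=
    { toFun := fun y => χ (e (1, y))
      map_one' := by rw [← Prod.one_eq_mk, map_one, map_one]
      map_mul' := fun x y => by rw [← map_mul, ← map_mul, Prod.mk_mul_mk, one_mul]
      map_nonunit' := fun y hy => χ.map_nonunit fun h => hy (hunit h).2 }
  refine ⟨χ₁, χ₂, fun x => hχ _, fun y => hχ _, fun x => ?_⟩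
  change _ = χ (e (x, 1)) * χ (e (1, x))
  rw [← map_mul, ← map_mul, Prod.mk_mul_mk, mul_one, one_mul, ← map_natCast e]
  rfl

/-- The Jacobi symbol `(· | e)` as a character modulo `e`, in contrast to `jacobiChar`, where it is
a function of the lower argument. -/
def jacobiCharMod (e : ℕ) [NeZero e] : DirichletCharacter ℂ e where
  toFun x := (J(x.val | e) : ℂ)
  map_one' := by
    rw [jacobiSym.mod_left' (b := e) (a₂ := 1), jacobiSym.one_left, Int.cast_one]
    rw [ZMod.val_one_eq_one_mod]
    simp
  map_mul' x y := by
    rw [ZMod.val_mul, ← Int.cast_mul, ← jacobiSym.mul_left, jacobiSym.mod_left' (b := e)]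
    simp
  map_nonunit' x hx := by
    rw [← ZMod.natCast_zmod_val x, ZMod.isUnit_iff_coprime] at hx
    rw [jacobiSym.eq_zero_iff_not_coprime.mpr (by rwa [Int.gcd_natCast_natCast]),
      Int.cast_zero]

lemma jacobiCharMod_natCast (e : ℕ) [NeZero e] (x : ℕ) :
    jacobiCharMod e (x : ZMod e) = (J(x | e) : ℂ) := by
  change (J((x : ZMod e).val | e) : ℂ) = _
  rw [ZMod.val_natCast, Int.natCast_mod, ← jacobiSym.mod_left]

lemma exists_dvd_eq_jacobiSym {d : ℕ} (hsq : Squarefree d) (hodd : Odd d)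
    {χ : DirichletCharacter ℂ d} (hχ : χ.IsQuadratic) :
    ∃ e, e ∣ d ∧ ∀ x : ℕ, x.Coprime d → χ x = J(x | e) := by
  induction d using induction_on_primes with
  | zero => exact absurd hodd (by decide)
  | one => exact ⟨1, one_dvd _, fun x _ => by simp [Subsingleton.elim (x : ZMod 1) 1]⟩
  | prime_mul p d hp ih =>
    have : Fact p.Prime := ⟨hp⟩
    have hpd : p.Coprime d := Nat.coprime_of_squarefree_mul hsq
    obtain ⟨χ₁, χ₂, hχ₁, hχ₂, hmul⟩ := exists_isQuadratic_mul_of_coprime hpd hχ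
    obtain ⟨e, hed, he⟩ := ih hsq.of_mul_right (Nat.odd_mul.mp hodd).2 hχ₂
    rcases eq_one_or_eq_quadraticChar hχ₁ with rfl | rfl
    · refine ⟨e, hed.mul_left p, fun x hx => ?_⟩
      have hxp : IsUnit (x : ZMod p) :=
        (ZMod.isUnit_iff_coprime _ _).mpr hx.coprime_mul_right_right
      rw [hmul, he x hx.coprime_mul_left_right, MulChar.one_apply hxp, one_mul]
    · refine ⟨p * e, mul_dvd_mul_left p hed, fun x hx => ?_⟩
      have : NeZero p := ⟨hp.ne_zero⟩
      have : NeZero e := ⟨ne_zero_of_dvd_ne_zero hsq.of_mul_right.ne_zero hed⟩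
      rw [hmul, he x hx.coprime_mul_left_right, jacobiSym.mul_right,
        ← jacobiSym.legendreSym.to_jacobiSym p x, legendreSym]
      simp

lemma changeLevel_natCast {m n : ℕ} (hmn : m ∣ n) (χ : DirichletCharacter ℂ m) {x : ℕ}
    (hx : x.Coprime n) : DirichletCharacter.changeLevel hmn χ x = χ x := by
  have hx' : IsCoprime (x : ℤ) n := Nat.isCoprime_iff_coprime.mpr hx
  simpa using DirichletCharacter.changeLevel_eq_cast_of_dvd' χ hmn hx'

lemma ext_of_forall_coprime {n : ℕ} [NeZero n] {χ χ' : DirichletCharacter ℂ n}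
    (h : ∀ x : ℕ, x.Coprime n → χ x = χ' x) : χ = χ' := by
  ext u
  rw [← ZMod.natCast_zmod_val (u : ZMod n)]
  exact h _ (ZMod.val_coe_unit_coprime u)

/-- The product of a character modulo 8 with the Jacobi symbol `(· | e)`. Up to a change of
level, every quadratic character modulo a fundamental discriminant is of this form. -/
def twistedJacobiChar (θ : DirichletCharacter ℂ 8) (e : ℕ) [NeZero e] :
    DirichletCharacter ℂ (8 * e) :=
  DirichletCharacter.changeLevel (dvd_mul_right 8 e) θ *
    DirichletCharacter.changeLevel (dvd_mul_left e 8) (jacobiCharMod e)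

lemma twistedJacobiChar_natCast (θ : DirichletCharacter ℂ 8) (e : ℕ) [NeZero e] {x : ℕ}
    (hx : Odd x) : twistedJacobiChar θ e x = θ x * J(x | e) := by
  by_cases hxe : x.Coprime (8 * e)
  · rw [twistedJacobiChar, MulChar.mul_apply, changeLevel_natCast _ _ hxe,
      changeLevel_natCast _ _ hxe, jacobiCharMod_natCast]
  · have hxe' : ¬x.Coprime e := fun h =>
      hxe (((Nat.coprime_two_right.mpr hx).pow_right 3).mul_right h)
    rw [MulChar.map_nonunit _ (by rwa [ZMod.isUnit_iff_coprime]),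
      jacobiSym.eq_zero_iff_not_coprime.mpr (by rwa [Int.gcd_natCast_natCast]), Int.cast_zero,
      mul_zero]

lemma twistedJacobiChar_of_not_odd (θ : DirichletCharacter ℂ 8) (e : ℕ) [NeZero e] {x : ℕ}
    (hx : ¬Odd x) : twistedJacobiChar θ e x = 0 := by
  refine MulChar.map_nonunit _ fun h => hx ?_
  rw [ZMod.isUnit_iff_coprime] at h
  exact Nat.coprime_two_right.mp (h.coprime_dvd_right ⟨4 * e, by ring⟩)

lemma isQuadratic_twistedJacobiChar {θ : DirichletCharacter ℂ 8} (hθ : θ.IsQuadratic) (e : ℕ)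
    [NeZero e] : (twistedJacobiChar θ e).IsQuadratic := by
  intro x
  obtain ⟨y, rfl⟩ : ∃ y : ℕ, (y : ZMod (8 * e)) = x := ⟨x.val, ZMod.natCast_zmod_val x⟩
  by_cases hy : Odd y
  · rw [twistedJacobiChar_natCast θ e hy]
    rcases hθ y with h | h | h <;> rcases jacobiSym.trichotomy y e with h' | h' | h' <;>
      simp [h, h']
  · exact Or.inl (twistedJacobiChar_of_not_odd θ e hy)

theorem exists_changeLevel_eq_twistedJacobiChar {n a d : ℕ} [NeZero n] (hn : n = 2 ^ a * d)
    (ha : a ≤ 3) (hsq : Squarefree d) (hodd : Odd d) {χ : DirichletCharacter ℂ n}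
    (hχ : χ.IsQuadratic) :
    ∃ (e : ℕ) (_ : NeZero e) (θ : DirichletCharacter ℂ 8) (hen : e ∣ n), Odd e ∧ θ.IsQuadratic ∧
      DirichletCharacter.changeLevel (dvd_mul_left n 8) χ =
        DirichletCharacter.changeLevel (mul_dvd_mul_left 8 hen) (twistedJacobiChar θ e) := by
  subst hn
  obtain ⟨θ, ω, hθ, hω, hmul⟩ :=
    exists_isQuadratic_mul_of_coprime ((Nat.coprime_two_left.mpr hodd).pow_left a) hχ
  obtain ⟨e, hed, he⟩ := exists_dvd_eq_jacobiSym hsq hodd hω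
  have hodd_e : Odd e := hodd.of_dvd_nat hed
  have ha8 : 2 ^ a ∣ 8 := pow_dvd_pow 2 ha
  refine ⟨e, ⟨hodd_e.pos.ne'⟩, DirichletCharacter.changeLevel ha8 θ, hed.mul_left _, hodd_e, ?_,
    ext_of_forall_coprime fun x hx => ?_⟩
  · rw [MulChar.isQuadratic_iff_sq_eq_one, ← map_pow, hθ.sq_eq_one, map_one]
  · have hx8 : x.Coprime 8 := hx.coprime_mul_right_right
    have hxn : x.Coprime (2 ^ a * d) := hx.coprime_mul_left_right
    have hxodd : Odd x := Nat.coprime_two_right.mp (hx8.coprime_dvd_right ⟨4, rfl⟩)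
    have : NeZero e := ⟨hodd_e.pos.ne'⟩
    rw [changeLevel_natCast _ _ hx, changeLevel_natCast _ _ hx, hmul,
      he x hxn.coprime_mul_left_right, twistedJacobiChar_natCast _ _ hxodd,
      changeLevel_natCast _ _ hx8]

end QuadraticCharacters

section LOne

open Finset

lemma norm_sum_Ico_smul_le_of_antitoneOn {E : Type*} [NormedAddCommGroup E] [NormedSpace ℝ E]
    {f : ℕ → ℝ} {g : ℕ → E} {B : ℝ} {N : ℕ} (hf : AntitoneOn f (Set.Ici N))
    (hf0 : ∀ n, N ≤ n → 0 ≤ f n) (hB : ∀ n, ‖∑ i ∈ range n, g i‖ ≤ B) (M : ℕ) :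
    ‖∑ i ∈ Ico N M, f i • g i‖ ≤ 2 * B * f N := by
  have hB0 : 0 ≤ B := (norm_nonneg _).trans (hB 0)
  rcases le_or_gt M N with hMN | hNM
  · rw [Ico_eq_empty_of_le hMN, sum_empty, norm_zero]
    exact mul_nonneg (by positivity) (hf0 N le_rfl)
  have hNM' : N ≤ M - 1 := Nat.le_sub_one_of_lt hNM
  have hbound (a : ℝ) (n : ℕ) : ‖a • ∑ i ∈ range n, g i‖ ≤ |a| * B := by
    rw [norm_smul, Real.norm_eq_abs]
    gcongr
    exact hB n
  have hsteps : ‖∑ i ∈ Ico N (M - 1), (f (i + 1) - f i) • ∑ j ∈ range (i + 1), g j‖ ≤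
      (f N - f (M - 1)) * B := by
    rw [← neg_sub, ← sum_Ico_sub f hNM', ← sum_neg_distrib, sum_mul]
    refine norm_sum_le_of_le _ fun i hi => (hbound _ _).trans_eq ?_
    have hi : N ≤ i := (mem_Ico.mp hi).1
    rw [abs_of_nonpos (sub_nonpos.mpr (hf hi (hi.trans i.le_succ) i.le_succ))]
  rw [sum_Ico_by_parts f g hNM]
  calc _ ≤ |f (M - 1)| * B + |f N| * B + (f N - f (M - 1)) * B :=
        (norm_sub_le _ _).trans (add_le_add
          ((norm_sub_le _ _).trans (add_le_add (hbound _ _) (hbound _ _))) hsteps)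
    _ = 2 * B * f N := by
        rw [abs_of_nonneg (hf0 _ hNM'), abs_of_nonneg (hf0 N le_rfl)]
        ring

lemma norm_LSeries_sub_sum_range_le {q : ℕ} {χ : DirichletCharacter ℂ q} {B : ℝ}
    (hB : ∀ n, ‖∑ t ∈ range n, χ t‖ ≤ B) {N : ℕ} (hN : 0 < N) {s : ℝ}
    (hs : 1 < s) :
    ‖LSeries (fun n => χ n) s - ∑ n ∈ range N, LSeries.term (fun n => χ n) s n‖ ≤ 2 * B / N := by
  have hB0 : 0 ≤ B := (norm_nonneg _).trans (hB 0)
  have hsum := (χ.LSeriesSummable_of_one_lt_re (s := s) (by simpa)).hasSum.tendsto_sum_nat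
  refine le_of_tendsto (hsum.sub_const _).norm ?_
  filter_upwards [eventually_ge_atTop N] with M hM
  have hanti : AntitoneOn (fun n : ℕ => (n : ℝ) ^ (-s)) (Set.Ici N) := fun a ha b _ hab =>
    Real.rpow_le_rpow_of_nonpos (Nat.cast_pos.mpr (hN.trans_le ha)) (by exact_mod_cast hab)
      (by linarith)
  have hterm : ∑ n ∈ Ico N M, LSeries.term (fun n => χ n) s n =
      ∑ n ∈ Ico N M, ((n : ℝ) ^ (-s)) • χ n := by
    refine sum_congr rfl fun n hn => ?_
    rw [LSeries.term_of_ne_zero (by linarith [(mem_Ico.mp hn).1]), Complex.real_smul,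
      Complex.ofReal_cpow n.cast_nonneg, Complex.ofReal_neg, Complex.cpow_neg, div_eq_inv_mul,
      Complex.ofReal_natCast]
  rw [← sum_Ico_eq_sub _ hM, hterm, div_eq_mul_inv, ← Real.rpow_neg_one]
  refine (norm_sum_Ico_smul_le_of_antitoneOn hanti (fun n _ => by positivity) hB M).trans ?_
  gcongr
  exact_mod_cast hN

section

variable {q : ℕ} [NeZero q] {χ : DirichletCharacter ℂ q}

theorem norm_LFunction_one_sub_sum_range_le (hχ : χ ≠ 1) {B : ℝ}
    (hB : ∀ n, ‖∑ t ∈ range n, χ t‖ ≤ B) {N : ℕ} (hN : 0 < N) :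
    ‖χ.LFunction 1 - ∑ n ∈ range N, χ n / n‖ ≤ 2 * B / N := by
  have hcont : Continuous fun s : ℝ =>
      χ.LFunction s - ∑ n ∈ range N, LSeries.term (fun n => χ n) s n := by
    refine ((DirichletCharacter.differentiable_LFunction hχ).continuous.comp
      Complex.continuous_ofReal).sub (continuous_finsetSum _ fun n _ => ?_)
    rcases eq_or_ne n 0 with rfl | hn
    · simpa using continuous_const
    · simp_rw [LSeries.term_of_ne_zero hn]
      refine continuous_const.div (Complex.continuous_ofReal.const_cpow (Or.inl ?_)) fun s => ?_
      · exact_mod_cast hn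
      · simp [Complex.cpow_eq_zero_iff, hn]
  have hone : ∑ n ∈ range N, LSeries.term (fun n => χ n) (1 : ℝ) n = ∑ n ∈ range N, χ n / n :=
    sum_congr rfl fun n _ => by
      rcases eq_or_ne n 0 with rfl | hn
      · simp
      · simp [LSeries.term_of_ne_zero hn]
  rw [← hone, ← Complex.ofReal_one]
  refine le_of_tendsto (x := 𝓝[>] 1) ((hcont.tendsto 1).norm.mono_left nhdsWithin_le_nhds) ?_
  filter_upwards [self_mem_nhdsWithin] with s hs
  rw [DirichletCharacter.LFunction_eq_LSeries χ (by simpa using hs)]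
  exact norm_LSeries_sub_sum_range_le hB hN hs

lemma log_re_LFunction_one (hχ : χ.IsQuadratic) (hχ1 : χ ≠ 1) :
    Real.log (χ.LFunction 1).re = Real.log ‖χ.LFunction 1‖ := by
  obtain ⟨C, -, hC⟩ := exists_norm_sum_range_char_le_rpow one_pos
  obtain ⟨g, hg⟩ := exists_signType_eq hχ
  have him (N : ℕ) : (∑ n ∈ range N, χ n / n).im = 0 := by
    simp_rw [hg, ← Complex.ofReal_natCast, ← Complex.ofReal_div, ← Complex.ofReal_sum,
      Complex.ofReal_im]
  have htend : Tendsto (fun N : ℕ => 2 * (C * (q : ℝ) ^ (2 / 3 + 1 : ℝ)) / N) atTop (𝓝 0) :=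
    tendsto_const_div_atTop_nhds_zero_nat _
  have him1 : (χ.LFunction 1).im = 0 := by
    refine abs_nonpos_iff.mp (ge_of_tendsto htend ?_)
    filter_upwards [eventually_gt_atTop 0] with N hN
    refine le_trans ?_ (norm_LFunction_one_sub_sum_range_le hχ1 (hC q χ hχ1) hN)
    simpa only [Complex.sub_im, him, sub_zero] using
      Complex.abs_im_le_norm (χ.LFunction 1 - ∑ n ∈ range N, χ n / n)
  rw [← Complex.abs_re_eq_norm.mpr him1, Real.log_abs]

lemma abs_log_norm_LFunction_one_changeLevel_sub_le {n : ℕ} [NeZero n] (hqn : q ∣ n)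
    (hχ : χ ≠ 1) :
    |Real.log ‖(DirichletCharacter.changeLevel hqn χ).LFunction 1‖ - Real.log ‖χ.LFunction 1‖| ≤
      2 * ∑ p ∈ n.primeFactors, (p : ℝ)⁻¹ := by
  let u (p : ℕ) : ℝ := 1 - ‖1 - χ p * (p : ℂ) ^ (-1 : ℂ)‖
  have hu (p : ℕ) : |u p| ≤ (p : ℝ)⁻¹ := by
    refine le_trans (by simpa using abs_norm_sub_norm_le 1 (1 - χ p * (p : ℂ) ^ (-1 : ℂ))) ?_
    rw [Complex.cpow_neg_one, norm_inv, Complex.norm_natCast]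
    exact mul_le_of_le_one_left (by positivity) (χ.norm_le_one _)
  have hu2 : ∀ p ∈ n.primeFactors, |u p| ≤ 1 / 2 := fun p hp => (hu p).trans <| by
    rw [one_div]
    gcongr
    exact_mod_cast (Nat.prime_of_mem_primeFactors hp).two_le
  have heuler : ∏ p ∈ n.primeFactors, ‖1 - χ p * (p : ℂ) ^ (-1 : ℂ)‖ =
      ∏ p ∈ n.primeFactors, (1 - u p) :=
    prod_congr rfl fun p _ => (sub_sub_cancel 1 _).symm
  have hprod : ∏ p ∈ n.primeFactors, (1 - u p) ≠ 0 :=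
    prod_ne_zero_iff.mpr fun p hp => by linarith [(abs_le.mp (hu2 p hp)).2]
  rw [DirichletCharacter.LFunction_changeLevel hqn χ (Or.inl hχ), norm_mul, norm_prod, heuler,
    Real.log_mul (norm_ne_zero_iff.mpr (DirichletCharacter.LFunction_apply_one_ne_zero hχ)) hprod,
    add_sub_cancel_left]
  refine (abs_log_prod_one_sub_le _ hu2).trans ?_
  gcongr with p _
  exact hu p

end

open NumberTheorySymbols in
lemma exists_monoidHom_eq_twistedJacobiChar {θ : DirichletCharacter ℂ 8} (hθ : θ.IsQuadratic)
    (e : ℕ) [NeZero e] : ∃ (g : ℕ →* ℝ) (ψ : ZMod 8 → SignType), (∀ n, |g n| ≤ 1) ∧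
      (∀ n : ℕ, twistedJacobiChar θ e n = g n) ∧ (∀ n, ¬Odd n → g n = 0) ∧
      ∀ n : ℕ, Odd n → g n = ((ψ n : ℤ) : ℝ) * J(n | e) := by
  obtain ⟨g, hg⟩ := exists_signType_eq (isQuadratic_twistedJacobiChar hθ e)
  obtain ⟨ψ, hψ⟩ := exists_signType_eq hθ
  let g' : ℕ →* ℝ := (SignType.castHom (α := ℝ) : SignType →* ℝ).comp
    (g.comp (Nat.castRingHom (ZMod (8 * e)) : ℕ →* ZMod (8 * e)))
  have hg' (n : ℕ) : twistedJacobiChar θ e n = g' n := hg n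
  refine ⟨g', ψ, fun n => ?_, hg', fun n hn => ?_, fun n hn => ?_⟩
  · rw [← Real.norm_eq_abs, ← Complex.norm_real, ← hg']
    exact DirichletCharacter.norm_le_one _ _
  · rw [← Complex.ofReal_eq_zero, ← hg', twistedJacobiChar_of_not_odd θ e hn]
  · rw [← Complex.ofReal_inj, ← hg', twistedJacobiChar_natCast θ e hn, hψ]
    push_cast
    congr 1

lemma exists_norm_sum_range_twistedJacobiChar_le : ∃ C, ∀ (e : ℕ) [NeZero e]
    (θ : DirichletCharacter ℂ 8), twistedJacobiChar θ e ≠ 1 → ∀ n : ℕ,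
      ‖∑ t ∈ range n, twistedJacobiChar θ e t‖ ≤ C * 2 ^ (41 * scale e) := by
  obtain ⟨C, hC0, hC⟩ := exists_norm_sum_range_char_le_rpow (ε := 1 / 60) (by norm_num)
  refine ⟨C * 2 ^ 44, fun e _ θ hne n => (hC _ _ hne n).trans ?_⟩
  have hlt : 8 * e ≤ 2 ^ (60 * scale e + 63) := by
    rw [pow_add _ (60 * scale e + 60) 3]
    linarith [lt_two_pow_scale e]
  rw [mul_assoc, ← pow_add]
  gcongr
  calc ((8 * e : ℕ) : ℝ) ^ (2 / 3 + 1 / 60 : ℝ)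
      ≤ (2 ^ ((60 * scale e + 63 : ℕ) : ℝ)) ^ (2 / 3 + 1 / 60 : ℝ) := by
        rw [Real.rpow_natCast]
        exact Real.rpow_le_rpow (Nat.cast_nonneg _) (by exact_mod_cast hlt) (by norm_num)
    _ ≤ 2 ^ ((44 + 41 * scale e : ℕ) : ℝ) := by
        rw [← Real.rpow_mul zero_le_two]
        gcongr
        · exact one_le_two
        · push_cast
          linarith
    _ = 2 ^ (44 + 41 * scale e) := Real.rpow_natCast _ _

theorem eventually_abs_log_norm_LFunction_twistedJacobiChar_le : ∀ᶠ i : ℕ in atTop,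
    ∀ (e : ℕ) [NeZero e] (θ : DirichletCharacter ℂ 8), scale e = i → ¬ExceptionalAt i e →
      θ.IsQuadratic → twistedJacobiChar θ e ≠ 1 →
        |Real.log ‖(twistedJacobiChar θ e).LFunction 1‖| ≤
          1 + 2 * ∑ p ∈ oddPrimesLE (i ^ 4), (p : ℝ)⁻¹ := by
  obtain ⟨C, hC⟩ := exists_norm_sum_range_twistedJacobiChar_le
  filter_upwards [eventually_abs_log_le_of_abs_sum_mollifiedCoeff_le (2 * C)]
    with i hi e _ θ hei hexc hθ hne
  obtain ⟨g, ψ, hg1, hχg, hgeven, hgodd⟩ := exists_monoidHom_eq_twistedJacobiChar hθ e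
  rw [← log_re_LFunction_one (isQuadratic_twistedJacobiChar hθ e) hne]
  have hsum : ∑ n ∈ range (2 ^ (42 * i)) with Odd n, g n / n =
      (∑ n ∈ range (2 ^ (42 * i)), twistedJacobiChar θ e n / n).re := by
    rw [sum_filter, Complex.re_sum]
    refine sum_congr rfl fun n _ => ?_
    rw [hχg, ← Complex.ofReal_natCast, ← Complex.ofReal_div, Complex.ofReal_re]
    split_ifs with hn
    · rfl
    · rw [hgeven n hn, zero_div]
  refine hi g _ hg1 ?_ ?_
  · rw [hsum, ← Complex.sub_re]
    refine (Complex.abs_re_le_norm _).trans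
      ((norm_LFunction_one_sub_sum_range_le hne (hC e θ hne) (by positivity)).trans_eq ?_)
    rw [hei, Nat.cast_pow, Nat.cast_ofNat, show 42 * i = i + 41 * i by ring, pow_add]
    field_simp
  · rw [← not_lt]
    refine fun hlarge => hexc ⟨ψ, hlarge.trans_eq (congrArg abs (sum_congr rfl fun n hn => ?_))⟩
    rw [hgodd n (mem_filter.mp hn).2]
    ring

end LOne

section QuadraticBound

open Finset

lemma exists_abs_log_norm_LFunction_one_le (Q : ℕ) : ∃ G : ℝ, ∀ q < Q, ∀ [NeZero q]
    (χ : DirichletCharacter ℂ q), |Real.log ‖χ.LFunction 1‖| ≤ G := by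
  have hbdd (q : ℕ) : ∃ G : ℝ, ∀ [NeZero q] (χ : DirichletCharacter ℂ q),
      |Real.log ‖χ.LFunction 1‖| ≤ G := by
    rcases eq_or_ne q 0 with rfl | hq
    · exact ⟨0, fun {h} => absurd rfl h.out⟩
    · have : NeZero q := ⟨hq⟩
      obtain ⟨G, hG⟩ := (Set.finite_range fun χ : DirichletCharacter ℂ q =>
        |Real.log ‖χ.LFunction 1‖|).bddAbove
      exact ⟨G, fun χ => hG ⟨χ, rfl⟩⟩
  choose G hG using hbdd
  obtain ⟨M, hM⟩ := ((range Q).image G).exists_le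
  exact ⟨M, fun q hq _ χ => (hG q χ).trans (hM _ (mem_image_of_mem G (mem_range.mpr hq)))⟩

lemma sum_inv_oddPrimesLE_scale_le {e m : ℕ} (hm : Nat.log 2 e < 2 ^ m) (hm0 : m ≠ 0) :
    ∑ p ∈ oddPrimesLE (scale e ^ 4), (p : ℝ)⁻¹ ≤ 8 * (1 + Real.log 4 + Real.log m) := by
  have hscale : scale e ^ 4 ≤ 2 ^ (4 * m) := by
    rw [mul_comm, pow_mul]
    exact Nat.pow_le_pow_left ((Nat.div_le_self _ _).trans hm.le) 4
  calc ∑ p ∈ oddPrimesLE (scale e ^ 4), (p : ℝ)⁻¹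
      ≤ ∑ p ∈ Nat.primesLE (2 ^ (4 * m)), (p : ℝ)⁻¹ :=
        sum_le_sum_of_subset_of_nonneg
          ((erase_subset _ _).trans (Nat.primesLE_mono hscale)) fun _ _ _ => by positivity
    _ ≤ 8 * (1 + Real.log (4 * m : ℕ)) := sum_inv_primesLE_two_pow_le _
    _ = 8 * (1 + Real.log 4 + Real.log m) := by
        rw [Nat.cast_mul, Real.log_mul (by simp) (by exact_mod_cast hm0), Nat.cast_ofNat,
          add_assoc]

theorem eventually_exists_abs_log_norm_LFunction_twistedJacobiChar_le : ∀ᶠ E : ℕ in atTop,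
    ∃ G : ℝ, ∀ (e : ℕ) [NeZero e] (θ : DirichletCharacter ℂ 8), (E ≤ e → ¬Exceptional e) →
      Odd e → θ.IsQuadratic → twistedJacobiChar θ e ≠ 1 → ∀ m : ℕ, Nat.log 2 e < 2 ^ m → m ≠ 0 →
        |Real.log ‖(twistedJacobiChar θ e).LFunction 1‖| ≤ G + 16 * Real.log m := by
  obtain ⟨i, hi⟩ := eventually_atTop.mp eventually_abs_log_norm_LFunction_twistedJacobiChar_le
  filter_upwards [eventually_ge_atTop (2 ^ (60 * i))] with E hE
  obtain ⟨G, hG⟩ := exists_abs_log_norm_LFunction_one_le (8 * E)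
  refine ⟨max G 0 + (17 + 16 * Real.log 4), fun e _ θ hexc hodd hθ hne m hm hm0 => ?_⟩
  rcases lt_or_ge e E with heE | hEe
  · have hlog4 : 0 ≤ Real.log 4 := Real.log_nonneg (by norm_num)
    have hlogm : 0 ≤ Real.log m := Real.log_natCast_nonneg m
    have := hG (8 * e) (Nat.mul_lt_mul_of_pos_left heE (by norm_num)) (twistedJacobiChar θ e)
    linarith [le_max_left G 0]
  · have hscale : i ≤ scale e := by
      rw [scale, Nat.le_div_iff_mul_le (by norm_num), mul_comm]
      exact Nat.le_log_of_pow_le one_lt_two (hE.trans hEe)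
    have := hi _ hscale e θ rfl (fun h => hexc hEe ⟨hodd, h⟩) hθ hne
    linarith [sum_inv_oddPrimesLE_scale_le hm hm0, le_max_right G 0]

theorem eventually_exists_abs_log_norm_LFunction_one_le : ∀ᶠ E : ℕ in atTop, ∃ G : ℝ,
    ∀ (n a d : ℕ) [NeZero n], n = 2 ^ a * d → a ≤ 3 → Squarefree d → Odd d →
      (∀ e, Exceptional e → E ≤ e → ¬e ∣ n) → ∀ m : ℕ, Nat.log 2 (8 * n) < 2 ^ m →
        ∀ χ : DirichletCharacter ℂ n, χ.IsQuadratic → χ ≠ 1 →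
          |Real.log ‖χ.LFunction 1‖| ≤ G + 48 * Real.log m := by
  filter_upwards [eventually_exists_abs_log_norm_LFunction_twistedJacobiChar_le] with E ⟨G, hG⟩
  refine ⟨G + 36, fun n a d _ hn ha hsq hodd hexc m hm χ hχ hχ1 => ?_⟩
  obtain ⟨e, _, θ, hen, hodd_e, hθ, hlevel⟩ :=
    exists_changeLevel_eq_twistedJacobiChar hn ha hsq hodd hχ
  have hne : twistedJacobiChar θ e ≠ 1 := by
    rwa [Ne, ← DirichletCharacter.changeLevel_eq_one_iff (mul_dvd_mul_left 8 hen), ← hlevel,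
      DirichletCharacter.changeLevel_eq_one_iff]
  have hn0 : n ≠ 0 := NeZero.ne n
  have he : e ≤ 8 * n := Nat.le_of_dvd (by positivity) (hen.mul_left 8)
  have hm0 : m ≠ 0 := by
    rintro rfl
    have := Nat.le_log_of_pow_le one_lt_two (show 2 ^ 3 ≤ 8 * n by omega)
    omega
  have htwist := hG e θ (fun hEe h => hexc e h hEe hen) hodd_e hθ hne m
    ((Nat.log_mono_right he).trans_lt hm) hm0
  have hsum := sum_inv_primeFactors_le (mul_ne_zero (by norm_num) hn0) hm
  have hup := abs_log_norm_LFunction_one_changeLevel_sub_le (dvd_mul_left n 8) hχ1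
  have hdown := abs_log_norm_LFunction_one_changeLevel_sub_le (mul_dvd_mul_left 8 hen) hne
  rw [← hlevel] at hdown
  rw [abs_le] at htwist hup hdown ⊢
  constructor <;> linarith

end QuadraticBound

section FundamentalDiscriminants

open Finset

lemma IsFundDiscr.exists_natAbs_eq {D : ℤ} (hD : IsFundDiscr D) :
    ∃ a d : ℕ, D.natAbs = 2 ^ a * d ∧ a ≤ 3 ∧ Squarefree d ∧ Odd d := by
  obtain ⟨s, hs, hDs⟩ : ∃ s : ℕ, Squarefree s ∧ D.natAbs ∣ 4 * s := by
    rcases hD.2 with h | ⟨m, rfl, hm, -⟩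
    · exact ⟨D.natAbs, Int.squarefree_natAbs.mpr h.1, dvd_mul_left _ _⟩
    · exact ⟨m.natAbs, Int.squarefree_natAbs.mpr hm, (Int.natAbs_mul 4 m).dvd⟩
  have hD0 : D.natAbs ≠ 0 := ne_zero_of_dvd_ne_zero (mul_ne_zero (by norm_num) hs.ne_zero) hDs
  obtain ⟨a, d, hd, hDad⟩ := Nat.exists_eq_two_pow_mul_odd hD0
  rw [hDad] at hDs
  refine ⟨a, d, hDad, ?_, hs.squarefree_of_dvd ?_, hd⟩
  · by_contra! ha
    have h16 : 4 * (2 * 2) ∣ 4 * s := ((pow_dvd_pow 2 ha).mul_right d).trans hDs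
    exact absurd (hs 2 (Nat.dvd_of_mul_dvd_mul_left (by norm_num) h16)) (by decide)
  · exact Nat.Coprime.dvd_of_dvd_mul_left ((Nat.coprime_two_right.mpr hd).pow_right 2)
      ((dvd_mul_left d _).trans hDs)

lemma IsFundDiscr.natAbs_ne_zero {D : ℤ} (hD : IsFundDiscr D) : D.natAbs ≠ 0 := by
  obtain ⟨a, d, h, -, -, hd⟩ := hD.exists_natAbs_eq
  rw [h]
  exact mul_ne_zero (by positivity) hd.pos.ne'

lemma exists_isFundDiscr_natAbs_eq {n : ℕ} (hn : Odd n) (hsq : Squarefree n) (hn1 : n ≠ 1) :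
    ∃ D : ℤ, IsFundDiscr D ∧ D.natAbs = n := by
  have hsq' : Squarefree (n : ℤ) := Int.squarefree_natCast.mpr hsq
  rcases Nat.odd_mod_four_iff.mp (Nat.odd_iff.mp hn) with h | h
  · exact ⟨n, ⟨by omega, Or.inl ⟨hsq', by omega⟩⟩, by simp⟩
  · have hneg : Squarefree (-n : ℤ) := fun x hx => hsq' x (dvd_neg.mp hx)
    exact ⟨-n, ⟨by omega, Or.inl ⟨hneg, by omega⟩⟩, by simp⟩

lemma sum_range_inv_sq_odd_le (K : ℕ) :
    ∑ k ∈ range K, (((2 * k + 3) ^ 2 : ℕ) : ℝ)⁻¹ ≤ 1 / 4 - 1 / (4 * (K + 1)) := by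
  induction K with
  | zero => norm_num
  | succ K ih =>
    have hstep : (((2 * K + 3) ^ 2 : ℕ) : ℝ)⁻¹ ≤
        1 / (4 * (K + 1)) - 1 / (4 * ((K + 1 : ℕ) + 1)) := by
      push_cast
      rw [div_sub_div _ _ (by positivity) (by positivity), inv_eq_one_div,
        div_le_div_iff₀ (by positivity) (by positivity)]
      nlinarith [K.cast_nonneg (α := ℝ)]
    rw [sum_range_succ]
    linarith

lemma card_filter_dvd_le (N e : ℕ) : (#{n ∈ Ioc 0 N | e ∣ n} : ℝ) ≤ N * (e : ℝ)⁻¹ := by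
  rw [Nat.Ioc_filter_dvd_card_eq_div, ← div_eq_mul_inv]
  exact Nat.cast_div_le

lemma le_card_filter_odd_squarefree (N : ℕ) :
    (N / 4 : ℝ) ≤ #{n ∈ Ioc 0 N | Odd n ∧ Squarefree n} := by
  have hsub : Ioc 0 N ⊆ {n ∈ Ioc 0 N | Odd n ∧ Squarefree n} ∪ ({n ∈ Ioc 0 N | 2 ∣ n} ∪
      (range N).biUnion fun k => {n ∈ Ioc 0 N | (2 * k + 3) ^ 2 ∣ n}) := fun n hnN => by
    simp only [mem_union, mem_biUnion, mem_filter, hnN, true_and]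
    refine or_iff_not_imp_left.mpr fun hnot => or_iff_not_imp_left.mpr fun h2 => ?_
    have hodd : Odd n := Nat.not_even_iff_odd.mp (mt even_iff_two_dvd.mp h2)
    obtain ⟨b, hb, hb1⟩ : ∃ b, b * b ∣ n ∧ b ≠ 1 := by
      simpa [Squarefree] using mt (And.intro hodd) hnot
    obtain ⟨j, rfl⟩ : Odd b := hodd.of_dvd_nat (dvd_of_mul_left_dvd hb)
    have hbn : 2 * j + 1 ≤ n := Nat.le_of_dvd hodd.pos (dvd_of_mul_left_dvd hb)
    have hnN := (mem_Ioc.mp hnN).2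
    refine ⟨j - 1, mem_range.mpr (by omega), ?_⟩
    rwa [show 2 * (j - 1) + 3 = 2 * j + 1 by omega, sq]
  have hcard : (N : ℝ) ≤ #{n ∈ Ioc 0 N | Odd n ∧ Squarefree n} + (#{n ∈ Ioc 0 N | 2 ∣ n} +
      ∑ k ∈ range N, (#{n ∈ Ioc 0 N | (2 * k + 3) ^ 2 ∣ n} : ℝ)) := by
    have := (card_le_card hsub).trans ((card_union_le _ _).trans
      (Nat.add_le_add_left ((card_union_le _ _).trans (Nat.add_le_add_left card_biUnion_le _)) _))
    rw [Nat.card_Ioc, Nat.sub_zero] at this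
    exact_mod_cast this
  have hsquares : ∑ k ∈ range N, (#{n ∈ Ioc 0 N | (2 * k + 3) ^ 2 ∣ n} : ℝ) ≤ N * (1 / 4) :=
    calc _ ≤ ∑ k ∈ range N, N * (((2 * k + 3) ^ 2 : ℕ) : ℝ)⁻¹ :=
          sum_le_sum fun k _ => card_filter_dvd_le N _
      _ ≤ N * (1 / 4) := by
          have : (0 : ℝ) ≤ 1 / (4 * (N + 1)) := by positivity
          rw [← mul_sum]
          gcongr
          linarith [sum_range_inv_sq_odd_le N]
  linarith [card_filter_dvd_le N 2]

open Classical in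
lemma fdCount_eq_card (P : ℤ → Prop) (X : ℝ) :
    fdCount P X = #{D ∈ Icc (-⌊X⌋) ⌊X⌋ | IsFundDiscr D ∧ P D} := by
  refine Nat.subtype_card _ fun D => ?_
  rw [mem_filter, mem_Icc, ← abs_le, Int.le_floor, Int.cast_abs]
  tauto

lemma fdCount_mono {P Q : ℤ → Prop} (h : ∀ D, P D → Q D) (X : ℝ) : fdCount P X ≤ fdCount Q X := by
  classical
  rw [fdCount_eq_card, fdCount_eq_card]
  exact card_le_card (monotone_filter_right _ fun D _ hD => hD.imp_right (h D))

lemma fdCount_add_fdCount_not (P : ℤ → Prop) (X : ℝ) :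
    fdCount P X + fdCount (fun D => ¬P D) X = fdCount (fun _ => True) X := by
  classical
  simp only [fdCount_eq_card, and_true, ← filter_filter]
  convert! card_filter_add_card_filter_not _

lemma FdDensityOne.mono {P Q : ℤ → Prop} (hP : FdDensityOne P) (h : ∀ D, P D → Q D) :
    FdDensityOne Q :=
  tendsto_of_tendsto_of_tendsto_of_le_of_le hP tendsto_const_nhds
    (fun X => by dsimp only; gcongr; exact fdCount_mono h X)
    (fun X => div_le_one_of_le₀ (Nat.cast_le.mpr (fdCount_mono (fun _ _ => trivial) X))
      (Nat.cast_nonneg _))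

lemma card_le_fdCount {P : ℤ → Prop} {X : ℝ} {S : Finset ℕ}
    (hS : ∀ n ∈ S, (n : ℝ) ≤ X ∧ ∃ D : ℤ, IsFundDiscr D ∧ P D ∧ D.natAbs = n) :
    #S ≤ fdCount P X := by
  classical
  rw [fdCount_eq_card]
  refine (card_le_card fun n hn => ?_).trans (card_image_le (f := Int.natAbs))
  obtain ⟨hnX, D, hD, hPD, rfl⟩ := hS n hn
  rw [Nat.cast_natAbs, ← Int.le_floor] at hnX
  exact mem_image_of_mem _ (mem_filter.mpr ⟨mem_Icc.mpr (abs_le.mp hnX), hD, hPD⟩)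

lemma fdCount_le_two_mul_card {P : ℤ → Prop} {X : ℝ} {S : Finset ℕ}
    (hS : ∀ D : ℤ, IsFundDiscr D → P D → (D.natAbs : ℝ) ≤ X → D.natAbs ∈ S) :
    fdCount P X ≤ 2 * #S := by
  classical
  rw [fdCount_eq_card]
  refine (card_le_mul_card_image (f := Int.natAbs) _ 2 fun n _ => ?_).trans
    (Nat.mul_le_mul_left 2 (card_le_card (image_subset_iff.mpr fun D hD => ?_)))
  · refine (card_le_card (t := {(n : ℤ), -(n : ℤ)}) fun D hD => ?_).trans card_le_two
    have := (mem_filter.mp hD).2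
    rw [mem_insert, mem_singleton]
    omega
  · obtain ⟨hDX, hD, hPD⟩ := mem_filter.mp hD
    refine hS D hD hPD ?_
    rw [Nat.cast_natAbs, ← Int.le_floor]
    exact abs_le.mpr (mem_Icc.mp hDX)

lemma le_fdCount_true {X : ℝ} (hX : 0 ≤ X) : X / 4 - 2 ≤ fdCount (fun _ => True) X := by
  have hcard := card_le_fdCount (P := fun _ => True) (X := X)
    (S := {n ∈ Ioc 0 ⌊X⌋₊ | Odd n ∧ Squarefree n}.erase 1) fun n hn => by
      obtain ⟨hn1, hn⟩ := mem_erase.mp hn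
      obtain ⟨hnN, hodd, hsq⟩ := mem_filter.mp hn
      obtain ⟨D, hD, hDn⟩ := exists_isFundDiscr_natAbs_eq hodd hsq hn1
      exact ⟨(Nat.le_floor_iff hX).mp (mem_Ioc.mp hnN).2, D, hD, trivial, hDn⟩
  have hcard' : (#{n ∈ Ioc 0 ⌊X⌋₊ | Odd n ∧ Squarefree n} : ℝ) ≤
      fdCount (fun _ => True) X + 1 := by
    exact_mod_cast Nat.sub_le_iff_le_add.mp (pred_card_le_card_erase.trans hcard)
  linarith [le_card_filter_odd_squarefree ⌊X⌋₊, Nat.lt_floor_add_one X]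

lemma fdDensityOne_of_isLittleO {P : ℤ → Prop}
    (h : (fun X : ℝ => (fdCount (fun D => ¬P D) X : ℝ)) =o[atTop] (fun X : ℝ => X)) :
    FdDensityOne P := by
  have hbig : (fun X : ℝ => X) =O[atTop] fun X => (fdCount (fun _ => True) X : ℝ) := by
    refine Asymptotics.IsBigO.of_bound 8 ?_
    filter_upwards [eventually_ge_atTop 16] with X hX
    rw [Real.norm_of_nonneg (by linarith), Real.norm_natCast]
    linarith [le_fdCount_true (X := X) (by linarith)]
  have htend := ((h.trans_isBigO hbig).tendsto_div_nhds_zero).const_sub 1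
  rw [sub_zero] at htend
  refine htend.congr' ?_
  filter_upwards [eventually_gt_atTop 8] with X hX
  have hpos : 0 < (fdCount (fun _ => True) X : ℝ) := by
    linarith [le_fdCount_true (X := X) (by linarith)]
  rw [one_sub_div hpos.ne', div_left_inj' hpos.ne', ← fdCount_add_fdCount_not P]
  push_cast
  ring

open Classical in
lemma card_filter_exists_dvd_le {S : Set ℕ}
    (hS : Summable (S.indicator fun e : ℕ => (e : ℝ)⁻¹)) (E N : ℕ) :
    (#{n ∈ Ioc 0 N | ∃ e ∈ S, E ≤ e ∧ e ∣ n} : ℝ) ≤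
      N * ∑' k, S.indicator (fun e : ℕ => (e : ℝ)⁻¹) (k + E) := by
  have hsub : {n ∈ Ioc 0 N | ∃ e ∈ S, E ≤ e ∧ e ∣ n} ⊆
      {k ∈ range (N + 1) | k + E ∈ S}.biUnion fun k => {n ∈ Ioc 0 N | k + E ∣ n} := fun n hn => by
    obtain ⟨hnN, e, he, hEe, hen⟩ := mem_filter.mp hn
    obtain ⟨k, rfl⟩ := Nat.exists_eq_add_of_le' hEe
    obtain ⟨hn0, hnN'⟩ := mem_Ioc.mp hnN
    have := Nat.le_of_dvd hn0 hen
    exact mem_biUnion.mpr ⟨k, mem_filter.mpr ⟨mem_range.mpr (by omega), he⟩,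
      mem_filter.mpr ⟨hnN, hen⟩⟩
  calc (#{n ∈ Ioc 0 N | ∃ e ∈ S, E ≤ e ∧ e ∣ n} : ℝ)
      ≤ ∑ k ∈ range (N + 1) with k + E ∈ S, (#{n ∈ Ioc 0 N | k + E ∣ n} : ℝ) := by
        exact_mod_cast (card_le_card hsub).trans card_biUnion_le
    _ ≤ ∑ k ∈ range (N + 1) with k + E ∈ S, N * ((k + E : ℕ) : ℝ)⁻¹ :=
        sum_le_sum fun k _ => card_filter_dvd_le N (k + E)
    _ = N * ∑ k ∈ range (N + 1), S.indicator (fun e : ℕ => (e : ℝ)⁻¹) (k + E) := by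
        rw [← mul_sum, sum_filter]
        rfl
    _ ≤ N * ∑' k, S.indicator (fun e : ℕ => (e : ℝ)⁻¹) (k + E) := by
        gcongr
        refine ((summable_nat_add_iff E).mpr hS).sum_le_tsum _ fun k _ => ?_
        exact Set.indicator_nonneg (fun _ _ => by positivity) _

theorem fdDensityOne_of_summable_inv {S : Set ℕ}
    (hS : Summable (S.indicator fun e : ℕ => (e : ℝ)⁻¹)) {P : ℤ → Prop}
    (hP : ∀ᶠ E : ℕ in atTop, ∀ᶠ D : ℤ in cofinite, IsFundDiscr D →
      (∀ e ∈ S, E ≤ e → ¬e ∣ D.natAbs) → P D) : FdDensityOne P := by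
  classical
  refine fdDensityOne_of_isLittleO (Asymptotics.isLittleO_iff.mpr fun c hc => ?_)
  have htail := tendsto_sum_nat_add (S.indicator fun e : ℕ => (e : ℝ)⁻¹)
  obtain ⟨E, hfin, hE⟩ :=
    (hP.and (htail.eventually (ge_mem_nhds (show (0 : ℝ) < c / 4 by positivity)))).exists
  let F : Finset ℕ := hfin.toFinset.image Int.natAbs
  filter_upwards [eventually_ge_atTop (4 * #F / c)] with X hX
  have hX0 : 0 ≤ X := le_trans (by positivity) hX
  have hcount : fdCount (fun D => ¬P D) X ≤
      2 * #(F ∪ {n ∈ Ioc 0 ⌊X⌋₊ | ∃ e ∈ S, E ≤ e ∧ e ∣ n}) :=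
    fdCount_le_two_mul_card fun D hD hPD hDX => by
      by_cases hdvd : ∃ e ∈ S, E ≤ e ∧ e ∣ D.natAbs
      · refine mem_union_right _ (mem_filter.mpr ⟨mem_Ioc.mpr ⟨?_, ?_⟩, hdvd⟩)
        · exact Nat.pos_of_ne_zero hD.natAbs_ne_zero
        · exact Nat.le_floor hDX
      · push Not at hdvd
        exact mem_union_left _ (mem_image_of_mem _
          (hfin.mem_toFinset.mpr fun h => hPD (h hD hdvd)))
  have hcount' : (fdCount (fun D => ¬P D) X : ℝ) ≤
      2 * (#F + #{n ∈ Ioc 0 ⌊X⌋₊ | ∃ e ∈ S, E ≤ e ∧ e ∣ n}) := by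
    exact_mod_cast hcount.trans (Nat.mul_le_mul_left 2 (card_union_le _ _))
  have hdvd : (#{n ∈ Ioc 0 ⌊X⌋₊ | ∃ e ∈ S, E ≤ e ∧ e ∣ n} : ℝ) ≤ X * (c / 4) :=
    (card_filter_exists_dvd_le hS E _).trans <| by
      gcongr
      · exact tsum_nonneg fun _ => Set.indicator_nonneg (fun _ _ => by positivity) _
      · exact Nat.floor_le hX0
  rw [div_le_iff₀ hc] at hX
  rw [Real.norm_natCast, Real.norm_of_nonneg hX0]
  linarith

end FundamentalDiscriminants

section MainTheorem

lemma tendsto_abs_intCast_cofinite_atTop : Tendsto (fun D : ℤ => |(D : ℝ)|) cofinite atTop :=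
  tendsto_norm_cocompact_atTop.comp Int.tendsto_coe_cofinite

lemma eventually_sq_add_mul_log_ceil_le (A B : ℝ) {δ : ℝ} (hδ : 0 < δ) :
    ∀ᶠ u : ℝ in atTop, (A + B * Real.log ⌈4 * u⌉₊) ^ 2 ≤ u ^ δ := by
  have hceil : (fun u : ℝ => Real.log ⌈4 * u⌉₊) =O[atTop] Real.log := by
    refine Asymptotics.IsBigO.of_bound 2 ?_
    filter_upwards [eventually_ge_atTop 5] with u hu
    have hle : (⌈4 * u⌉₊ : ℝ) ≤ u ^ 2 :=
      (Nat.ceil_lt_add_one (by linarith)).le.trans (by nlinarith)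
    have hone : (1 : ℝ) ≤ ⌈4 * u⌉₊ := by linarith [Nat.le_ceil (4 * u)]
    rw [Real.norm_of_nonneg (Real.log_nonneg hone),
      Real.norm_of_nonneg (Real.log_nonneg (by linarith))]
    exact (Real.log_le_log (by linarith) hle).trans_eq (by rw [Real.log_pow, Nat.cast_ofNat])
  have hlittle : (fun u : ℝ => A + B * Real.log ⌈4 * u⌉₊) =o[atTop] fun u : ℝ => u ^ (δ / 2) :=
    (Asymptotics.isLittleO_const_left.mpr <| Or.inr <|
      tendsto_norm_atTop_atTop.comp (tendsto_rpow_atTop (half_pos hδ))).add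
      ((hceil.trans_isLittleO (isLittleO_log_rpow_atTop (half_pos hδ))).const_mul_left B)
  filter_upwards [hlittle.bound one_pos, eventually_ge_atTop 0] with u hu hu0
  rw [one_mul, Real.norm_of_nonneg (Real.rpow_nonneg hu0 _)] at hu
  calc (A + B * Real.log ⌈4 * u⌉₊) ^ 2
      ≤ (u ^ (δ / 2)) ^ 2 := sq_le_sq' (neg_le_of_abs_le hu) (le_of_abs_le hu)
    _ = u ^ δ := by rw [← Real.rpow_mul_natCast hu0, Nat.cast_ofNat, div_mul_cancel₀ _ two_ne_zero]

lemma natLog_two_mul_lt_two_pow_ceil_log_log {n : ℕ} (hn : 100 ≤ n) :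
    Nat.log 2 (8 * n) < 2 ^ ⌈4 * Real.log (Real.log n)⌉₊ := by
  have hn' : (100 : ℝ) ≤ n := by exact_mod_cast hn
  set x := Real.log n with hx
  have hx4 : 4 < x := by
    rw [hx, Real.lt_log_iff_exp_lt (by linarith)]
    calc Real.exp 4 = Real.exp 1 ^ 4 := by rw [← Real.exp_nat_mul]; norm_num
      _ < 2.7182818286 ^ 4 := by gcongr; exact Real.exp_one_lt_d9
      _ < n := by linarith
  have hlog : (Nat.log 2 (8 * n) : ℝ) ≤ 4 * x :=
    calc (Nat.log 2 (8 * n) : ℝ) ≤ Real.logb 2 ↑(8 * n) := Real.natLog_le_logb _ _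
      _ ≤ Real.logb 2 (n ^ 2) := by
        refine Real.logb_le_logb_of_le one_lt_two (by positivity) ?_
        push_cast
        nlinarith
      _ ≤ 4 * x := by
        rw [← Real.log_div_log, Real.log_pow, div_le_iff₀ (Real.log_pos one_lt_two), ← hx]
        push_cast
        nlinarith [Real.log_two_gt_d9]
  have hpow : x ^ 2 ≤ 2 ^ ⌈4 * Real.log x⌉₊ :=
    calc x ^ 2 = Real.exp (2 * Real.log x) := by
          rw [two_mul, Real.exp_add, Real.exp_log (by linarith), sq]
      _ ≤ Real.exp (Real.log 2 * ⌈4 * Real.log x⌉₊) := by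
          refine Real.exp_le_exp.mpr ?_
          nlinarith [Real.log_two_gt_d9, Nat.le_ceil (4 * Real.log x),
            Real.log_pos (show 1 < x by linarith)]
      _ = 2 ^ ⌈4 * Real.log x⌉₊ := by rw [Real.exp_mul, Real.exp_log two_pos, Real.rpow_natCast]
  exact_mod_cast hlog.trans_lt ((show 4 * x < x ^ 2 by nlinarith).trans_le hpow)

theorem statement_15_general {δ : ℝ} (hδ : 0 < δ) :
    FdDensityOne fun D => ∀ [NeZero D.natAbs] (χ : DirichletCharacter ℂ D.natAbs),
      χ ^ 2 = 1 → χ ≠ 1 →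
        Real.log (χ.LFunction 1).re ^ 2 ≤ Real.log (Real.log |(D : ℝ)|) ^ δ := by
  refine fdDensityOne_of_summable_inv summable_inv_exceptional ?_
  filter_upwards [eventually_exists_abs_log_norm_LFunction_one_le] with E ⟨G, hG⟩
  have hloglog : Tendsto (fun D : ℤ => Real.log (Real.log |(D : ℝ)|)) cofinite atTop :=
    Real.tendsto_log_atTop.comp (Real.tendsto_log_atTop.comp tendsto_abs_intCast_cofinite_atTop)
  filter_upwards [hloglog.eventually (eventually_sq_add_mul_log_ceil_le G 48 hδ),
    tendsto_abs_intCast_cofinite_atTop.eventually_ge_atTop 100] with D hD hD100 hfd hexc _ χ hsq hχ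
  obtain ⟨a, d, had, ha, hd, hodd⟩ := hfd.exists_natAbs_eq
  have hquad := MulChar.isQuadratic_iff_sq_eq_one.mpr hsq
  rw [← Int.cast_abs, ← Nat.cast_natAbs] at hD hD100 ⊢
  have hm := natLog_two_mul_lt_two_pow_ceil_log_log (n := D.natAbs) (by exact_mod_cast hD100)
  rw [log_re_LFunction_one hquad hχ]
  exact (sq_le_sq.mpr ((hG _ a d had ha hd hodd hexc _ hm χ hquad hχ).trans (le_abs_self _))).trans
    hD

end MainTheorem

/-- There is an (admissible exceptional-zero) constant `c > 0` such that for every `ε > 0` and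
100% of fundamental discriminants `D`: with `V` the set of quadratic Dirichlet characters mod
`|D|` whose `L`-function has no real zero `β > 1 - c/log |D|`,
`∑_{χ ∈ V} (log L(1,χ))² ≤ #V (log log |D|)^{2 - log 2 + ε}`. -/
theorem statement_15 :
    ∃ c : ℝ, 0 < c ∧
      ∀ ε : ℝ, 0 < ε →
        FdDensityOne (fun D =>
          ∀ [NeZero D.natAbs],
            ∀ V : Finset (DirichletCharacter ℂ D.natAbs),
              (∀ χ, χ ∈ V ↔ χ ^ 2 = 1 ∧ χ ≠ 1 ∧
                ¬∃ β : ℝ, χ.LFunction β = 0 ∧ 1 - c / Real.log |(D : ℝ)| < β) →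
              ∑ χ ∈ V, Real.log (χ.LFunction 1).re ^ 2 ≤
                V.card * Real.log (Real.log |(D : ℝ)|) ^ (2 - Real.log 2 + ε)) := by
  refine ⟨1, one_pos, fun ε hε => (statement_15_general (δ := 2 - Real.log 2 + ε)
    (by linarith [Real.log_two_lt_d9])).mono fun D hD _ V hV => ?_⟩
  rw [← nsmul_eq_mul]
  exact Finset.sum_le_card_nsmul _ _ _ fun χ hχ => hD χ ((hV χ).mp hχ).1 ((hV χ).mp hχ).2.1
end
end
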